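/- arXiv:2601.11083 — 2 statements merged into one kernel-verified Lean document; each statement's English description precedes it below -/
import Mathlib

section
/- Let t ≥ 0 be an integer, let a_0,…,a_t ≥ 0 and b_1,…,b_t ≥ 3 be integers, and define the sequence (c_1,…,c_n) = ([2]^{a_0}, b_1, [2]^{a_1}, b_2, …, b_t, [2]^{a_t}), where [x]^a denotes the entry x repeated a times (so n = t + a_0 + ⋯ + a_t), and assume n ≥ 1. Let p > q > 0 be the coprime integers with p/q = [c_1,…,c_n]⁻. Define the sequence (d_1,…,d_{n'}) = (a_0+1, [0]^{b_1−3}, a_1+1, [0]^{b_2−3}, …, [0]^{b_t−3}, a_t+1), so that n' = t + 1 + (b_1−3) + ⋯ + (b_t−3). Then p/(p−q) = [w_1,…,w_{n'}]⁻, where w_j = d_j + 2 if 1 < j < n', w_j = d_j + 1 if n' > 1 and j ∈ {1, n'}, and w_1 = d_1 if n' = 1. -/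
namespace LensPaper

/-- Negative continued fraction `[a₁,…,aₙ]⁻ = a₁ - 1/[a₂,…,aₙ]⁻` (the empty list is sent
to `0`; with the junk value `1/0 = 0` this gives `[aₙ]⁻ = aₙ`). -/
def negCF : List ℤ → ℚ
  | [] => 0
  | a :: l => (a : ℚ) - 1 / negCF l

/-!
Call positive `x`, `y` dual if `1/x + 1/y = 1`. If `(x, y)` is dual, then so is `(2 - 1/x, y + 1)`,
and by symmetry `(x + 1, 2 - 1/y)`. On expansions this says that prepending a `2` on one side
corresponds to increasing the first entry on the other side. Starting from the dual pair `(2, 2)`,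
these moves build up any expansion `c` together with its dual one block `b, 2, …, 2` at a time.

The invariant of this induction is the duality of `2 :: c` with the weight list whose first entry is
one too large. In contrast to `c` and its dual, neither list is degenerate when `c` is empty, and
the correction at the left end has to be made only once, after the induction.
-/

/-- Riemenschneider duality on the level of values: the dual of `x = p/q` is `y = p/(p - q)`. -/
structure IsDualPair {K : Type*} [Field K] [LinearOrder K] (x y : K) : Prop where
  left_pos : 0 < x
  right_pos : 0 < y
  one_div_add_one_div : 1 / x + 1 / y = 1

namespace IsDualPair

variable {K : Type*} [Field K] [LinearOrder K] {x y : K}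

lemma symm (h : IsDualPair x y) : IsDualPair y x :=
  ⟨h.right_pos, h.left_pos, (add_comm _ _).trans h.one_div_add_one_div⟩

lemma eq_div_sub {p q : K} (hp : p ≠ 0) (h : IsDualPair (2 - 1 / (p / q)) (y + 1)) :
    y = p / (p - q) := by
  have two_sub_eq : 2 - 1 / (p / q) = (2 * p - q) / p := by
    rw [one_div_div]
    field_simp
  rw [two_sub_eq] at h
  have hnum : 2 * p - q ≠ 0 := (div_ne_zero_iff.mp h.left_pos.ne').1
  have hy := h.right_pos.ne'
  have sum_eq := h.one_div_add_one_div
  field_simp at sum_eq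
  have mul_eq : y * (p - q) = p := by linear_combination -sum_eq
  exact eq_div_of_mul_eq (right_ne_zero_of_mul (mul_eq.trans_ne hp)) mul_eq

variable [IsStrictOrderedRing K]

lemma two_two : IsDualPair (2 : K) 2 :=
  ⟨two_pos, two_pos, add_halves 1⟩

lemma two_sub_one_div (h : IsDualPair x y) : IsDualPair (2 - 1 / x) (y + 1) := by
  have hy := h.right_pos
  have two_sub_eq : 2 - 1 / x = (y + 1) / y := by
    rw [eq_sub_of_add_eq h.one_div_add_one_div]
    field_simp
    ring
  rw [two_sub_eq]
  refine ⟨by positivity, by positivity, ?_⟩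
  field_simp

end IsDualPair

lemma negCF_add_cons (m k : ℤ) (l : List ℤ) : negCF ((m + k) :: l) = negCF (m :: l) + k := by
  simp only [negCF, Int.cast_add]
  ring

lemma negCF_modifyHead_add (k : ℤ) {l : List ℤ} (hl : l ≠ []) :
    negCF (l.modifyHead (· + k)) = negCF l + k := by
  obtain ⟨m, l, rfl⟩ := List.exists_cons_of_ne_nil hl
  exact negCF_add_cons m k l

lemma IsDualPair.replicate_two_append {l : List ℤ} {y : ℚ} (h : IsDualPair (negCF l) y) (k : ℕ) :
    IsDualPair (negCF (List.replicate k 2 ++ l)) (y + k) := by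
  induction k with
  | zero => simpa using h
  | succ k ih => simpa [List.replicate_succ, negCF, add_assoc] using ih.two_sub_one_div

/-- The weights `w` of the adjusted sequence `d`, except that the first one is too large by `1`:
the left end of `d` is treated like an interior entry. -/
def rightEndWeights (d : List ℤ) : List ℤ :=
  d.mapIdx fun j x => x + if j + 1 = d.length then 1 else 2

lemma rightEndWeights_singleton (x : ℤ) : rightEndWeights [x] = [x + 1] := rfl

lemma rightEndWeights_cons (x : ℤ) {l : List ℤ} (hl : l ≠ []) :
    rightEndWeights (x :: l) = (x + 2) :: rightEndWeights l := by
  have hlen : 0 ≠ l.length := (List.length_pos_of_ne_nil hl).ne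
  simp [rightEndWeights, List.mapIdx_cons, hlen]

lemma rightEndWeights_replicate_zero_append (k : ℕ) {l : List ℤ} (hl : l ≠ []) :
    rightEndWeights (List.replicate k 0 ++ l) = List.replicate k 2 ++ rightEndWeights l := by
  induction k with
  | zero => rfl
  | succ k ih => simp [List.replicate_succ, rightEndWeights_cons, hl, ih]

lemma rightEndWeights_eq_modifyHead {d w : List ℤ} (hlen : w.length = d.length)
    (hw : ∀ j : Fin w.length, w.get j = d.get (Fin.cast hlen j) +
      (if d.length = 1 then 0 else if (j : ℕ) = 0 ∨ (j : ℕ) = d.length - 1 then 1 else 2)) :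
    rightEndWeights d = w.modifyHead (· + 1) := by
  refine List.ext_getElem (by simp [rightEndWeights, hlen]) fun j hj hj' => ?_
  have hwj := hw ⟨j, by simpa using hj'⟩
  simp only [List.get_eq_getElem, Fin.val_cast] at hwj
  cases j with
  | zero =>
    simp only [rightEndWeights, List.getElem_mapIdx, List.getElem_modifyHead_zero, hwj]
    grind
  | succ j =>
    simp only [rightEndWeights, List.getElem_mapIdx, List.getElem_modifyHead_succ, hwj]
    grind

section Blocks

variable {t : ℕ} (a : Fin (t + 1) → ℕ) (b : Fin t → ℤ)

/-- The sequence `c = ([2]^{a₀}, b₁, [2]^{a₁}, …, b_t, [2]^{a_t})`; `b i` is the paper's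
`b_{i+1}`. -/
def blockExpansion : List ℤ :=
  List.replicate (a 0) 2 ++
    (List.ofFn fun i : Fin t => b i :: List.replicate (a i.succ) 2).flatten

/-- The sequence `d = (a₀ + 1, [0]^{b₁ - 3}, a₁ + 1, …, [0]^{b_t - 3}, a_t + 1)`; `b i` is the
paper's `b_{i+1}`, assumed to be at least `3`. -/
def adjustedSequence : List ℤ :=
  ((a 0 : ℤ) + 1) ::
    (List.ofFn fun i : Fin t =>
      List.replicate (b i - 3).toNat 0 ++ [(a i.succ : ℤ) + 1]).flatten

lemma adjustedSequence_ne_nil : adjustedSequence a b ≠ [] := List.cons_ne_nil _ _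

end Blocks

lemma blockExpansion_succ {t : ℕ} (a : Fin (t + 2) → ℕ) (b : Fin (t + 1) → ℤ) :
    blockExpansion a b =
      List.replicate (a 0) 2 ++ b 0 :: blockExpansion (Fin.tail a) (Fin.tail b) := by
  simp [blockExpansion, List.ofFn_succ, Fin.tail]

lemma adjustedSequence_succ {t : ℕ} (a : Fin (t + 2) → ℕ) (b : Fin (t + 1) → ℤ) :
    adjustedSequence a b = ((a 0 : ℤ) + 1) ::
      (List.replicate (b 0 - 3).toNat 0 ++ adjustedSequence (Fin.tail a) (Fin.tail b)) := by
  simp [adjustedSequence, List.ofFn_succ, Fin.tail]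

lemma IsDualPair.prepend_block {c w : List ℤ} (h : IsDualPair (negCF (2 :: c)) (negCF w))
    (a k : ℕ) :
    IsDualPair (negCF (2 :: (List.replicate a 2 ++ ((k : ℤ) + 3) :: c)))
      (negCF (((a : ℤ) + 3) :: (List.replicate k 2 ++ w))) := by
  have entry_added : IsDualPair (negCF (((k : ℤ) + 3) :: c))
      (negCF (2 :: (List.replicate k 2 ++ w))) := by
    have raised := (h.symm.replicate_two_append (k + 1)).symm
    rw [show (k : ℤ) + 3 = 2 + (k + 1 : ℕ) by push_cast; ring, negCF_add_cons]
    exact raised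
  have twos_added := entry_added.replicate_two_append (a + 1)
  rw [show (a : ℤ) + 3 = 2 + (a + 1 : ℕ) by push_cast; ring, negCF_add_cons]
  exact twos_added

theorem isDualPair_blockExpansion {t : ℕ} (a : Fin (t + 1) → ℕ) (b : Fin t → ℤ)
    (hb : ∀ i, 3 ≤ b i) :
    IsDualPair (negCF (2 :: blockExpansion a b))
      (negCF (rightEndWeights (adjustedSequence a b))) := by
  induction t with
  | zero =>
    have singleton_dual : IsDualPair (negCF [2]) 2 := by
      simpa [negCF] using IsDualPair.two_two (K := ℚ)
    have expansion_eq : 2 :: blockExpansion a b = List.replicate (a 0) 2 ++ [2] := by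
      simp [blockExpansion, ← List.replicate_succ, ← List.replicate_succ']
    have weights_eq : rightEndWeights (adjustedSequence a b) = [2 + (a 0 : ℤ)] := by
      simp only [adjustedSequence, List.ofFn_zero, List.flatten_nil, rightEndWeights_singleton]
      congr 1
      ring
    rw [expansion_eq, weights_eq]
    simpa [negCF] using singleton_dual.replicate_two_append (a 0)
  | succ t ih =>
    have tail_dual := ih (Fin.tail a) (Fin.tail b) fun i => hb i.succ
    have tail_ne_nil := adjustedSequence_ne_nil (Fin.tail a) (Fin.tail b)
    have hb0 : ((b 0 - 3).toNat : ℤ) + 3 = b 0 := by have := hb 0; omega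
    have block_added := tail_dual.prepend_block (a 0) (b 0 - 3).toNat
    rwa [hb0, ← blockExpansion_succ, ← rightEndWeights_replicate_zero_append _ tail_ne_nil,
      show (a 0 : ℤ) + 3 = (a 0 + 1) + 2 by ring,
      ← rightEndWeights_cons _ (List.append_ne_nil_of_right_ne_nil _ tail_ne_nil),
      ← adjustedSequence_succ] at block_added

/-- Lemma 3.5 (Riemenschneider duality), with the dual weights read off from the
adjusted-weight sequence `d`. -/
theorem statement0 (t : ℕ) (a : Fin (t + 1) → ℕ) (b : Fin t → ℤ)
    (hb : ∀ i, 3 ≤ b i)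
    (c : List ℤ)
    (hc : c = List.replicate (a 0) (2 : ℤ) ++
      (List.ofFn fun i : Fin t => b i :: List.replicate (a i.succ) (2 : ℤ)).flatten)
    (hn : c ≠ [])
    (p q : ℤ) (hq : 0 < q) (hqp : q < p) (hcop : Int.gcd p q = 1)
    (hcf : negCF c = (p : ℚ) / (q : ℚ))
    (d : List ℤ)
    (hd : d = ((a 0 : ℤ) + 1) :: (List.ofFn fun i : Fin t =>
      List.replicate (b i - 3).toNat (0 : ℤ) ++ [(a i.succ : ℤ) + 1]).flatten)
    (wseq : List ℤ) (hlen : wseq.length = d.length)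
    (hw : ∀ j : Fin wseq.length, wseq.get j =
      d.get (Fin.cast hlen j) +
        (if d.length = 1 then 0
         else if (j : ℕ) = 0 ∨ (j : ℕ) = d.length - 1 then 1 else 2)) :
    negCF wseq = (p : ℚ) / ((p : ℚ) - (q : ℚ)) := by
  subst hc hd
  have hp : (p : ℚ) ≠ 0 := by exact_mod_cast (hq.trans hqp).ne'
  have hwseq : wseq ≠ [] := by
    rw [← List.length_pos_iff, hlen]
    exact Nat.succ_pos _
  have dual := isDualPair_blockExpansion a b hb
  have weights_eq : rightEndWeights (adjustedSequence a b) = wseq.modifyHead (· + 1) :=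
    rightEndWeights_eq_modifyHead hlen hw
  have value_eq : negCF (2 :: blockExpansion a b) = 2 - 1 / ((p : ℚ) / q) := by
    rw [← hcf]; rfl
  rw [weights_eq, negCF_modifyHead_add 1 hwseq, value_eq, Int.cast_one] at dual
  exact dual.eq_div_sub hp

end LensPaper
end

section
/- Suppose Γ is a configuration satisfying the Working Conditions with at least one bad vertex, and let φ be an embedding of Γ into ℤ^N. If every screw of Γ (with respect to φ) is clean, then the restriction of φ to the vertices of the outside part of Γ is standard. -/
namespace LensPaper

/-- A finite weighted simple graph: the combinatorial data underlying a configuration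
(a disjoint union of weighted linear graphs).  The fact that every connected component
is a path is recorded separately by `Config.IsLinear`. -/
structure Config where
  V : Type
  fin : Fintype V
  deq : DecidableEq V
  graph : SimpleGraph V
  adjDec : DecidableRel graph.Adj
  w : V → ℤ

attribute [instance] Config.fin Config.deq Config.adjDec

namespace Config

/-- The degree of a vertex. -/
noncomputable def deg (C : Config) (v : C.V) : ℕ := (C.graph.neighborSet v).ncard

/-- A configuration: every component is a path, i.e. all degrees are at most `2` and the
graph is acyclic. -/
def IsLinear (C : Config) : Prop :=
  (∀ v : C.V, C.deg v ≤ 2) ∧ C.graph.IsAcyclic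

/-- The adjusted weight `w'(v) = w(v) - deg(v)`. -/
noncomputable def adjw (C : Config) (v : C.V) : ℤ := C.w v - C.deg v

/-- A vertex is bad if it is adjacent to two distinct vertices of positive adjusted
weight. -/
def IsBad (C : Config) (x : C.V) : Prop :=
  ∃ u v : C.V, u ≠ v ∧ C.graph.Adj x u ∧ C.graph.Adj x v ∧ 0 < C.adjw u ∧ 0 < C.adjw v

/-- A leaf: a vertex of degree at most one. -/
def IsLeaf (C : Config) (v : C.V) : Prop := C.deg v ≤ 1

/-- `v 0, v 1, …, v m` is a chain of consecutive (distinct) vertices. -/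
def IsChain (C : Config) (m : ℕ) (v : ℕ → C.V) : Prop :=
  (∀ i ≤ m, ∀ j ≤ m, v i = v j → i = j) ∧ ∀ i < m, C.graph.Adj (v i) (v (i + 1))

/-- The chain `v 0, …, v m` has the list `p` as its sequence of adjusted weights. -/
def ChainPattern (C : Config) (m : ℕ) (v : ℕ → C.V) (p : List ℤ) : Prop :=
  C.IsChain m v ∧ m + 1 = p.length ∧ ∀ i : Fin p.length, C.adjw (v i) = p.get i

/-- `Γ` contains a chain of consecutive vertices whose adjusted weights, read in order,
form the list `p`. -/
def HasPattern (C : Config) (p : List ℤ) : Prop := ∃ m v, C.ChainPattern m v p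

/-- A chain realizing a bad-part pattern `p` (each entry of `p` is an adjusted weight
together with a flag marking the bad positions): the chain has the prescribed adjusted
weights, and the bad vertices of the configuration are exactly the vertices of the chain
in the flagged positions. -/
def IsBadPartChain (C : Config) (p : List (ℤ × Bool)) (m : ℕ) (v : ℕ → C.V) : Prop :=
  C.IsChain m v ∧ m + 1 = p.length ∧
  (∀ i : Fin p.length, C.adjw (v i) = (p.get i).1) ∧
  (∀ x : C.V, C.IsBad x ↔ ∃ i : Fin p.length, (p.get i).2 = true ∧ v i = x)

end Config

/-- The chains of adjusted weights forbidden by Working Condition VI. -/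
def forbiddenPatterns : List (List ℤ) :=
  [[1, 0, 0, 2], [1, 0, 0, 3], [1, 0, 0, 0, 3], [1, 1, 0, 0, 1, 2], [3, 1, 0, 0, 1],
   [1, 0, 1, 2], [1, 0, 1, 3], [1, 1, 0, 2], [1, 1, 0, 1, 1, 2]]

/-- The bad-part patterns of Working Condition VII; `true` marks the bad positions. -/
def badPatterns : List (List (ℤ × Bool)) :=
  [[(1, false), (0, true), (1, false)],
   [(1, false), (0, true), (2, false)],
   [(1, false), (0, true), (3, false)],
   [(1, false), (1, true), (1, false)],
   [(1, false), (1, true), (2, false)],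
   [(1, false), (2, true), (1, false)],
   [(1, false), (0, true), (1, false), (0, true), (1, false)],
   [(1, false), (0, true), (1, false), (0, true), (2, false)],
   [(1, false), (0, true), (1, false), (1, true), (1, false)],
   [(1, false), (0, true), (1, false), (1, true), (2, false)],
   [(1, false), (1, true), (1, true), (1, false)],
   [(1, false), (1, true), (1, true), (1, true), (1, false)],
   [(1, false), (1, true), (2, true), (1, false)]]

namespace Config

/-- The Working Conditions (I)–(VII). -/
def WorkingConditions (C : Config) : Prop :=
  (∀ v : C.V, 2 ≤ C.w v) ∧
  (∀ v : C.V, C.adjw v ≤ 3) ∧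
  (∀ u v : C.V, 1 < C.adjw u → 1 < C.adjw v → u = v) ∧
  (∀ v x : C.V, 1 < C.adjw v → C.IsBad x → C.adjw x = 1 → C.graph.Adj x v) ∧
  ((∃ v : C.V, C.adjw v = 3) →
     ∀ u u' : C.V, C.graph.Adj u u' → C.adjw u = 1 → C.adjw u' = 1 → False) ∧
  (∀ u v x : C.V, C.graph.Adj u v → C.adjw u = 1 → C.adjw v = 1 →
     C.IsBad x → C.adjw x = 2 → C.graph.Adj x u ∨ C.graph.Adj x v) ∧
  (∀ p ∈ forbiddenPatterns, ¬ C.HasPattern p) ∧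
  ((∃ x : C.V, C.IsBad x) → ∃ p ∈ badPatterns, ∃ m v, C.IsBadPartChain p m v)

end Config

/-- The standard inner product on `ℤ^N`. -/
def dot {N : ℕ} (x y : Fin N → ℤ) : ℤ := ∑ i, x i * y i

/-- The support of a vector of `ℤ^N` with respect to the standard orthonormal basis. -/
def supp {N : ℕ} (x : Fin N → ℤ) : Finset (Fin N) :=
  Finset.univ.filter fun i => x i ≠ 0

namespace Config

/-- An embedding of a configuration into `ℤ^N`. -/
def IsEmbedding (C : Config) (N : ℕ) (φ : C.V → Fin N → ℤ) : Prop :=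
  ∀ u v : C.V, dot (φ u) (φ v) =
    if u = v then C.w u else if C.graph.Adj u v then -1 else 0

/-- The restriction of `φ` to `S` is standard. -/
def IsStandardOn (C : Config) (N : ℕ) (φ : C.V → Fin N → ℤ) (S : Set C.V) : Prop :=
  ∀ u ∈ S, ∀ v ∈ S,
    ((supp (φ u) ∩ supp (φ v)).card : ℤ) =
      if u = v then C.w v else if C.graph.Adj u v then 1 else 0

/-- A standard embedding. -/
def IsStandard (C : Config) (N : ℕ) (φ : C.V → Fin N → ℤ) : Prop :=
  C.IsStandardOn N φ Set.univ

/-- The restriction of `φ` to `S` is semi-standard at `x`. -/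
def IsSemiStandardAtOn (C : Config) (N : ℕ) (φ : C.V → Fin N → ℤ) (x : C.V)
    (S : Set C.V) : Prop :=
  (∀ u ∈ S, ∀ v ∈ S,
    ((supp (φ u) ∩ supp (φ v)).card : ℤ) =
      if u = v then C.w v
      else if C.graph.Adj u v then 1
      else if C.graph.Adj x u ∧ C.graph.Adj x v then 2
      else 0) ∧
  (∀ u ∈ S, ∀ v ∈ S, u ≠ v → C.graph.Adj x u → C.graph.Adj x v →
    (supp (φ u) ∩ supp (φ x) ∩ supp (φ v)).card = 1)

/-- A semi-standard embedding: semi-standard at some bad vertex. -/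
def IsSemiStandard (C : Config) (N : ℕ) (φ : C.V → Fin N → ℤ) : Prop :=
  ∃ x : C.V, C.IsBad x ∧ C.IsSemiStandardAtOn N φ x Set.univ

/-- A candidate for the extended bad part: a chain containing the bad part whose two
ends are either leaves or preceded by two consecutive vertices of vanishing adjusted
weight. -/
def IsEBPCand (C : Config) (m : ℕ) (v : ℕ → C.V) : Prop :=
  C.IsChain m v ∧
  (∀ p ∈ badPatterns, ∀ mb vb, C.IsBadPartChain p mb vb →
     ∀ i ≤ mb, ∃ j ≤ m, v j = vb i) ∧
  (C.IsLeaf (v 0) ∨ (2 ≤ m ∧ C.adjw (v 1) = 0 ∧ C.adjw (v 2) = 0)) ∧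
  (C.IsLeaf (v m) ∨ (2 ≤ m ∧ C.adjw (v (m - 1)) = 0 ∧ C.adjw (v (m - 2)) = 0))

/-- The extended bad part: a candidate with the fewest vertices. -/
def IsExtBadPart (C : Config) (m : ℕ) (v : ℕ → C.V) : Prop :=
  C.IsEBPCand m v ∧ ∀ m' v', C.IsEBPCand m' v' → m ≤ m'

/-- The set of vertices of the chain `v 0, …, v m`. -/
def ebpSet (C : Config) (m : ℕ) (v : ℕ → C.V) : Set C.V := {y | ∃ i ≤ m, v i = y}

/-- The outside part of `Γ` relative to the extended bad part `v 0, …, v m`. -/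
def OutsidePart (C : Config) (m : ℕ) (v : ℕ → C.V) : Set C.V :=
  {x | ∀ i ≤ m, v i ≠ x}
  ∪ {x | ¬ C.IsLeaf (v 0) ∧ (x = v 0 ∨ x = v 1 ∨ x = v 2)}
  ∪ {x | ¬ C.IsLeaf (v m) ∧ (x = v m ∨ x = v (m - 1) ∨ x = v (m - 2))}

/-- A screw at the front end of the extended bad part. -/
def IsFrontScrew (C : Config) (N : ℕ) (φ : C.V → Fin N → ℤ) (m : ℕ) (v : ℕ → C.V)
    (e : Fin N) : Prop :=
  ¬ C.IsLeaf (v 0) ∧ 3 ≤ m ∧ φ (v 2) e ≠ 0 ∧ φ (v 3) e ≠ 0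

/-- A screw at the back end of the extended bad part. -/
def IsBackScrew (C : Config) (N : ℕ) (φ : C.V → Fin N → ℤ) (m : ℕ) (v : ℕ → C.V)
    (e : Fin N) : Prop :=
  ¬ C.IsLeaf (v m) ∧ 3 ≤ m ∧ φ (v (m - 2)) e ≠ 0 ∧ φ (v (m - 3)) e ≠ 0

/-- All screws of `Γ` (with respect to `φ`) are clean. -/
def AllScrewsClean (C : Config) (N : ℕ) (φ : C.V → Fin N → ℤ) (m : ℕ)
    (v : ℕ → C.V) : Prop :=
  (∀ e : Fin N, C.IsFrontScrew N φ m v e →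
    ∀ u : C.V, u ≠ v 2 → u ≠ v 3 → φ u e = 0) ∧
  (∀ e : Fin N, C.IsBackScrew N φ m v e →
    ∀ u : C.V, u ≠ v (m - 2) → u ≠ v (m - 3) → φ u e = 0)

end Config

/-!
A clean screw is a coordinate seen by a single vertex of the outside part. Each edge leaving the
outside part can therefore be ended by a cap, a new leaf carrying the unit vector of that
coordinate, and the outside part becomes a system of vectors along paths without bad vertices.

In such a system a maximal run of vertices of adjusted weight zero spans a root lattice `A_k`, so
its vectors are `e 0 - e 1, …, e (k - 1) - e k` for orthonormal `e 0, …, e k`. Norm estimates and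
the forbidden patterns show that no vertex off the run meets this frame, and that the two ends of
the run meet it only in `e 0` and `e k` respectively. Hence every edge on a run is a link: a
coordinate shared, with opposite signs, by exactly its two ends. Deleting the links leaves of each
vertex a residual whose squared norm exceeds the adjusted weight by at most one, and vectors this
short can only meet with entries `±1` of opposite signs. Then `φ u · φ v` counts, up to sign, the
common support of `u` and `v`, which is standardness.
-/

/-! ### Small integer vectors -/

section Lattice

variable {ι : Type*} [Fintype ι] {x y z : ι → ℤ}

theorem dotProduct_self_nonneg_int (x : ι → ℤ) : 0 ≤ x ⬝ᵥ x :=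
  Finset.sum_nonneg fun i _ => mul_self_nonneg (x i)

theorem combination₃_nonneg (a b c : ℤ) (x y z : ι → ℤ) :
    0 ≤ a ^ 2 * (x ⬝ᵥ x) + b ^ 2 * (y ⬝ᵥ y) + c ^ 2 * (z ⬝ᵥ z)
      + 2 * (a * b * (x ⬝ᵥ y) + a * c * (x ⬝ᵥ z) + b * c * (y ⬝ᵥ z)) := by
  have h := dotProduct_self_nonneg_int (a • x + b • y + c • z)
  simp only [add_dotProduct, dotProduct_add, smul_dotProduct, dotProduct_smul, smul_eq_mul,
    dotProduct_comm y x, dotProduct_comm z x, dotProduct_comm z y] at h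
  linarith

theorem combination₄_nonneg (a b c d : ℤ) (x y z t : ι → ℤ) :
    0 ≤ a ^ 2 * (x ⬝ᵥ x) + b ^ 2 * (y ⬝ᵥ y) + c ^ 2 * (z ⬝ᵥ z) + d ^ 2 * (t ⬝ᵥ t)
      + 2 * (a * b * (x ⬝ᵥ y) + a * c * (x ⬝ᵥ z) + a * d * (x ⬝ᵥ t)
        + b * c * (y ⬝ᵥ z) + b * d * (y ⬝ᵥ t) + c * d * (z ⬝ᵥ t)) := by
  have h := combination₃_nonneg 1 c d (a • x + b • y) z t
  simp only [add_dotProduct, dotProduct_add, smul_dotProduct, dotProduct_smul, smul_eq_mul,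
    dotProduct_comm y x] at h
  linarith

theorem dotProduct_combination₅_eq_zero (a b c d f : ℤ) (x y z t w : ι → ℤ)
    (h : a ^ 2 * (x ⬝ᵥ x) + b ^ 2 * (y ⬝ᵥ y) + c ^ 2 * (z ⬝ᵥ z) + d ^ 2 * (t ⬝ᵥ t)
      + f ^ 2 * (w ⬝ᵥ w)
      + 2 * (a * b * (x ⬝ᵥ y) + a * c * (x ⬝ᵥ z) + a * d * (x ⬝ᵥ t) + a * f * (x ⬝ᵥ w)
        + b * c * (y ⬝ᵥ z) + b * d * (y ⬝ᵥ t) + b * f * (y ⬝ᵥ w)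
        + c * d * (z ⬝ᵥ t) + c * f * (z ⬝ᵥ w) + d * f * (t ⬝ᵥ w)) ≤ 0) (v : ι → ℤ) :
    a * (v ⬝ᵥ x) + b * (v ⬝ᵥ y) + c * (v ⬝ᵥ z) + d * (v ⬝ᵥ t) + f * (v ⬝ᵥ w) = 0 := by
  have hnorm : (a • x + b • y + c • z + d • t + f • w) ⬝ᵥ
      (a • x + b • y + c • z + d • t + f • w) = 0 := by
    refine le_antisymm ?_ (dotProduct_self_nonneg_int _)
    simp only [add_dotProduct, dotProduct_add, smul_dotProduct, dotProduct_smul, smul_eq_mul,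
      dotProduct_comm y x, dotProduct_comm z x, dotProduct_comm z y, dotProduct_comm t x,
      dotProduct_comm t y, dotProduct_comm t z, dotProduct_comm w x, dotProduct_comm w y,
      dotProduct_comm w z, dotProduct_comm w t]
    linarith
  have hv := congrArg (v ⬝ᵥ ·) (dotProduct_self_eq_zero.1 hnorm)
  simpa only [dotProduct_add, dotProduct_smul, smul_eq_mul, dotProduct_zero] using hv

theorem dotProduct_combination₄_eq_zero (a b c d : ℤ) (x y z t : ι → ℤ)
    (h : a ^ 2 * (x ⬝ᵥ x) + b ^ 2 * (y ⬝ᵥ y) + c ^ 2 * (z ⬝ᵥ z) + d ^ 2 * (t ⬝ᵥ t)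
      + 2 * (a * b * (x ⬝ᵥ y) + a * c * (x ⬝ᵥ z) + a * d * (x ⬝ᵥ t)
        + b * c * (y ⬝ᵥ z) + b * d * (y ⬝ᵥ t) + c * d * (z ⬝ᵥ t)) ≤ 0) (v : ι → ℤ) :
    a * (v ⬝ᵥ x) + b * (v ⬝ᵥ y) + c * (v ⬝ᵥ z) + d * (v ⬝ᵥ t) = 0 := by
  have := dotProduct_combination₅_eq_zero a b c d 0 x y z t 0 (by linarith) v
  linarith

theorem dotProduct_combination₃_eq_zero (a b c : ℤ) (x y z : ι → ℤ)
    (h : a ^ 2 * (x ⬝ᵥ x) + b ^ 2 * (y ⬝ᵥ y) + c ^ 2 * (z ⬝ᵥ z)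
      + 2 * (a * b * (x ⬝ᵥ y) + a * c * (x ⬝ᵥ z) + b * c * (y ⬝ᵥ z)) ≤ 0) (v : ι → ℤ) :
    a * (v ⬝ᵥ x) + b * (v ⬝ᵥ y) + c * (v ⬝ᵥ z) = 0 := by
  have := dotProduct_combination₄_eq_zero a b c 0 x y z 0 (by linarith) v
  linarith

theorem sq_dotProduct_add_sq_dotProduct_le (hy : y ⬝ᵥ y = 1) (hz : z ⬝ᵥ z = 1) (hyz : y ⬝ᵥ z = 0)
    (x : ι → ℤ) : (x ⬝ᵥ y) ^ 2 + (x ⬝ᵥ z) ^ 2 ≤ x ⬝ᵥ x := by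
  have h := combination₃_nonneg 1 (-(x ⬝ᵥ y)) (-(x ⬝ᵥ z)) x y z
  rw [hy, hz, hyz] at h
  linarith

theorem sq_dotProduct_le (hy : y ⬝ᵥ y = 1) (x : ι → ℤ) : (x ⬝ᵥ y) ^ 2 ≤ x ⬝ᵥ x := by
  have h := combination₃_nonneg 1 (-(x ⬝ᵥ y)) 0 x y 0
  rw [hy] at h
  linarith

theorem sq_apply_le_dotProduct_self (x : ι → ℤ) (i : ι) : x i ^ 2 ≤ x ⬝ᵥ x := by
  classical
  simpa using sq_dotProduct_le (y := Pi.single i 1) (by simp) x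

theorem eq_zero_or_one_or_neg_one_of_sq_lt_four {a : ℤ} (h : a ^ 2 < 4) :
    a = 0 ∨ a = 1 ∨ a = -1 := by
  have : |a| < 2 := abs_lt_of_sq_lt_sq (by linarith) zero_le_two
  rw [abs_lt] at this
  omega

theorem exists_eq_add_of_apply_ne_zero (h : x ⬝ᵥ x = 2) {i : ι} (hi : x i ≠ 0) :
    ∃ f g : ι → ℤ, f ⬝ᵥ f = 1 ∧ g ⬝ᵥ g = 1 ∧ f ⬝ᵥ g = 0 ∧ x = f + g ∧ f i = x i := by
  classical
  have hsq : x i * x i = 1 := by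
    rcases eq_zero_or_one_or_neg_one_of_sq_lt_four (a := x i)
      (by linarith [sq_apply_le_dotProduct_self x i]) with h0 | h1 | h1
    · exact absurd h0 hi
    · simp [h1]
    · simp [h1]
  refine ⟨Pi.single i (x i), x - Pi.single i (x i), by simpa using hsq, ?_, by simp, by simp,
    by simp⟩
  simp only [sub_dotProduct, dotProduct_sub, dotProduct_single, single_dotProduct, h,
    hsq]
  norm_num

theorem exists_eq_add_of_dotProduct_self_eq_two (h : x ⬝ᵥ x = 2) :
    ∃ f g : ι → ℤ, f ⬝ᵥ f = 1 ∧ g ⬝ᵥ g = 1 ∧ f ⬝ᵥ g = 0 ∧ x = f + g := by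
  obtain ⟨i, hi⟩ : ∃ i, x i ≠ 0 := by
    by_contra! hx
    rw [funext hx, show (fun _ => 0 : ι → ℤ) = 0 from rfl, dotProduct_zero] at h
    omega
  obtain ⟨f, g, hf, hg, hfg, hx, -⟩ := exists_eq_add_of_apply_ne_zero h hi
  exact ⟨f, g, hf, hg, hfg, hx⟩

theorem eq_single_of_dotProduct_self_eq_one [DecidableEq ι] (hx : x ⬝ᵥ x = 1) {i : ι}
    (hi : x i ≠ 0) : x = Pi.single i (x i) := by
  have hsq : x i * x i = 1 := by
    have : 0 < x i ^ 2 := by positivity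
    have := sq_apply_le_dotProduct_self x i
    nlinarith
  refine sub_eq_zero.1 (dotProduct_self_eq_zero.1 ?_)
  simp only [sub_dotProduct, dotProduct_sub, dotProduct_single, single_dotProduct, hx,
    hsq]
  norm_num

theorem dotProduct_eq_mul_apply (hy : y ⬝ᵥ y = 1) {i : ι} (hi : y i ≠ 0) (x : ι → ℤ) :
    x ⬝ᵥ y = x i * y i := by
  classical
  conv_lhs => rw [eq_single_of_dotProduct_self_eq_one hy hi]
  simp

end Lattice

/-! ### Root chains -/

section RootChain

variable {ι : Type*} [Fintype ι]

/-- Vectors `x 0, …, x (k - 1)` of `ℤ^ι` with the Gram matrix of the root lattice `A_k`. -/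
structure IsRootChain (k : ℕ) (x : ℕ → ι → ℤ) : Prop where
  dotProduct_self : ∀ i < k, x i ⬝ᵥ x i = 2
  dotProduct_succ : ∀ i, i + 1 < k → x i ⬝ᵥ x (i + 1) = -1
  dotProduct_far : ∀ i j, i + 1 < j → j < k → x i ⬝ᵥ x j = 0

/-- Orthonormal vectors `e 0, …, e k` presenting the root chain `x` as `x i = e i - e (i + 1)`. -/
structure IsRootFrame (k : ℕ) (x e : ℕ → ι → ℤ) : Prop where
  dotProduct_self : ∀ i ≤ k, e i ⬝ᵥ e i = 1
  dotProduct_of_lt : ∀ i j, i < j → j ≤ k → e i ⬝ᵥ e j = 0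
  eq_sub : ∀ i < k, x i = e i - e (i + 1)

variable {k : ℕ} {x : ℕ → ι → ℤ} {p : ι → ℤ}

theorem IsRootChain.dotProduct_eq_zero_of_split (hx : IsRootChain k x)
    (hp₀ : p ⬝ᵥ x 0 = -1) (hp₂ : 2 < k → p ⬝ᵥ x 2 = 0) {f g : ι → ℤ} (hf : f ⬝ᵥ f = 1)
    (hg : g ⬝ᵥ g = 1) (hfg : f ⬝ᵥ g = 0) (hfg_eq : x 0 = f + g) (hf₁ : x 1 ⬝ᵥ f = 0)
    (hg₁ : x 1 ⬝ᵥ g = -1) {j : ℕ} (hj₂ : 2 ≤ j) (hj : j < k) : x j ⬝ᵥ f = 0 := by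
  have hself := hx.dotProduct_self j hj
  have hxj : x j ⬝ᵥ f + x j ⬝ᵥ g = 0 := by
    rw [← dotProduct_add, ← hfg_eq, dotProduct_comm]
    exact hx.dotProduct_far 0 j (by omega) hj
  by_contra hne
  have hsq : (x j ⬝ᵥ f) ^ 2 = 1 := by
    rcases eq_zero_or_one_or_neg_one_of_sq_lt_four (a := x j ⬝ᵥ f)
      (by linarith [sq_dotProduct_le hf (x j)]) with h | h | h
    · exact absurd h hne
    · rw [h]; norm_num
    · rw [h]; norm_num
  have hpair := dotProduct_combination₃_eq_zero 1 (-(x j ⬝ᵥ f)) (x j ⬝ᵥ f) (x j) f g (by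
    rw [hself, hf, hg, hfg, eq_neg_of_add_eq_zero_right hxj]
    linarith)
  have h₁ := hpair (x 1)
  rw [hf₁, hg₁] at h₁
  rcases Nat.eq_or_lt_of_le hj₂ with rfl | hj₃
  · have h₂ := hx.dotProduct_succ 1 hj
    have hp := hpair p
    rw [show x 2 ⬝ᵥ f = -1 by linarith, hp₂ hj] at hp
    rw [hfg_eq, dotProduct_add] at hp₀
    omega
  · exact hne (by linarith [hx.dotProduct_far 1 j hj₃ hj])

theorem IsRootChain.exists_unit_start (hx : IsRootChain k x) (hk : 2 ≤ k)
    (hp₀ : p ⬝ᵥ x 0 = -1) (hp₂ : 2 < k → p ⬝ᵥ x 2 = 0) :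
    ∃ f : ι → ℤ, f ⬝ᵥ f = 1 ∧ f ⬝ᵥ x 0 = 1 ∧ ∀ j, 1 ≤ j → j < k → f ⬝ᵥ x j = 0 := by
  obtain ⟨f, g, hf, hg, hfg, hfg_eq⟩ :=
    exists_eq_add_of_dotProduct_self_eq_two (hx.dotProduct_self 0 (by omega))
  have h₁ : x 1 ⬝ᵥ f + x 1 ⬝ᵥ g = -1 := by
    rw [← dotProduct_add, ← hfg_eq, dotProduct_comm]
    exact hx.dotProduct_succ 0 (by omega)
  wlog hsplit : x 1 ⬝ᵥ f = 0 ∧ x 1 ⬝ᵥ g = -1 generalizing f g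
  · refine this g f hg hf (by rwa [dotProduct_comm]) (by rw [hfg_eq, add_comm]) (by linarith) ?_
    have hb := sq_dotProduct_add_sq_dotProduct_le hf hg hfg (x 1)
    rw [hx.dotProduct_self 1 (by omega)] at hb
    have := eq_zero_or_one_or_neg_one_of_sq_lt_four (a := x 1 ⬝ᵥ f) (by nlinarith)
    have := eq_zero_or_one_or_neg_one_of_sq_lt_four (a := x 1 ⬝ᵥ g) (by nlinarith)
    omega
  refine ⟨f, hf, by rw [hfg_eq, dotProduct_add, hf, hfg, add_zero], fun j hj₁ hj => ?_⟩
  rw [dotProduct_comm]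
  rcases Nat.eq_or_lt_of_le hj₁ with rfl | hj₂
  · exact hsplit.1
  · exact hx.dotProduct_eq_zero_of_split hp₀ hp₂ hf hg hfg hfg_eq hsplit.1 hsplit.2 hj₂ hj

theorem IsRootChain.dotProduct_frame_next (hx : IsRootChain k x) {e : ℕ → ι → ℤ}
    (he_succ : ∀ i, e (i + 1) = e i - x i) (he₀ : e 0 ⬝ᵥ x 0 = 1)
    (he₀_far : ∀ j, 1 ≤ j → j < k → e 0 ⬝ᵥ x j = 0) :
    ∀ i < k, e i ⬝ᵥ x i = 1 ∧ ∀ j, i < j → j < k → e i ⬝ᵥ x j = 0 := by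
  intro i
  induction i with
  | zero => exact fun _ => ⟨he₀, he₀_far⟩
  | succ i ih =>
    intro hi
    obtain ⟨-, hfar⟩ := ih (by omega)
    refine ⟨?_, fun j hj hjk => ?_⟩
    · rw [he_succ, sub_dotProduct, hfar _ (by omega) hi, hx.dotProduct_succ i hi]
      norm_num
    · rw [he_succ, sub_dotProduct, hfar _ (by omega) hjk, hx.dotProduct_far i j hj hjk, sub_zero]

/- The extra vector `p` excludes the second embedding `f 0 + f 1, f 2 - f 1, f 1 - f 0` of
`A_3 = D_3`. -/
theorem IsRootChain.exists_isRootFrame (hx : IsRootChain k x) (hk : 2 ≤ k)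
    (hp₀ : p ⬝ᵥ x 0 = -1) (hp₂ : 2 < k → p ⬝ᵥ x 2 = 0) : ∃ e, IsRootFrame k x e := by
  obtain ⟨f, hf, hf₀, hf_far⟩ := hx.exists_unit_start hk hp₀ hp₂
  obtain ⟨e, rfl, he_succ⟩ : ∃ e : ℕ → ι → ℤ, e 0 = f ∧ ∀ i, e (i + 1) = e i - x i :=
    ⟨fun n => n.rec f fun i y => y - x i, rfl, fun _ => rfl⟩
  have he_next := hx.dotProduct_frame_next he_succ hf₀ hf_far
  have he_self : ∀ i ≤ k, e i ⬝ᵥ e i = 1 := by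
    intro i
    induction i with
    | zero => exact fun _ => hf
    | succ i ih =>
      intro hi
      rw [he_succ, sub_dotProduct, dotProduct_sub, dotProduct_sub, dotProduct_comm (x i) (e i),
        ih (by omega), (he_next i hi).1, hx.dotProduct_self i hi]
      norm_num
  refine ⟨e, he_self, fun i j hij => ?_, fun i _ => by rw [he_succ, sub_sub_cancel]⟩
  induction j, hij using Nat.le_induction with
  | base =>
    intro hi
    rw [he_succ, dotProduct_sub, he_self i (by omega), (he_next i hi).1, sub_self]
  | succ j hij ih =>
    intro hj
    rw [he_succ, dotProduct_sub, ih (by omega), (he_next i (by omega)).2 j hij hj, sub_zero]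

end RootChain

/-! ### Systems of vectors along paths -/

/-- Integer coordinates on a graph whose components are paths: adjacent vertices have consecutive
coordinates, and distinct neighbours of a vertex have distinct coordinates. -/
structure IsPathCoordinate {V : Type*} (G : SimpleGraph V) (pos : V → ℤ) : Prop where
  pos_of_adj : ∀ ⦃u v⦄, G.Adj u v → pos v = pos u + 1 ∨ pos v = pos u - 1
  eq_of_pos_eq : ∀ ⦃u v w⦄, G.Adj u v → G.Adj u w → pos v = pos w → v = w

/-- A family of vectors of `ℤ^ι` indexed by the vertices of a disjoint union of paths, realising
that graph in the sense of an embedding of a configuration; the weights are the squared norms. -/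
structure LinearSystem (V ι : Type*) [Fintype ι] where
  graph : SimpleGraph V
  pos : V → ℤ
  vec : V → ι → ℤ
  isPathCoordinate : IsPathCoordinate graph pos
  dotProduct_of_adj : ∀ ⦃u v⦄, graph.Adj u v → vec u ⬝ᵥ vec v = -1
  dotProduct_of_not_adj : ∀ ⦃u v⦄, u ≠ v → ¬ graph.Adj u v → vec u ⬝ᵥ vec v = 0

namespace LinearSystem

variable {V ι : Type*} [Fintype ι] (S : LinearSystem V ι)

/-- The weight of a vertex, recovered as the squared norm of its vector. -/
def weight (v : V) : ℤ := S.vec v ⬝ᵥ S.vec v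

/-- The degree of a vertex, counted as in `Config.deg`. -/
noncomputable def deg (v : V) : ℕ := (S.graph.neighborSet v).ncard

/-- The adjusted weight of a vertex. -/
noncomputable def adjw (v : V) : ℤ := S.weight v - S.deg v

/-- A cap: a vertex carrying a unit vector. Caps replace the vertices of the bad part next to the
outside part, and their unit vectors are the clean screws. -/
def IsCap (v : V) : Prop := S.weight v = 1

/-- A vertex at which a maximal run of vertices of adjusted weight zero stops. -/
def IsTerminal (v : V) : Prop := 0 < S.adjw v ∨ S.IsCap v

/-- `v` is the neighbour of `u` in the direction `s = ±1`. -/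
def Step (s : ℤ) (u v : V) : Prop := S.graph.Adj u v ∧ S.pos v = S.pos u + s

end LinearSystem

/-- A linear system obeying the Working Conditions away from its caps and without bad vertices,
where caps are leaves and count as vertices of positive adjusted weight. -/
structure AdmissibleSystem (V ι : Type*) [Fintype ι] extends LinearSystem V ι where
  two_le_weight_or_cap : ∀ v, 2 ≤ toLinearSystem.weight v ∨
    toLinearSystem.IsCap v ∧ toLinearSystem.deg v = 1
  adjw_le_three : ∀ v, toLinearSystem.adjw v ≤ 3
  eq_of_one_lt_adjw : ∀ ⦃u v⦄, 1 < toLinearSystem.adjw u → 1 < toLinearSystem.adjw v → u = v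
  eq_of_adj_terminal : ∀ ⦃b u v⦄, graph.Adj b u → graph.Adj b v → toLinearSystem.IsTerminal u →
    toLinearSystem.IsTerminal v → u = v
  not_terminal_of_adj_cap : ∀ ⦃c u⦄, toLinearSystem.IsCap c → graph.Adj c u →
    ¬ toLinearSystem.IsTerminal u
  not_adj_one_one : ∀ ⦃t u v⦄, toLinearSystem.adjw t = 3 → graph.Adj u v →
    toLinearSystem.adjw u = 1 → toLinearSystem.adjw v ≠ 1
  not_forbidden : ∀ (s : ℤ) (l : List V), l.IsChain (toLinearSystem.Step s) →
    (∀ v ∈ l, ¬ toLinearSystem.IsCap v) → l.map toLinearSystem.adjw ∉ forbiddenPatterns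

namespace LinearSystem

variable {V ι : Type*} [Fintype ι] {S : LinearSystem V ι} {s : ℤ} {u v w x : V}

theorem Step.sign (h : S.Step s u v) : s = 1 ∨ s = -1 := by
  have := S.isPathCoordinate.pos_of_adj h.1
  have := h.2
  omega

theorem Step.symm (h : S.Step s u v) : S.Step (-s) v u :=
  ⟨h.1.symm, by rw [h.2]; ring⟩

theorem Step.unique (h : S.Step s u v) (h' : S.Step s u w) : v = w :=
  S.isPathCoordinate.eq_of_pos_eq h.1 h'.1 (by rw [h.2, h'.2])

theorem exists_step_of_adj (h : S.graph.Adj u v) : ∃ s, S.Step s u v := by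
  rcases S.isPathCoordinate.pos_of_adj h with h' | h'
  exacts [⟨1, h, h'⟩, ⟨-1, h, h'⟩]

theorem eq_of_adj_of_ne (hu : S.graph.Adj x u) (hv : S.graph.Adj x v) (hw : S.graph.Adj x w)
    (huv : v ≠ u) (huw : w ≠ u) : v = w := by
  have h := S.isPathCoordinate
  have := h.pos_of_adj hu
  have := h.pos_of_adj hv
  have := h.pos_of_adj hw
  have : S.pos v ≠ S.pos u := fun e => huv (h.eq_of_pos_eq hv hu e)
  have : S.pos w ≠ S.pos u := fun e => huw (h.eq_of_pos_eq hw hu e)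
  exact h.eq_of_pos_eq hv hw (by omega)

theorem dotProduct_eq_zero_or (S : LinearSystem V ι) (h : u ≠ v) :
    S.vec u ⬝ᵥ S.vec v = 0 ∧ ¬ S.graph.Adj u v ∨
    S.vec u ⬝ᵥ S.vec v = -1 ∧ S.graph.Adj u v := by
  by_cases hadj : S.graph.Adj u v
  exacts [.inr ⟨S.dotProduct_of_adj hadj, hadj⟩, .inl ⟨S.dotProduct_of_not_adj h hadj, hadj⟩]

theorem dotProduct_eq_zero_of_pos (h₀ : S.pos v ≠ S.pos u) (h₁ : S.pos v ≠ S.pos u + 1)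
    (h₂ : S.pos v ≠ S.pos u - 1) : S.vec u ⬝ᵥ S.vec v = 0 :=
  S.dotProduct_of_not_adj (fun h => h₀ (h ▸ rfl)) fun h =>
    (S.isPathCoordinate.pos_of_adj h).elim h₁ h₂

theorem Step.next (h : S.Step s u v) (hadj : S.graph.Adj v x) (hne : x ≠ u) : S.Step s v x := by
  refine ⟨hadj, ?_⟩
  have := S.isPathCoordinate.pos_of_adj h.1
  have := S.isPathCoordinate.pos_of_adj hadj
  have : S.pos x ≠ S.pos u := fun e => hne (S.isPathCoordinate.eq_of_pos_eq hadj h.1.symm e)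
  have := h.2
  omega

theorem dotProduct_eq_zero_of_common (hu : S.graph.Adj x u) (hv : S.graph.Adj x v) (hne : u ≠ v) :
    S.vec u ⬝ᵥ S.vec v = 0 := by
  have := S.isPathCoordinate.pos_of_adj hu
  have := S.isPathCoordinate.pos_of_adj hv
  have : S.pos u ≠ S.pos v := fun e => hne (S.isPathCoordinate.eq_of_pos_eq hu hv e)
  apply dotProduct_eq_zero_of_pos <;> omega

theorem adjw_add_deg (S : LinearSystem V ι) (v : V) : S.adjw v + S.deg v = S.vec v ⬝ᵥ S.vec v :=
  sub_add_cancel _ _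

theorem neighborSet_eq (S : LinearSystem V ι) (v : V) :
    S.graph.neighborSet v = {u | S.Step 1 v u} ∪ {u | S.Step (-1) v u} := by
  ext u
  refine ⟨fun h => ?_, fun h => h.elim And.left And.left⟩
  rcases S.isPathCoordinate.pos_of_adj h with h' | h'
  exacts [.inl ⟨h, h'⟩, .inr ⟨h, h'⟩]

theorem exists_adj_ne (h : S.deg v = 2) (u : V) : ∃ x, S.graph.Adj v x ∧ x ≠ u := by
  obtain ⟨x, hx, hne⟩ := Set.exists_ne_of_one_lt_ncard (s := S.graph.neighborSet v)
    (by rw [← deg, h]; norm_num) u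
  exact ⟨x, hx, hne⟩

section Degree

variable [Finite V]

theorem deg_eq_zero_iff : S.deg v = 0 ↔ ∀ u, ¬ S.graph.Adj v u := by
  rw [deg, Set.ncard_eq_zero, Set.eq_empty_iff_forall_notMem]
  rfl

theorem ncard_setOf_step_le_one (s : ℤ) (v : V) : {u | S.Step s v u}.ncard ≤ 1 :=
  (Set.ncard_le_one (Set.toFinite _)).2 fun _ h _ h' => h.unique h'

theorem deg_le_two (v : V) : S.deg v ≤ 2 := by
  rw [deg, neighborSet_eq]
  exact (Set.ncard_union_le _ _).trans
    (add_le_add (ncard_setOf_step_le_one _ _) (ncard_setOf_step_le_one _ _))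

theorem exists_step (hs : s = 1 ∨ s = -1) (h : S.deg v = 2) : ∃ u, S.Step s v u := by
  by_contra! hno
  have hempty : {u | S.Step s v u} = ∅ := Set.eq_empty_iff_forall_notMem.2 hno
  rw [deg, neighborSet_eq] at h
  rcases hs with rfl | rfl
  · rw [hempty, Set.empty_union] at h
    linarith [ncard_setOf_step_le_one (S := S) (-1) v]
  · rw [hempty, Set.union_empty] at h
    linarith [ncard_setOf_step_le_one (S := S) 1 v]

theorem deg_eq_two (hu : S.graph.Adj v u) (hw : S.graph.Adj v w) (hne : u ≠ w) : S.deg v = 2 := by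
  have : 1 < S.deg v := (Set.one_lt_ncard (Set.toFinite _)).2 ⟨u, hu, w, hw, hne⟩
  have := S.deg_le_two v
  omega

end Degree

end LinearSystem

namespace AdmissibleSystem

variable {V ι : Type*} [Fintype ι] {S : AdmissibleSystem V ι} {s : ℤ} {b c d u v x y : V}

theorem not_cap_of_adjw_pos (h : 0 < S.adjw v) : ¬ S.IsCap v := by
  intro hcap
  have := S.two_le_weight_or_cap v
  rw [LinearSystem.adjw] at h
  unfold LinearSystem.IsCap at *
  omega

theorem not_cap_of_not_terminal (h : ¬ S.IsTerminal v) : ¬ S.IsCap v := fun hcap => h (.inr hcap)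

theorem not_terminal_of_adj (hu : S.graph.Adj b u) (hv : S.graph.Adj b v) (hne : u ≠ v)
    (h : S.IsTerminal u) : ¬ S.IsTerminal v :=
  fun h' => hne (S.eq_of_adj_terminal hu hv h h')

theorem adjw_le_one_of_ne (hy : 1 < S.adjw y) (hne : v ≠ y) : S.adjw v ≤ 1 := by
  by_contra! hv
  exact hne (S.eq_of_one_lt_adjw hv hy)

section Finite

variable [Finite V]

theorem weight_and_deg_of_not_terminal (h : ¬ S.IsTerminal v) :
    S.vec v ⬝ᵥ S.vec v = 2 ∧ S.deg v = 2 := by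
  have hw := (S.two_le_weight_or_cap v).resolve_right fun hcap => h (.inr hcap.1)
  have hle : ¬ 0 < S.adjw v := fun hpos => h (.inl hpos)
  have := S.deg_le_two v
  rw [LinearSystem.adjw] at hle
  unfold LinearSystem.weight at *
  omega

theorem adjw_eq_zero_of_not_terminal (h : ¬ S.IsTerminal v) : S.adjw v = 0 := by
  have := S.adjw_add_deg v
  have := weight_and_deg_of_not_terminal h
  omega

theorem adjw_nonneg (S : AdmissibleSystem V ι) (v : V) : 0 ≤ S.adjw v := by
  have := S.adjw_add_deg v
  have := S.deg_le_two v
  rcases S.two_le_weight_or_cap v with h | ⟨h, hdeg⟩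
  · rw [LinearSystem.weight] at h
    omega
  · rw [LinearSystem.IsCap, LinearSystem.weight] at h
    omega

theorem weight_le_five (S : AdmissibleSystem V ι) (v : V) : S.vec v ⬝ᵥ S.vec v ≤ 5 := by
  have := S.adjw_add_deg v
  have := S.deg_le_two v
  have := S.adjw_le_three v
  omega

theorem exists_adj_ne_of_not_terminal (h : ¬ S.IsTerminal v) (u : V) :
    ∃ x, S.graph.Adj v x ∧ x ≠ u :=
  LinearSystem.exists_adj_ne (weight_and_deg_of_not_terminal h).2 u

theorem exists_step_of_not_terminal (hs : s = 1 ∨ s = -1) (h : ¬ S.IsTerminal v) :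
    ∃ u, S.Step s v u :=
  LinearSystem.exists_step hs (weight_and_deg_of_not_terminal h).2

theorem adjw_le_one_of_chain₄ (h₁ : S.Step s b c) (h₂ : S.Step s c d) (h₃ : S.Step s d u)
    (hb : S.adjw b = 1) (hc : ¬ S.IsTerminal c) (hd : ¬ S.IsTerminal d) : S.adjw u ≤ 1 := by
  by_contra! hu
  refine S.not_forbidden s [b, c, d, u] (by simp [h₁, h₂, h₃]) ?_ ?_
  · have := not_cap_of_adjw_pos (S := S) (v := b) (by omega)
    have := not_cap_of_adjw_pos (S := S) (v := u) (by omega)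
    simp_all [not_cap_of_not_terminal]
  · have := S.adjw_le_three u
    have : S.adjw u = 2 ∨ S.adjw u = 3 := by omega
    rcases this with h | h <;>
      simp [forbiddenPatterns, hb, h, adjw_eq_zero_of_not_terminal hc,
        adjw_eq_zero_of_not_terminal hd]

end Finite

end AdmissibleSystem

/-! ### Runs of vertices of adjusted weight zero -/

/-- `v` is none of the vertices `z 0, …, z (k + 1)`. -/
def OffRun {V : Type*} (k : ℕ) (z : ℕ → V) (v : V) : Prop := ∀ i ≤ k + 1, v ≠ z i

/-- A maximal run `z 1, …, z k` of vertices of adjusted weight zero, listed in the direction `s`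
together with the terminal vertices `z 0` and `z (k + 1)` bounding it. -/
structure IsRun {V ι : Type*} [Fintype ι] (S : AdmissibleSystem V ι) (s : ℤ) (k : ℕ)
    (z : ℕ → V) : Prop where
  one_le : 1 ≤ k
  step : ∀ i ≤ k, S.Step s (z i) (z (i + 1))
  not_terminal : ∀ i, 1 ≤ i → i ≤ k → ¬ S.IsTerminal (z i)
  terminal_left : S.IsTerminal (z 0)
  terminal_right : S.IsTerminal (z (k + 1))

theorem OffRun.reverse {V : Type*} {k : ℕ} {z : ℕ → V} {v : V} (hv : OffRun k z v) :
    OffRun k (fun i => z (k + 1 - i)) v :=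
  fun _ _ => hv _ (Nat.sub_le _ _)

namespace IsRun

variable {V ι : Type*} [Fintype ι] {S : AdmissibleSystem V ι} {s : ℤ} {k : ℕ} {z : ℕ → V}
  {u v : V}

theorem sign (h : IsRun S s k z) : s = 1 ∨ s = -1 := (h.step 0 k.zero_le).sign

theorem reverse (h : IsRun S s k z) : IsRun S (-s) k fun i => z (k + 1 - i) where
  one_le := h.one_le
  step i hi := by
    have := (h.step (k - i) (by omega)).symm
    rwa [show k - i + 1 = k + 1 - i by omega, show k - i = k + 1 - (i + 1) by omega] at this
  not_terminal i h₁ hi := h.not_terminal _ (by omega) (by omega)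
  terminal_left := h.terminal_right
  terminal_right := by simpa using h.terminal_left

theorem pos_eq (h : IsRun S s k z) {i : ℕ} (hi : i ≤ k + 1) :
    S.pos (z i) = S.pos (z 0) + s * i := by
  induction i with
  | zero => simp
  | succ i ih =>
    rw [(h.step i (by omega)).2, ih (by omega)]
    push_cast
    ring

theorem pos_sub (h : IsRun S s k z) {i j : ℕ} (hi : i ≤ k + 1) (hj : j ≤ k + 1) :
    S.pos (z i) - S.pos (z j) = i - j ∨ S.pos (z i) - S.pos (z j) = j - i := by
  rw [h.pos_eq hi, h.pos_eq hj]
  rcases h.sign with rfl | rfl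
  · left; ring
  · right; ring

theorem two_le (h : IsRun S s k z) : 2 ≤ k := by
  by_contra! hk
  obtain rfl : k = 1 := by have := h.one_le; omega
  have hne : z 0 ≠ z 2 := fun e => by
    have := h.pos_sub (i := 2) (j := 0) le_rfl (by omega)
    rw [← e] at this
    omega
  exact hne (S.eq_of_adj_terminal (h.step 0 (by omega)).1.symm (h.step 1 le_rfl).1
    h.terminal_left h.terminal_right)

theorem dotProduct_succ (h : IsRun S s k z) {i : ℕ} (hi : i ≤ k) :
    S.vec (z i) ⬝ᵥ S.vec (z (i + 1)) = -1 :=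
  S.dotProduct_of_adj (h.step i hi).1

theorem dotProduct_far (h : IsRun S s k z) {i j : ℕ} (hij : i + 1 < j) (hj : j ≤ k + 1) :
    S.vec (z i) ⬝ᵥ S.vec (z j) = 0 := by
  have := h.pos_sub (i := i) (j := j) (by omega) hj
  apply LinearSystem.dotProduct_eq_zero_of_pos <;> omega

theorem dotProduct_ends (h : IsRun S s k z) : S.vec (z 0) ⬝ᵥ S.vec (z (k + 1)) = 0 :=
  h.dotProduct_far (by have := h.one_le; omega) le_rfl

theorem not_adj_both_ends (h : IsRun S s k z) (hp : S.graph.Adj (z 0) u) :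
    ¬ S.graph.Adj (z (k + 1)) u := fun hq => by
  have := h.two_le
  have := h.pos_sub (i := k + 1) (j := 0) le_rfl (by omega)
  have := S.isPathCoordinate.pos_of_adj hp
  have := S.isPathCoordinate.pos_of_adj hq
  omega

theorem not_adj_of_off (h : IsRun S s k z) (hv : OffRun k z v) {i : ℕ} (h₁ : 1 ≤ i) (hi : i ≤ k) :
    ¬ S.graph.Adj v (z i) := fun hadj => by
  obtain ⟨i, rfl⟩ := Nat.exists_eq_add_of_le' h₁
  have hprev := (h.step i (by omega)).1.symm
  have hnext := (h.step (i + 1) hi).1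
  have hne : z (i + 2) ≠ z i := fun e => by
    have := h.pos_sub (i := i + 2) (j := i) (by omega) (by omega)
    rw [e] at this
    omega
  exact hv _ (by omega) (LinearSystem.eq_of_adj_of_ne hprev hadj.symm hnext (hv i (by omega)) hne)

theorem off_of_adj (h : IsRun S s k z) (hv : OffRun k z v) (hadj : S.graph.Adj v u)
    (hp : u ≠ z 0) (hq : u ≠ z (k + 1)) : OffRun k z u := by
  rintro i hi rfl
  rcases Nat.eq_zero_or_pos i with rfl | h₁
  · exact hp rfl
  · rcases Nat.eq_or_lt_of_le hi with rfl | hi'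
    · exact hq rfl
    · exact h.not_adj_of_off hv h₁ (by omega) hadj

end IsRun

section RunExistence

variable {V ι : Type*} [Fintype ι] [Finite V] {S : AdmissibleSystem V ι} {s : ℤ} {v : V}

theorem exists_steps_to_terminal (hs : s = 1 ∨ s = -1) (hv : ¬ S.IsTerminal v) :
    ∃ (n : ℕ) (z : ℕ → V), 1 ≤ n ∧ z 0 = v ∧
      (∀ i < n, S.Step s (z i) (z (i + 1)) ∧ ¬ S.IsTerminal (z i)) ∧ S.IsTerminal (z n) := by
  classical
  choose! next hnext using fun u (hu : ¬ S.IsTerminal u) =>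
    AdmissibleSystem.exists_step_of_not_terminal hs hu
  have hstep : ∀ i, ¬ S.IsTerminal (next^[i] v) → S.Step s (next^[i] v) (next^[i + 1] v) :=
    fun i hi => by simpa only [Function.iterate_succ_apply'] using hnext _ hi
  have hex : ∃ n, S.IsTerminal (next^[n] v) := by
    by_contra! hno
    refine not_injective_infinite_finite (fun n => next^[n] v) fun i j hij => ?_
    have hpos : ∀ n : ℕ, S.pos (next^[n] v) = S.pos v + s * n := fun n => by
      induction n with
      | zero => simp
      | succ n ih =>
        rw [(hstep n (hno n)).2, ih]
        push_cast
        ring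
    have := congrArg S.pos hij
    rw [hpos, hpos] at this
    rcases hs with rfl | rfl <;> omega
  refine ⟨Nat.find hex, fun i => next^[i] v, Nat.one_le_iff_ne_zero.2 fun h0 => ?_, rfl,
    fun i hi => ⟨hstep i (Nat.find_min hex hi), Nat.find_min hex hi⟩, Nat.find_spec hex⟩
  have := Nat.find_spec hex
  rw [h0] at this
  exact hv this

theorem exists_isRun (hv : ¬ S.IsTerminal v) :
    ∃ (k : ℕ) (z : ℕ → V), IsRun S 1 k z ∧ ∃ i, 1 ≤ i ∧ i ≤ k ∧ z i = v := by
  obtain ⟨a, l, ha, hl₀, hl, hla⟩ := exists_steps_to_terminal (S := S) (.inr rfl) hv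
  obtain ⟨b, r, hb, hr₀, hr, hrb⟩ := exists_steps_to_terminal (S := S) (.inl rfl) hv
  let z : ℕ → V := fun i => if i ≤ a then l (a - i) else r (i - a)
  have hzl : ∀ i ≤ a, z i = l (a - i) := fun i hi => if_pos hi
  have hzr : ∀ i, a ≤ i → z i = r (i - a) := fun i hi => by
    rcases hi.eq_or_lt with rfl | hi
    · rw [hzl a le_rfl, Nat.sub_self, hl₀, hr₀]
    · exact if_neg (by omega)
  refine ⟨a + b - 1, z, ⟨by omega, fun i hi => ?_, fun i h₁ hi => ?_, ?_, ?_⟩, a, ha, by omega, ?_⟩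
  · rcases lt_or_ge i a with hia | hia
    · have := (hl (a - (i + 1)) (by omega)).1.symm
      rwa [show a - (i + 1) + 1 = a - i by omega, ← hzl i hia.le, ← hzl (i + 1) hia,
        neg_neg] at this
    · rw [hzr i hia, hzr (i + 1) (by omega), Nat.sub_add_comm hia]
      exact (hr _ (by omega)).1
  · rcases lt_or_ge i a with hia | hia
    · rw [hzl i hia.le]
      exact (hl _ (by omega)).2
    · rw [hzr i hia]
      exact (hr _ (by omega)).2
  · rwa [hzl 0 (by omega)]
  · rwa [hzr _ (by omega), show a + b - 1 + 1 - a = b by omega]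
  · rw [hzl a le_rfl, Nat.sub_self, hl₀]

end RunExistence

section RunFrame

variable {V ι : Type*} [Fintype ι] {S : AdmissibleSystem V ι} {s : ℤ} {k : ℕ} {z : ℕ → V}
  {v : V} {e : ℕ → ι → ℤ}

theorem IsRun.exists_isRootFrame [Finite V] (h : IsRun S s k z) :
    ∃ e, IsRootFrame k (fun i => S.vec (z (i + 1))) e := by
  refine IsRootChain.exists_isRootFrame (p := S.vec (z 0)) ⟨fun i hi => ?_, fun i hi => ?_,
    fun i j hij hj => ?_⟩ h.two_le (h.dotProduct_succ k.zero_le) fun hk => ?_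
  · exact (AdmissibleSystem.weight_and_deg_of_not_terminal
      (h.not_terminal (i + 1) (by omega) hi)).1
  · exact h.dotProduct_succ hi.le
  · exact h.dotProduct_far (by omega) (by omega)
  · exact h.dotProduct_far (by omega) (by omega)

theorem IsRun.dotProduct_frame_off (h : IsRun S s k z)
    (he : IsRootFrame k (fun i => S.vec (z (i + 1))) e) (hv : OffRun k z v) :
    ∀ i ≤ k, S.vec v ⬝ᵥ e i = S.vec v ⬝ᵥ e 0 := by
  intro i
  induction i with
  | zero => exact fun _ => rfl
  | succ i ih =>
    intro hi
    have h0 := S.dotProduct_of_not_adj (hv (i + 1) (by omega))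
      (h.not_adj_of_off hv (by omega) hi)
    rw [he.eq_sub i hi, dotProduct_sub, ih (by omega)] at h0
    linarith

theorem IsRun.dotProduct_frame_left (h : IsRun S s k z)
    (he : IsRootFrame k (fun i => S.vec (z (i + 1))) e) :
    ∀ i, 1 ≤ i → i ≤ k → S.vec (z 0) ⬝ᵥ e i = S.vec (z 0) ⬝ᵥ e 0 + 1 := by
  intro i h₁
  induction i, h₁ using Nat.le_induction with
  | base =>
    intro hi
    have h0 := h.dotProduct_succ k.zero_le
    rw [he.eq_sub 0 hi, dotProduct_sub] at h0
    linarith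
  | succ i h₁ ih =>
    intro hi
    have h0 := h.dotProduct_far (i := 0) (j := i + 1) (by omega) (by omega)
    rw [he.eq_sub i hi, dotProduct_sub, ih (by omega)] at h0
    linarith

theorem IsRun.dotProduct_frame_right (h : IsRun S s k z)
    (he : IsRootFrame k (fun i => S.vec (z (i + 1))) e) :
    ∀ i < k, S.vec (z (k + 1)) ⬝ᵥ e i = S.vec (z (k + 1)) ⬝ᵥ e 0 := by
  intro i
  induction i with
  | zero => exact fun _ => rfl
  | succ i ih =>
    intro hi
    have h0 := h.dotProduct_far (i := i + 1) (j := k + 1) (by omega) le_rfl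
    rw [dotProduct_comm, he.eq_sub i (by omega), dotProduct_sub, ih (by omega)] at h0
    linarith

theorem IsRun.dotProduct_frame_right_last (h : IsRun S s k z)
    (he : IsRootFrame k (fun i => S.vec (z (i + 1))) e) :
    S.vec (z (k + 1)) ⬝ᵥ e k = S.vec (z (k + 1)) ⬝ᵥ e 0 + 1 := by
  obtain ⟨k, rfl⟩ := Nat.exists_eq_add_of_le' h.one_le
  have h0 := h.dotProduct_succ (i := k + 1) le_rfl
  rw [dotProduct_comm, he.eq_sub k (by omega), dotProduct_sub,
    h.dotProduct_frame_right he k (by omega)] at h0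
  linarith

/-- The frame `e 0, …, e k` of a run summarised by its extreme vectors `A = e 0`, `B = e k` and the
sum `M` of the others. This is all that the norm estimates need, and it makes the reversal of a run
symmetric: `A, M, B` becomes `-B, -M, -A`. -/
structure IsFramedRun (S : AdmissibleSystem V ι) (s : ℤ) (k : ℕ) (z : ℕ → V) (A M B : ι → ℤ) : Prop
    extends IsRun S s k z where
  AA : A ⬝ᵥ A = 1
  MM : M ⬝ᵥ M = k - 1
  BB : B ⬝ᵥ B = 1
  AM : A ⬝ᵥ M = 0
  AB : A ⬝ᵥ B = 0
  MB : M ⬝ᵥ B = 0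
  off : ∀ v, OffRun k z v →
    S.vec v ⬝ᵥ M = (k - 1) * (S.vec v ⬝ᵥ A) ∧ S.vec v ⬝ᵥ B = S.vec v ⬝ᵥ A
  left : S.vec (z 0) ⬝ᵥ M = (k - 1) * (S.vec (z 0) ⬝ᵥ A + 1) ∧
    S.vec (z 0) ⬝ᵥ B = S.vec (z 0) ⬝ᵥ A + 1
  right : S.vec (z (k + 1)) ⬝ᵥ M = (k - 1) * (S.vec (z (k + 1)) ⬝ᵥ A) ∧
    S.vec (z (k + 1)) ⬝ᵥ B = S.vec (z (k + 1)) ⬝ᵥ A + 1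

theorem IsRun.isFramedRun (h : IsRun S s k z)
    (he : IsRootFrame k (fun i => S.vec (z (i + 1))) e) :
    IsFramedRun S s k z (e 0) (∑ i ∈ Finset.Ico 1 k, e i) (e k) := by
  have hk := h.one_le
  have hM : ∀ (x : ι → ℤ) (c : ℤ), (∀ i, 1 ≤ i → i < k → x ⬝ᵥ e i = c) →
      x ⬝ᵥ ∑ i ∈ Finset.Ico 1 k, e i = (k - 1) * c := fun x c hx => by
    rw [dotProduct_sum, Finset.sum_congr rfl fun i hi =>
      hx i (Finset.mem_Ico.1 hi).1 (Finset.mem_Ico.1 hi).2, Finset.sum_const, Nat.card_Ico,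
      nsmul_eq_mul, Nat.cast_sub hk, Nat.cast_one]
  have hMe : ∀ i, 1 ≤ i → i < k → (∑ j ∈ Finset.Ico 1 k, e j) ⬝ᵥ e i = 1 := fun i h₁ hi => by
    rw [sum_dotProduct, Finset.sum_eq_single i, he.dotProduct_self i hi.le]
    · intro j hj hne
      have hjk := (Finset.mem_Ico.1 hj).2
      rcases hne.lt_or_gt with hlt | hlt
      · exact he.dotProduct_of_lt _ _ hlt hi.le
      · rw [dotProduct_comm]
        exact he.dotProduct_of_lt _ _ hlt hjk.le
    · exact fun hi' => absurd (Finset.mem_Ico.2 ⟨h₁, hi⟩) hi'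
  exact
    { toIsRun := h
      AA := he.dotProduct_self 0 k.zero_le
      MM := by rw [hM _ 1 hMe, mul_one]
      BB := he.dotProduct_self k le_rfl
      AM := by rw [hM _ 0 fun i h₁ hi => he.dotProduct_of_lt 0 i h₁ hi.le, mul_zero]
      AB := he.dotProduct_of_lt 0 k hk le_rfl
      MB := by
        rw [dotProduct_comm, hM _ 0 fun i _ hi => by
          rw [dotProduct_comm]
          exact he.dotProduct_of_lt i k hi le_rfl, mul_zero]
      off := fun v hv => ⟨hM _ _ fun i _ hi => h.dotProduct_frame_off he hv i hi.le,
        h.dotProduct_frame_off he hv k le_rfl⟩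
      left := ⟨hM _ _ fun i h₁ hi => h.dotProduct_frame_left he i h₁ hi.le,
        h.dotProduct_frame_left he k hk le_rfl⟩
      right := ⟨hM _ _ fun i _ hi => h.dotProduct_frame_right he i hi,
        h.dotProduct_frame_right_last he⟩ }

end RunFrame

namespace IsFramedRun

variable {V ι : Type*} [Fintype ι] {S : AdmissibleSystem V ι} {s : ℤ} {k : ℕ} {z : ℕ → V}
  {v : V} {A M B : ι → ℤ}

theorem reverse (h : IsFramedRun S s k z A M B) :
    IsFramedRun S (-s) k (fun i => z (k + 1 - i)) (-B) (-M) (-A) where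
  toIsRun := h.toIsRun.reverse
  AA := by rw [neg_dotProduct_neg, h.BB]
  MM := by rw [neg_dotProduct_neg, h.MM]
  BB := by rw [neg_dotProduct_neg, h.AA]
  AM := by rw [neg_dotProduct_neg, dotProduct_comm, h.MB]
  AB := by rw [neg_dotProduct_neg, dotProduct_comm, h.AB]
  MB := by rw [neg_dotProduct_neg, dotProduct_comm, h.AM]
  off v hv := by
    obtain ⟨hM, hB⟩ := h.off v fun i hi => by
      simpa only [Nat.sub_sub_self hi] using hv (k + 1 - i) (Nat.sub_le _ _)
    simp only [dotProduct_neg, hM, hB, and_true]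
    ring
  left := by
    simp only [Nat.sub_zero, dotProduct_neg, h.right]
    exact ⟨by ring, by ring⟩
  right := by
    simp only [Nat.sub_self, dotProduct_neg, h.left]
    exact ⟨by ring, by ring⟩

theorem two_le_int (h : IsFramedRun S s k z A M B) : (2 : ℤ) ≤ k := by
  exact_mod_cast h.two_le

theorem mul_sq_off_le (h : IsFramedRun S s k z A M B) (hv : OffRun k z v) :
    (k + 1) * (S.vec v ⬝ᵥ A) ^ 2 ≤ S.vec v ⬝ᵥ S.vec v := by
  obtain ⟨hM, hB⟩ := h.off v hv
  set t := S.vec v ⬝ᵥ A with ht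
  have hn := combination₄_nonneg 1 (-t) (-t) (-t) (S.vec v) A M B
  rw [h.AA, h.MM, h.BB, h.AM, h.AB, h.MB, hM, hB, ← ht] at hn
  linarith

end IsFramedRun

theorem AdmissibleSystem.eq_of_adj_cap {V ι : Type*} [Fintype ι] [Finite V]
    {S : AdmissibleSystem V ι} {c u v : V} (hc : S.IsCap c) (hu : S.graph.Adj c u)
    (hv : S.graph.Adj c v) : u = v := by
  by_contra hne
  have := LinearSystem.deg_eq_two hu hv hne
  have := S.two_le_weight_or_cap c
  unfold LinearSystem.IsCap at *
  omega

namespace IsFramedRun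

variable {V ι : Type*} [Fintype ι] [Finite V] {S : AdmissibleSystem V ι} {s : ℤ} {k : ℕ}
  {z : ℕ → V} {v : V} {A M B : ι → ℤ}

theorem left_eq_zero_or (h : IsFramedRun S s k z A M B) :
    S.vec (z 0) ⬝ᵥ A = 0 ∨ S.vec (z 0) ⬝ᵥ A = -1 := by
  have hk := h.two_le_int
  have hw := S.weight_le_five (z 0)
  set t := S.vec (z 0) ⬝ᵥ A with ht
  have hn := combination₄_nonneg 1 (-t) (-(t + 1)) (-(t + 1)) (S.vec (z 0)) A M B
  rw [h.AA, h.MM, h.BB, h.AM, h.AB, h.MB, h.left.1, h.left.2, ← ht] at hn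
  have hsq : t ^ 2 + k * (t + 1) ^ 2 ≤ 5 := by linarith
  have hsq₂ : t ^ 2 + 2 * (t + 1) ^ 2 ≤ 5 := by nlinarith [hsq, sq_nonneg (t + 1)]
  have : -2 < t := by nlinarith
  have : t < 1 := by nlinarith
  omega

theorem right_eq_zero_or (h : IsFramedRun S s k z A M B) :
    S.vec (z (k + 1)) ⬝ᵥ A = 0 ∨ S.vec (z (k + 1)) ⬝ᵥ A = -1 := by
  have := h.reverse.left_eq_zero_or
  simp only [Nat.sub_zero, dotProduct_neg, h.right.2] at this
  omega

theorem off_eq_zero_or (h : IsFramedRun S s k z A M B) (hv : OffRun k z v) :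
    S.vec v ⬝ᵥ A = 0 ∨ S.vec v ⬝ᵥ A = 1 ∨ S.vec v ⬝ᵥ A = -1 := by
  have := h.mul_sq_off_le hv
  have := S.weight_le_five v
  apply eq_zero_or_one_or_neg_one_of_sq_lt_four
  nlinarith [h.two_le_int, sq_nonneg (S.vec v ⬝ᵥ A)]

theorem off_ne_one_of_weight_le (h : IsFramedRun S s k z A M B) (hv : OffRun k z v)
    (hw : S.vec v ⬝ᵥ S.vec v ≤ k + 1) : S.vec v ⬝ᵥ A ≠ 1 := by
  intro hA
  obtain ⟨hM, hB⟩ := h.off v hv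
  rw [hA] at hM hB
  have hq := dotProduct_combination₄_eq_zero 1 (-1) (-1) (-1) (S.vec v) A M B (by
    rw [h.AA, h.MM, h.BB, h.AM, h.AB, h.MB, hM, hB, hA]
    linarith) (S.vec (z (k + 1)))
  rw [h.right.1, h.right.2] at hq
  have := h.two_le
  have := S.dotProduct_eq_zero_or (hv (k + 1) le_rfl).symm
  rcases h.right_eq_zero_or with h0 | h0 <;> rw [h0] at hq <;> omega

theorem off_eq_zero_of_weight_le (h : IsFramedRun S s k z A M B) (hv : OffRun k z v)
    (hw : S.vec v ⬝ᵥ S.vec v ≤ k + 1) : S.vec v ⬝ᵥ A = 0 := by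
  have h₁ := h.off_ne_one_of_weight_le hv hw
  have h₂ := h.reverse.off_ne_one_of_weight_le hv.reverse hw
  rw [dotProduct_neg, (h.off v hv).2] at h₂
  have := h.off_eq_zero_or hv
  omega

theorem dotProduct_A_of_cap_left (h : IsFramedRun S s k z A M B) (hcap : S.IsCap (z 0))
    (x : ι → ℤ) : x ⬝ᵥ A = -(x ⬝ᵥ S.vec (z 0)) := by
  have hk := h.two_le
  have hw : S.vec (z 0) ⬝ᵥ S.vec (z 0) = 1 := hcap
  have hA : S.vec (z 0) ⬝ᵥ A = -1 := by
    refine h.left_eq_zero_or.resolve_left fun h0 => ?_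
    have hn := combination₃_nonneg 1 (-1) (-1) (S.vec (z 0)) M B
    rw [hw, h.MM, h.BB, h.MB, h.left.1, h.left.2, h0] at hn
    omega
  have := dotProduct_combination₃_eq_zero 1 1 0 (S.vec (z 0)) A 0 (by
    rw [hw, h.AA, hA]
    simp) x
  linarith

theorem off_eq_zero_of_cap_left (h : IsFramedRun S s k z A M B) (hcap : S.IsCap (z 0))
    (hv : OffRun k z v) : S.vec v ⬝ᵥ A = 0 := by
  rw [h.dotProduct_A_of_cap_left hcap, S.dotProduct_of_not_adj (hv 0 (by omega)) fun hadj =>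
    hv 1 (by omega) (AdmissibleSystem.eq_of_adj_cap hcap hadj.symm (h.step 0 (by omega)).1),
    neg_zero]

theorem off_eq_zero_of_cap_right (h : IsFramedRun S s k z A M B) (hcap : S.IsCap (z (k + 1)))
    (hv : OffRun k z v) : S.vec v ⬝ᵥ A = 0 := by
  have := h.reverse.off_eq_zero_of_cap_left hcap hv.reverse
  rw [dotProduct_neg, (h.off v hv).2] at this
  linarith

theorem left_eq_of_cap_left (h : IsFramedRun S s k z A M B) (hcap : S.IsCap (z 0)) :
    S.vec (z 0) ⬝ᵥ A = -1 := by
  rw [h.dotProduct_A_of_cap_left hcap]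
  exact congrArg Neg.neg hcap

theorem left_eq_of_cap_right (h : IsFramedRun S s k z A M B) (hcap : S.IsCap (z (k + 1))) :
    S.vec (z 0) ⬝ᵥ A = -1 := by
  have := h.reverse.dotProduct_A_of_cap_left hcap (S.vec (z 0))
  rw [dotProduct_neg, Nat.sub_zero, h.dotProduct_ends, h.left.2] at this
  linarith

end IsFramedRun

/-! ### Excluding intruders -/

theorem IsRun.adjw_ne_three_of_adj_right {V ι : Type*} [Fintype ι] [Finite V]
    {S : AdmissibleSystem V ι} {s : ℤ} {k : ℕ} {z : ℕ → V} {y : V} (h : IsRun S s k z)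
    (hk : k = 2) (hp : 0 < S.adjw (z 0)) (hq : 0 < S.adjw (z (k + 1))) (hy : OffRun k z y)
    (hadj : S.graph.Adj (z (k + 1)) y) : S.adjw y ≠ 3 := by
  subst hk
  intro hy₃
  have hp₁ : S.adjw (z 0) = 1 := le_antisymm
    (AdmissibleSystem.adjw_le_one_of_ne (y := y) (by omega) (hy 0 (by omega)).symm) hp
  have hq₁ : S.adjw (z 3) = 1 := le_antisymm
    (AdmissibleSystem.adjw_le_one_of_ne (y := y) (by omega) (hy 3 le_rfl).symm) hq
  have h₁ := h.not_terminal 1 le_rfl (by omega)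
  have h₂ := h.not_terminal 2 (by omega) le_rfl
  have step₃ := (h.step 2 le_rfl).next hadj (hy 2 (by omega))
  refine S.not_forbidden (-s) [y, z 3, z 2, z 1, z 0] ?_ ?_ ?_
  · simp [step₃.symm, (h.step 2 le_rfl).symm, (h.step 1 (by omega)).symm,
      (h.step 0 (by omega)).symm]
  · have := AdmissibleSystem.not_cap_of_adjw_pos hp
    have := AdmissibleSystem.not_cap_of_adjw_pos hq
    have := AdmissibleSystem.not_cap_of_adjw_pos (S := S) (v := y) (by omega)
    simp_all [AdmissibleSystem.not_cap_of_not_terminal]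
  · simp [forbiddenPatterns, hp₁, hq₁, hy₃, AdmissibleSystem.adjw_eq_zero_of_not_terminal h₁,
      AdmissibleSystem.adjw_eq_zero_of_not_terminal h₂]

theorem IsRun.adjw_ne_three_of_adj_left {V ι : Type*} [Fintype ι] [Finite V]
    {S : AdmissibleSystem V ι} {s : ℤ} {k : ℕ} {z : ℕ → V} {y : V} (h : IsRun S s k z)
    (hk : k = 2) (hp : 0 < S.adjw (z 0)) (hq : 0 < S.adjw (z (k + 1))) (hy : OffRun k z y)
    (hadj : S.graph.Adj (z 0) y) : S.adjw y ≠ 3 :=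
  h.reverse.adjw_ne_three_of_adj_right hk hq (by simpa using hp) hy.reverse (by simpa using hadj)

/-- A hypothetical vertex `y` off a run pairing to `1` with its frame, so that
`S.vec y = A + M + B + Y` with `Y` orthogonal to the frame. No such vertex exists. -/
structure IsIntruder {V ι : Type*} [Fintype ι] (S : AdmissibleSystem V ι) (s : ℤ) (k : ℕ)
    (z : ℕ → V) (A M B : ι → ℤ) (y : V) (Y : ι → ℤ) : Prop extends
    IsFramedRun S s k z A M B where
  left_pos : 0 < S.adjw (z 0)
  right_pos : 0 < S.adjw (z (k + 1))
  offRun : OffRun k z y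
  dotProduct_A : S.vec y ⬝ᵥ A = 1
  eq_sub : Y = S.vec y - A - M - B

namespace IsIntruder

variable {V ι : Type*} [Fintype ι] {S : AdmissibleSystem V ι} {s : ℤ} {k : ℕ}
  {z : ℕ → V} {A M B Y : ι → ℤ} {y : V}

theorem dotProduct_Y (h : IsIntruder S s k z A M B y Y) (x : ι → ℤ) :
    x ⬝ᵥ Y = x ⬝ᵥ S.vec y - x ⬝ᵥ A - x ⬝ᵥ M - x ⬝ᵥ B := by
  simp only [h.eq_sub, dotProduct_sub]

theorem dotProduct_MB (h : IsIntruder S s k z A M B y Y) :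
    S.vec y ⬝ᵥ M = k - 1 ∧ S.vec y ⬝ᵥ B = 1 := by
  have := h.off y h.offRun
  rwa [h.dotProduct_A, mul_one] at this

theorem orthogonal (h : IsIntruder S s k z A M B y Y) :
    A ⬝ᵥ Y = 0 ∧ M ⬝ᵥ Y = 0 ∧ B ⬝ᵥ Y = 0 := by
  simp only [h.dotProduct_Y, dotProduct_comm _ (S.vec y), dotProduct_comm M A,
    dotProduct_comm B A, dotProduct_comm B M, h.dotProduct_A, h.dotProduct_MB, h.AA, h.AM, h.AB,
    h.MM, h.MB, h.BB]
  exact ⟨by ring, by ring, by ring⟩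

theorem dotProduct_Y_self (h : IsIntruder S s k z A M B y Y) :
    Y ⬝ᵥ Y = S.vec y ⬝ᵥ S.vec y - (k + 1) := by
  obtain ⟨hA, hM, hB⟩ := h.orthogonal
  have hy := h.dotProduct_Y (S.vec y)
  rw [h.dotProduct_A, h.dotProduct_MB.1, h.dotProduct_MB.2] at hy
  rw [h.dotProduct_Y Y, dotProduct_comm Y A, dotProduct_comm Y M, dotProduct_comm Y B, hA, hM, hB,
    dotProduct_comm, hy]
  ring

theorem left_ne (h : IsIntruder S s k z A M B y Y) : z 0 ≠ y := (h.offRun 0 (by omega)).symm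

theorem right_ne (h : IsIntruder S s k z A M B y Y) : z (k + 1) ≠ y :=
  (h.offRun _ le_rfl).symm

variable [Finite V] {v : V}

theorem one_le_dotProduct_Y_self (h : IsIntruder S s k z A M B y Y) : 1 ≤ Y ⬝ᵥ Y := by
  by_contra! hlt
  have := h.dotProduct_Y_self
  exact h.off_ne_one_of_weight_le h.offRun (by omega) h.dotProduct_A

theorem two_le_adjw (h : IsIntruder S s k z A M B y Y) : 2 ≤ S.adjw y := by
  have := h.one_le_dotProduct_Y_self
  have := h.dotProduct_Y_self
  have := h.two_le_int
  have := S.adjw_add_deg y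
  have := S.deg_le_two y
  omega

theorem weight_le_three (h : IsIntruder S s k z A M B y Y) (hv : v ≠ y) :
    S.vec v ⬝ᵥ S.vec v ≤ 3 := by
  have := AdmissibleSystem.adjw_le_one_of_ne (by linarith [h.two_le_adjw]) hv
  have := S.adjw_add_deg v
  have := S.deg_le_two v
  omega

theorem left_eq (h : IsIntruder S s k z A M B y Y) :
    S.vec (z 0) ⬝ᵥ A = -1 ∧ S.vec (z 0) ⬝ᵥ B = 0 ∧
      S.vec (z 0) ⬝ᵥ Y = S.vec (z 0) ⬝ᵥ S.vec y + 1 := by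
  obtain ⟨hM, hB⟩ := h.left
  obtain ⟨-, hMY, hBY⟩ := h.orthogonal
  have hY := h.dotProduct_Y (S.vec (z 0))
  have := h.two_le
  rcases h.left_eq_zero_or with h0 | h0 <;> rw [h0] at hM hB hY
  · have := combination₄_nonneg 1 (-1) (-1) 1 (S.vec (z 0)) M B Y
    have := h.weight_le_three h.left_ne
    have := S.dotProduct_eq_zero_or h.left_ne
    have := h.dotProduct_Y_self
    have := S.weight_le_five y
    rw [h.MM, h.BB, h.MB] at *
    omega
  · exact ⟨h0, hB, by linarith⟩

theorem off_eq (h : IsIntruder S s k z A M B y Y) (hne : v ≠ y) (hv : OffRun k z v) :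
    S.vec v ⬝ᵥ A = 0 ∧ S.vec v ⬝ᵥ B = 0 ∧ S.vec v ⬝ᵥ Y = S.vec v ⬝ᵥ S.vec y := by
  have hA := h.off_eq_zero_of_weight_le hv (by
    linarith [h.weight_le_three hne, h.two_le_int])
  obtain ⟨hM, hB⟩ := h.off v hv
  have hY := h.dotProduct_Y (S.vec v)
  rw [hA, mul_zero] at hM
  exact ⟨hA, by linarith, by linarith⟩

theorem right_eq (h : IsIntruder S s k z A M B y Y) :
    S.vec (z (k + 1)) ⬝ᵥ A = 0 ∧ S.vec (z (k + 1)) ⬝ᵥ B = 1 ∧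
      S.vec (z (k + 1)) ⬝ᵥ Y = S.vec (z (k + 1)) ⬝ᵥ S.vec y - 1 := by
  obtain ⟨hM, hB⟩ := h.right
  obtain ⟨hAY, hMY, -⟩ := h.orthogonal
  have hY := h.dotProduct_Y (S.vec (z (k + 1)))
  have hk := h.two_le
  rcases h.right_eq_zero_or with h0 | h0 <;> rw [h0] at hM hB hY
  · exact ⟨h0, by linarith, by linarith⟩
  have hw := h.weight_le_three h.right_ne
  have hYY := h.dotProduct_Y_self
  have hy₅ := S.weight_le_five y
  have hy₃ := S.adjw_le_three y
  have hqy := S.dotProduct_eq_zero_or h.right_ne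
  have hn := combination₄_nonneg 1 1 1 (-1) (S.vec (z (k + 1))) A M Y
  rw [h.AA, h.MM, h.AM] at hn
  have hadj : S.graph.Adj (z (k + 1)) y := by
    rcases hqy with hqy | hqy
    · omega
    · exact hqy.2
  have hk₂ : k = 2 := by omega
  have hp := S.dotProduct_of_not_adj h.left_ne fun hp => h.not_adj_both_ends hp hadj
  have := h.adjw_ne_three_of_adj_right hk₂ h.left_pos h.right_pos h.offRun hadj
  have := S.adjw_add_deg y
  have := S.deg_le_two y
  have := dotProduct_combination₄_eq_zero 1 1 1 (-1) (S.vec (z (k + 1))) A M Y (by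
    rw [h.AA, h.MM, h.AM]
    omega) (S.vec (z 0))
  have := h.dotProduct_ends
  have := h.left_eq
  have := h.left
  simp only [hk₂] at *
  omega

theorem dotProduct_Y_self_eq (h : IsIntruder S s k z A M B y Y) :
    Y ⬝ᵥ Y = 1 ∨ Y ⬝ᵥ Y = 2 ∧ k = 2 ∧ S.adjw y = 3 := by
  have := h.one_le_dotProduct_Y_self
  have := h.dotProduct_Y_self
  have := h.two_le
  have := S.adjw_add_deg y
  have := S.deg_le_two y
  have := S.adjw_le_three y
  omega

theorem not_adj_right (h : IsIntruder S s k z A M B y Y) : ¬ S.graph.Adj (z (k + 1)) y := by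
  intro hadj
  have hn := combination₃_nonneg 1 (-1) 1 (S.vec (z (k + 1))) B Y
  have hqy := S.dotProduct_of_adj hadj
  obtain ⟨-, hB, hY⟩ := h.right_eq
  obtain ⟨-, -, hBY⟩ := h.orthogonal
  have hw := h.weight_le_three h.right_ne
  rw [h.BB] at hn
  rcases h.dotProduct_Y_self_eq with hYY | ⟨-, hk, hy₃⟩
  · omega
  · exact h.adjw_ne_three_of_adj_right hk h.left_pos h.right_pos h.offRun hadj hy₃

theorem dotProduct_right (h : IsIntruder S s k z A M B y Y) :
    S.vec (z (k + 1)) ⬝ᵥ S.vec y = 0 :=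
  S.dotProduct_of_not_adj h.right_ne h.not_adj_right

theorem exists_other_neighbor (h : IsIntruder S s k z A M B y Y) (hadj : S.graph.Adj (z 0) y) :
    Y ⬝ᵥ Y = 1 ∧ ∃ x, S.graph.Adj y x ∧ x ≠ z 0 ∧ ¬ S.IsTerminal x := by
  have hY := h.dotProduct_Y_self_eq
  have hne := fun hk =>
    h.adjw_ne_three_of_adj_left hk h.left_pos h.right_pos h.offRun hadj
  have hYY : Y ⬝ᵥ Y = 1 := hY.resolve_right fun hY => hne hY.2.1 hY.2.2
  refine ⟨hYY, ?_⟩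
  have hdeg : S.deg y = 2 := by
    have := h.two_le
    have := h.dotProduct_Y_self
    have := S.adjw_add_deg y
    have := S.deg_le_two y
    have := S.adjw_le_three y
    omega
  obtain ⟨x, hx, hxp⟩ := LinearSystem.exists_adj_ne hdeg (z 0)
  exact ⟨x, hx, hxp,
    AdmissibleSystem.not_terminal_of_adj hadj.symm hx hxp.symm (.inl h.left_pos)⟩

theorem not_adj_left (h : IsIntruder S s k z A M B y Y) : ¬ S.graph.Adj (z 0) y := by
  intro hadj
  obtain ⟨hYY, x, hyx, hxp, hx⟩ := h.exists_other_neighbor hadj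
  have hwx := (AdmissibleSystem.weight_and_deg_of_not_terminal hx).1
  have hx_off := h.off_of_adj h.offRun hyx hxp
    (by rintro rfl; exact h.not_adj_right hyx.symm)
  have hxY := h.off_eq hyx.ne' hx_off
  have hxy := S.dotProduct_of_adj hyx.symm
  have hxq := S.dotProduct_eq_zero_or (hx_off (k + 1) le_rfl)
  have hxp₀ := LinearSystem.dotProduct_eq_zero_of_common hyx hadj.symm hxp
  have hq := h.right_eq
  have hqy := h.dotProduct_right
  have hwq := h.weight_le_three h.right_ne
  have hBY := h.orthogonal.2.2
  have hBB := h.BB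
  have hn := combination₄_nonneg 1 1 (-1) 2 (S.vec x) (S.vec (z (k + 1))) B Y
  have hrel := dotProduct_combination₄_eq_zero 1 1 (-1) 2 (S.vec x) (S.vec (z (k + 1))) B Y
    (by omega)
  obtain ⟨x', hxx', hx'y⟩ := AdmissibleSystem.exists_adj_ne_of_not_terminal hx y
  have hdot := S.dotProduct_of_adj hxx'
  have hx'q : x' ≠ z (k + 1) := by rintro rfl; omega
  have hx'_off := h.off_of_adj hx_off hxx' (by rintro rfl; omega) hx'q
  have := h.off_eq hx'y hx'_off
  have := LinearSystem.dotProduct_eq_zero_of_common hxx' hyx.symm hx'y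
  have := hrel (S.vec x')
  have := S.dotProduct_eq_zero_or hx'q
  rw [dotProduct_comm (S.vec x') (S.vec x)] at *
  omega

theorem dotProduct_left (h : IsIntruder S s k z A M B y Y) : S.vec (z 0) ⬝ᵥ S.vec y = 0 :=
  S.dotProduct_of_not_adj h.left_ne h.not_adj_left

theorem off_of_adj_self (h : IsIntruder S s k z A M B y Y) (hv : S.graph.Adj y v) : OffRun k z v :=
  h.off_of_adj h.offRun hv (by rintro rfl; exact h.not_adj_left hv.symm)
    (by rintro rfl; exact h.not_adj_right hv.symm)

theorem dotProduct_Y_self_ne_one (h : IsIntruder S s k z A M B y Y) : Y ⬝ᵥ Y ≠ 1 := by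
  intro hYY
  obtain ⟨x, hyx⟩ : ∃ x, S.graph.Adj y x := by
    by_contra! hno
    have := LinearSystem.deg_eq_zero_iff.2 hno
    have := h.two_le
    have := h.dotProduct_Y_self
    have := S.adjw_add_deg y
    have := S.adjw_le_three y
    omega
  have hx := h.off_of_adj_self hyx
  have hp := h.left_eq
  have hq := h.right_eq
  have := h.orthogonal
  have := h.dotProduct_left
  have := h.dotProduct_right
  have := h.dotProduct_ends
  have := h.weight_le_three h.left_ne
  have := h.weight_le_three h.right_ne
  have := h.AA
  have := h.BB
  have := h.AB
  have hrel := dotProduct_combination₅_eq_zero 1 (-1) 1 1 (-2) (S.vec (z 0)) (S.vec (z (k + 1)))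
    A B Y (by omega) (S.vec x)
  have := h.off_eq hyx.ne' hx
  have := S.dotProduct_of_adj hyx.symm
  have := S.dotProduct_eq_zero_or (hx 0 (by omega))
  have := S.dotProduct_eq_zero_or (hx (k + 1) le_rfl)
  omega

end IsIntruder

section Splitting

variable {ι : Type*} [Fintype ι] {x f g : ι → ℤ}

theorem dotProduct_eq_zero_of_dotProduct_add_eq_zero (hx : x ⬝ᵥ x = 1) (hf : f ⬝ᵥ f = 1)
    (hg : g ⬝ᵥ g = 1) (hfg : f ⬝ᵥ g = 0) (h : x ⬝ᵥ (f + g) = 0) : x ⬝ᵥ f = 0 ∧ x ⬝ᵥ g = 0 := by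
  have hsq := sq_dotProduct_add_sq_dotProduct_le hf hg hfg x
  rw [dotProduct_add] at h
  have : (x ⬝ᵥ f) ^ 2 < 1 := by
    rw [eq_neg_of_add_eq_zero_right h] at hsq
    linarith
  have : x ⬝ᵥ f = 0 := by nlinarith
  omega

theorem dotProduct_eq_zero_or_neg_one (hf : f ⬝ᵥ f = 1) (hg : g ⬝ᵥ g = 1) (hfg : f ⬝ᵥ g = 0)
    (hx : x ⬝ᵥ x ≤ 2) (h : x ⬝ᵥ f + x ⬝ᵥ g = -1) :
    x ⬝ᵥ f = 0 ∧ x ⬝ᵥ g = -1 ∨ x ⬝ᵥ f = -1 ∧ x ⬝ᵥ g = 0 := by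
  have hsq := sq_dotProduct_add_sq_dotProduct_le hf hg hfg x
  have hg : x ⬝ᵥ g = -1 - x ⬝ᵥ f := by omega
  rw [hg] at hsq
  have : -2 < x ⬝ᵥ f := by nlinarith
  have : x ⬝ᵥ f < 1 := by nlinarith
  omega

end Splitting

/-- The last surviving kind of intruder, where the part `f + g` of `S.vec y` orthogonal to the
frame has squared norm two. -/
structure IsSplitIntruder {V ι : Type*} [Fintype ι] (S : AdmissibleSystem V ι) (s : ℤ) (k : ℕ)
    (z : ℕ → V) (A M B : ι → ℤ) (y : V) (f g : ι → ℤ) : Prop extends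
    IsIntruder S s k z A M B y (f + g) where
  ff : f ⬝ᵥ f = 1
  gg : g ⬝ᵥ g = 1
  fg : f ⬝ᵥ g = 0
  left_f : S.vec (z 0) ⬝ᵥ f = 1

theorem IsIntruder.exists_isSplitIntruder {V ι : Type*} [Fintype ι] [Finite V]
    {S : AdmissibleSystem V ι} {s : ℤ} {k : ℕ} {z : ℕ → V} {A M B Y : ι → ℤ} {y : V}
    (h : IsIntruder S s k z A M B y Y) : ∃ f g, IsSplitIntruder S s k z A M B y f g := by
  have hYY := (h.dotProduct_Y_self_eq.resolve_left h.dotProduct_Y_self_ne_one).1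
  obtain ⟨f, g, hf, hg, hfg, rfl⟩ := exists_eq_add_of_dotProduct_self_eq_two hYY
  obtain ⟨hAf, hAg⟩ := dotProduct_eq_zero_of_dotProduct_add_eq_zero h.AA hf hg hfg h.orthogonal.1
  have hp := h.left_eq
  have hw := h.weight_le_three h.left_ne
  have hsplit := dotProduct_eq_zero_or_neg_one hf hg hfg (x := -S.vec (z 0) - A) (by
    simp only [sub_dotProduct, dotProduct_sub, neg_dotProduct, dotProduct_neg, h.AA,
      dotProduct_comm A, hp.1]
    linarith) (by
    have := hp.2.2
    rw [h.dotProduct_left, dotProduct_add] at this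
    simp only [sub_dotProduct, neg_dotProduct, hAf, hAg]
    linarith)
  simp only [sub_dotProduct, neg_dotProduct, hAf, hAg, sub_zero] at hsplit
  rcases hsplit with hsplit | hsplit
  · refine ⟨g, f, { toIsIntruder := add_comm f g ▸ h, ff := hg, gg := hf, fg := ?_, left_f := ?_ }⟩
    · rw [dotProduct_comm, hfg]
    · linarith
  · exact ⟨f, g, { toIsIntruder := h, ff := hf, gg := hg, fg := hfg, left_f := by linarith }⟩

namespace IsSplitIntruder

variable {V ι : Type*} [Fintype ι] {S : AdmissibleSystem V ι} {s : ℤ} {k : ℕ}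
  {z : ℕ → V} {A M B f g : ι → ℤ} {v x y u : V}

theorem orthogonal_A (h : IsSplitIntruder S s k z A M B y f g) : A ⬝ᵥ f = 0 ∧ A ⬝ᵥ g = 0 :=
  dotProduct_eq_zero_of_dotProduct_add_eq_zero h.AA h.ff h.gg h.fg h.orthogonal.1

theorem orthogonal_B (h : IsSplitIntruder S s k z A M B y f g) : B ⬝ᵥ f = 0 ∧ B ⬝ᵥ g = 0 :=
  dotProduct_eq_zero_of_dotProduct_add_eq_zero h.BB h.ff h.gg h.fg h.orthogonal.2.2

variable [Finite V]

theorem left_g (h : IsSplitIntruder S s k z A M B y f g) : S.vec (z 0) ⬝ᵥ g = 0 := by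
  have := h.left_eq.2.2
  rw [h.dotProduct_left, dotProduct_add, h.left_f] at this
  omega

theorem off_eq_fg (h : IsSplitIntruder S s k z A M B y f g) (hne : v ≠ y) (hv : OffRun k z v) :
    S.vec v ⬝ᵥ A = 0 ∧ S.vec v ⬝ᵥ B = 0 ∧
      S.vec v ⬝ᵥ f + S.vec v ⬝ᵥ g = S.vec v ⬝ᵥ S.vec y := by
  simpa only [dotProduct_add] using h.off_eq hne hv

theorem right_eq_fg (h : IsSplitIntruder S s k z A M B y f g) :
    S.vec (z (k + 1)) ⬝ᵥ f = 0 ∧ S.vec (z (k + 1)) ⬝ᵥ g = -1 ∨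
      S.vec (z (k + 1)) ⬝ᵥ f = -1 ∧ S.vec (z (k + 1)) ⬝ᵥ g = 0 := by
  obtain ⟨-, hqB, hqY⟩ := h.right_eq
  rw [h.dotProduct_right, dotProduct_add] at hqY
  have hw := h.weight_le_three h.right_ne
  have hsplit := dotProduct_eq_zero_or_neg_one h.ff h.gg h.fg (x := S.vec (z (k + 1)) - B) (by
    simp only [sub_dotProduct, dotProduct_sub, h.BB, dotProduct_comm B, hqB]
    linarith) (by
    simp only [sub_dotProduct, h.orthogonal_B]
    linarith)
  simpa only [sub_dotProduct, h.orthogonal_B, sub_zero] using hsplit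

theorem adjw_self (h : IsSplitIntruder S s k z A M B y f g) : S.adjw y = 3 :=
  (h.dotProduct_Y_self_eq.resolve_left h.dotProduct_Y_self_ne_one).2.2

theorem exists_neighbors (h : IsSplitIntruder S s k z A M B y f g) :
    ∃ x x', S.graph.Adj y x ∧ S.graph.Adj y x' ∧ x ≠ x' ∧ ¬ S.IsTerminal x := by
  have hdeg : S.deg y = 2 := by
    obtain ⟨hYY, hk, hy⟩ := h.dotProduct_Y_self_eq.resolve_left h.dotProduct_Y_self_ne_one
    have := h.dotProduct_Y_self
    have := S.adjw_add_deg y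
    omega
  obtain ⟨x, hx, -⟩ := LinearSystem.exists_adj_ne hdeg y
  obtain ⟨x', hx', hne⟩ := LinearSystem.exists_adj_ne hdeg x
  by_cases hterm : S.IsTerminal x
  · exact ⟨x', x, hx', hx, hne, AdmissibleSystem.not_terminal_of_adj hx hx' hne.symm hterm⟩
  · exact ⟨x, x', hx, hx', hne.symm, hterm⟩

theorem exists_second_neighbor (h : IsSplitIntruder S s k z A M B y f g) (hyx : S.graph.Adj y x)
    (hx : ¬ S.IsTerminal x) : ∃ u, S.graph.Adj x u ∧ u ≠ y ∧ ¬ S.IsTerminal u := by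
  obtain ⟨u, hxu, huy⟩ := AdmissibleSystem.exists_adj_ne_of_not_terminal hx y
  exact ⟨u, hxu, huy, AdmissibleSystem.not_terminal_of_adj hyx.symm hxu huy.symm
    (.inl (by linarith [h.adjw_self]))⟩

theorem not_adj_of_second_neighbor (h : IsSplitIntruder S s k z A M B y f g)
    (hyx : S.graph.Adj y x) (hxu : S.graph.Adj x u) (huy : u ≠ y) (hx : ¬ S.IsTerminal x)
    (hu : ¬ S.IsTerminal u) (hv : 0 < S.adjw v) (hvy : v ≠ y) (hvx : v ≠ x) :
    ¬ S.graph.Adj u v := by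
  intro huv
  have hy := h.adjw_self
  have hv₁ : S.adjw v = 1 :=
    le_antisymm (AdmissibleSystem.adjw_le_one_of_ne (y := y) (by omega) hvy) hv
  obtain ⟨t, hstep⟩ := LinearSystem.exists_step_of_adj huv.symm
  have hstep₂ := hstep.next hxu.symm hvx.symm
  have := AdmissibleSystem.adjw_le_one_of_chain₄ hstep hstep₂ (hstep₂.next hyx.symm huy.symm)
    hv₁ hu hx
  omega

theorem neighbor_g_ne_neg_one (h : IsSplitIntruder S s k z A M B y f g)
    (hqg : S.vec (z (k + 1)) ⬝ᵥ g = -1) (hyx : S.graph.Adj y x) (hx : ¬ S.IsTerminal x) :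
    S.vec x ⬝ᵥ g ≠ -1 := by
  intro hxg
  have hx_off := h.off_of_adj_self hyx
  have hxq := S.dotProduct_of_not_adj (hx_off (k + 1) le_rfl) fun hadj =>
    AdmissibleSystem.not_terminal_of_adj hyx.symm hadj h.right_ne.symm
      (.inl (by linarith [h.adjw_self])) (.inl h.right_pos)
  have hxB := (h.off_eq_fg hyx.ne' hx_off).2.1
  obtain ⟨u, hxu, huy, hu⟩ := h.exists_second_neighbor hyx hx
  have hux := S.dotProduct_of_adj hxu.symm
  have hrel := dotProduct_combination₄_eq_zero 1 1 (-1) 2 (S.vec x) (S.vec (z (k + 1))) B g (by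
    have := (AdmissibleSystem.weight_and_deg_of_not_terminal hx).1
    have := h.weight_le_three h.right_ne
    have := h.right_eq
    have := h.orthogonal_B
    have := h.BB
    have := h.gg
    omega)
  have hup : u ≠ z 0 := by
    rintro rfl
    have := hrel (S.vec (z 0))
    have := h.left_eq
    have := h.left_g
    have := h.dotProduct_ends
    omega
  have huq : u ≠ z (k + 1) := by
    rintro rfl
    rw [dotProduct_comm] at hux
    omega
  have := h.off_eq_fg huy (h.off_of_adj hx_off hxu hup huq)
  have := hrel (S.vec u)
  have := S.dotProduct_of_not_adj huq (h.not_adj_of_second_neighbor hyx hxu huy hx hu h.right_pos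
    h.right_ne (hx_off _ le_rfl).symm)
  omega

theorem neighbor_f_ne_neg_one (h : IsSplitIntruder S s k z A M B y f g)
    (hqf : S.vec (z (k + 1)) ⬝ᵥ f = 0) (hyx : S.graph.Adj y x) (hx : ¬ S.IsTerminal x) :
    S.vec x ⬝ᵥ f ≠ -1 := by
  intro hxf
  have hx_off := h.off_of_adj_self hyx
  have hxp := S.dotProduct_of_not_adj (hx_off 0 (by omega)) fun hadj =>
    AdmissibleSystem.not_terminal_of_adj hyx.symm hadj h.left_ne.symm
      (.inl (by linarith [h.adjw_self])) (.inl h.left_pos)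
  have hxA := (h.off_eq_fg hyx.ne' hx_off).1
  obtain ⟨u, hxu, huy, hu⟩ := h.exists_second_neighbor hyx hx
  have hux := S.dotProduct_of_adj hxu.symm
  have hrel := dotProduct_combination₄_eq_zero 1 (-1) (-1) 2 (S.vec x) (S.vec (z 0)) A f (by
    have := (AdmissibleSystem.weight_and_deg_of_not_terminal hx).1
    have := h.weight_le_three h.left_ne
    have := h.left_eq
    have := h.left_f
    have := h.orthogonal_A
    have := h.AA
    have := h.ff
    omega)
  have hup : u ≠ z 0 := by
    rintro rfl
    rw [dotProduct_comm] at hux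
    omega
  have huq : u ≠ z (k + 1) := by
    rintro rfl
    have := hrel (S.vec (z (k + 1)))
    have := h.right_eq
    have := h.dotProduct_ends
    rw [dotProduct_comm (S.vec (z (k + 1))) (S.vec (z 0))] at *
    omega
  have := h.off_eq_fg huy (h.off_of_adj hx_off hxu hup huq)
  have := hrel (S.vec u)
  have := S.dotProduct_of_not_adj hup (h.not_adj_of_second_neighbor hyx hxu huy hx hu h.left_pos
    h.left_ne (hx_off _ (by omega)).symm)
  omega

theorem right_f (h : IsSplitIntruder S s k z A M B y f g) : S.vec (z (k + 1)) ⬝ᵥ f = -1 := by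
  refine (h.right_eq_fg.resolve_left fun hq => ?_).1
  obtain ⟨x, -, hyx, -, -, hx⟩ := h.exists_neighbors
  have hxy := (h.off_eq_fg hyx.ne' (h.off_of_adj_self hyx)).2.2
  rw [S.dotProduct_of_adj hyx.symm] at hxy
  have hwx := (AdmissibleSystem.weight_and_deg_of_not_terminal hx).1
  rcases dotProduct_eq_zero_or_neg_one h.ff h.gg h.fg hwx.le hxy with hsplit | hsplit
  · exact h.neighbor_g_ne_neg_one hq.2 hyx hx hsplit.2
  · exact h.neighbor_f_ne_neg_one hq.1 hyx hx hsplit.1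

theorem relation_ends (h : IsSplitIntruder S s k z A M B y f g) (x : ι → ℤ) :
    x ⬝ᵥ S.vec (z 0) - x ⬝ᵥ S.vec (z (k + 1)) + x ⬝ᵥ A + x ⬝ᵥ B = 2 * (x ⬝ᵥ f) := by
  have hqf := h.right_f
  have := dotProduct_combination₅_eq_zero 1 (-1) 1 1 (-2) (S.vec (z 0)) (S.vec (z (k + 1))) A B f
    (by
      have := h.weight_le_three h.left_ne
      have := h.weight_le_three h.right_ne
      have := h.left_eq
      have := h.right_eq
      have := h.left_f
      have := h.orthogonal_A
      have := h.orthogonal_B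
      have := h.dotProduct_ends
      have := h.AA
      have := h.BB
      have := h.AB
      have := h.ff
      omega) x
  linarith

theorem off_f_eq_zero (h : IsSplitIntruder S s k z A M B y f g) (hne : v ≠ y)
    (hv : OffRun k z v) : S.vec v ⬝ᵥ f = 0 := by
  have := h.relation_ends (S.vec v)
  have := h.off_eq_fg hne hv
  have := S.dotProduct_eq_zero_or (hv 0 (by omega))
  have := S.dotProduct_eq_zero_or (hv (k + 1) le_rfl)
  omega

theorem second_neighbor_off (h : IsSplitIntruder S s k z A M B y f g) (hyx : S.graph.Adj y x)
    (hxu : S.graph.Adj x u) : OffRun k z u := by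
  have hx_off := h.off_of_adj_self hyx
  have hx := h.off_eq_fg hyx.ne' hx_off
  have hxf := h.off_f_eq_zero hyx.ne' hx_off
  have hrel := h.relation_ends (S.vec x)
  refine h.off_of_adj hx_off hxu ?_ ?_
  · rintro rfl
    have := S.dotProduct_of_adj hxu
    have := S.dotProduct_of_not_adj (hx_off (k + 1) le_rfl) (h.not_adj_both_ends hxu.symm ·.symm)
    omega
  · rintro rfl
    have := S.dotProduct_of_adj hxu
    have := S.dotProduct_of_not_adj (hx_off 0 (by omega))
      fun hadj => h.not_adj_both_ends hadj.symm hxu.symm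
    omega

theorem not_isSplitIntruder : ¬ IsSplitIntruder S s k z A M B y f g := by
  intro h
  obtain ⟨x, x', hyx, hyx', hne, hx⟩ := h.exists_neighbors
  obtain ⟨u, hxu, huy, hu⟩ := h.exists_second_neighbor hyx hx
  obtain ⟨v, huv, hvx⟩ := AdmissibleSystem.exists_adj_ne_of_not_terminal hu x
  obtain ⟨t, step₁⟩ := LinearSystem.exists_step_of_adj hyx'.symm
  have step₂ := step₁.next hyx hne
  have step₃ := step₂.next hxu huy
  have step₄ := step₃.next huv hvx
  have hpos := And.intro step₁.2 <| And.intro step₂.2 <| And.intro step₃.2 step₄.2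
  have hsign := step₁.sign
  have dot_far {a b : V} (h₀ : S.pos b ≠ S.pos a) (h₁ : S.pos b ≠ S.pos a + 1)
      (h₂ : S.pos b ≠ S.pos a - 1) : S.vec a ⬝ᵥ S.vec b = 0 :=
    LinearSystem.dotProduct_eq_zero_of_pos h₀ h₁ h₂
  have hrel := dotProduct_combination₄_eq_zero 1 1 2 3 (S.vec x') (S.vec u) (S.vec x) g (by
    have := h.off_eq_fg hyx.ne' (h.off_of_adj_self hyx)
    have := h.off_eq_fg hyx'.ne' (h.off_of_adj_self hyx')
    have := h.off_eq_fg huy (h.second_neighbor_off hyx hxu)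
    have := h.off_f_eq_zero hyx.ne' (h.off_of_adj_self hyx)
    have := h.off_f_eq_zero hyx'.ne' (h.off_of_adj_self hyx')
    have := h.off_f_eq_zero huy (h.second_neighbor_off hyx hxu)
    have := S.dotProduct_of_adj hyx.symm
    have := S.dotProduct_of_adj hyx'.symm
    have := S.dotProduct_of_adj hxu.symm
    have := h.weight_le_three hyx'.ne'
    have := (AdmissibleSystem.weight_and_deg_of_not_terminal hx).1
    have := (AdmissibleSystem.weight_and_deg_of_not_terminal hu).1
    have : S.vec x' ⬝ᵥ S.vec u = 0 := by apply dot_far <;> omega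
    have : S.vec x' ⬝ᵥ S.vec x = 0 := by apply dot_far <;> omega
    have : S.vec u ⬝ᵥ S.vec y = 0 := by apply dot_far <;> omega
    have := h.gg
    omega) (S.vec v)
  have := S.dotProduct_of_adj huv.symm
  have : S.vec v ⬝ᵥ S.vec x' = 0 := by apply dot_far <;> omega
  have : S.vec v ⬝ᵥ S.vec x = 0 := by apply dot_far <;> omega
  omega

end IsSplitIntruder

theorem IsFramedRun.off_ne_one {V ι : Type*} [Fintype ι] [Finite V] {S : AdmissibleSystem V ι}
    {s : ℤ} {k : ℕ} {z : ℕ → V} {v : V} {A M B : ι → ℤ} (h : IsFramedRun S s k z A M B)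
    (hv : OffRun k z v) : S.vec v ⬝ᵥ A ≠ 1 := by
  intro hA
  rcases h.terminal_left with hp | hp
  · rcases h.terminal_right with hq | hq
    · obtain ⟨f, g, hsplit⟩ := IsIntruder.exists_isSplitIntruder
        { toIsFramedRun := h, left_pos := hp, right_pos := hq, offRun := hv, dotProduct_A := hA,
          eq_sub := rfl }
      exact hsplit.not_isSplitIntruder
    · rw [h.off_eq_zero_of_cap_right hq hv] at hA
      omega
  · rw [h.off_eq_zero_of_cap_left hp hv] at hA
    omega

theorem IsFramedRun.off_eq_zero {V ι : Type*} [Fintype ι] [Finite V] {S : AdmissibleSystem V ι}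
    {s : ℤ} {k : ℕ} {z : ℕ → V} {v : V} {A M B : ι → ℤ} (h : IsFramedRun S s k z A M B)
    (hv : OffRun k z v) : S.vec v ⬝ᵥ A = 0 := by
  have h₁ := h.off_ne_one hv
  have h₂ := h.reverse.off_ne_one hv.reverse
  rw [dotProduct_neg, (h.off v hv).2] at h₂
  have := h.off_eq_zero_or hv
  omega

/-! ### Excluding twisted runs -/

section Offset

variable {V ι : Type*} [Fintype ι] {S : LinearSystem V ι} {s c i j : ℤ} {u v : V}

theorem LinearSystem.ne_of_offset (hs : s = 1 ∨ s = -1) (hu : S.pos u = c + s * i)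
    (hv : S.pos v = c + s * j) (hij : i ≠ j) : u ≠ v := by
  rintro rfl
  rcases hs with rfl | rfl <;> omega

theorem LinearSystem.dotProduct_eq_zero_of_offset (hs : s = 1 ∨ s = -1)
    (hu : S.pos u = c + s * i) (hv : S.pos v = c + s * j) (hij : i + 2 ≤ j ∨ j + 2 ≤ i) :
    S.vec u ⬝ᵥ S.vec v = 0 := by
  rcases hs with rfl | rfl <;> apply dotProduct_eq_zero_of_pos <;> omega

end Offset

namespace IsRun

variable {V ι : Type*} [Fintype ι] [Finite V] {S : AdmissibleSystem V ι} {s : ℤ} {k : ℕ}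
  {z : ℕ → V} {x r : V}

theorem adjw_right_le_one (h : IsRun S s k z) (hk : k = 2) (hp : S.adjw (z 0) = 1) :
    S.adjw (z (k + 1)) ≤ 1 := by
  subst hk
  exact AdmissibleSystem.adjw_le_one_of_chain₄ (h.step 0 (by omega)) (h.step 1 (by omega))
    (h.step 2 le_rfl) hp (h.not_terminal 1 le_rfl (by omega)) (h.not_terminal 2 (by omega) le_rfl)

theorem adjw_right_ne_three (h : IsRun S s k z) (hk : k = 3) (hp : S.adjw (z 0) = 1) :
    S.adjw (z (k + 1)) ≠ 3 := by
  subst hk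
  intro (hq : S.adjw (z 4) = 3)
  refine S.not_forbidden s [z 0, z 1, z 2, z 3, z 4] ?_ ?_ ?_
  · simp [h.step]
  · have := AdmissibleSystem.not_cap_of_adjw_pos (S := S) (v := z 0) (by omega)
    have := AdmissibleSystem.not_cap_of_adjw_pos (S := S) (v := z 4) (by omega)
    simp_all [AdmissibleSystem.not_cap_of_not_terminal, h.not_terminal]
  · simp [forbiddenPatterns, hp, hq, AdmissibleSystem.adjw_eq_zero_of_not_terminal, h.not_terminal]

theorem adjw_ne_two_of_step (h : IsRun S s k z) (hk : k = 2) (hx : S.Step (-s) (z 0) x)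
    (hr : S.Step s (z (k + 1)) r) (hx₁ : S.adjw x = 1) (hp : S.adjw (z 0) = 1)
    (hq : S.adjw (z (k + 1)) = 1) : S.adjw r ≠ 2 := by
  subst hk
  intro hr₂
  have hx' := hx.symm
  rw [neg_neg] at hx'
  refine S.not_forbidden s [x, z 0, z 1, z 2, z 3, r] ?_ ?_ ?_
  · simp [h.step, hx', hr]
  · have hcap : ∀ v, 0 < S.adjw v → ¬ S.IsCap v := fun _ =>
      AdmissibleSystem.not_cap_of_adjw_pos
    simp [hcap, hx₁, hp, hq, hr₂, AdmissibleSystem.not_cap_of_not_terminal, h.not_terminal]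
  · simp [forbiddenPatterns, hx₁, hp, hq, hr₂, AdmissibleSystem.adjw_eq_zero_of_not_terminal,
      h.not_terminal]

end IsRun

/-- A hypothetical framed run whose left end is orthogonal to `A`, so that
`S.vec (z 0) = M + B + P` with `P` orthogonal to the frame. No such run exists. -/
structure IsTwistedRun {V ι : Type*} [Fintype ι] (S : AdmissibleSystem V ι) (s : ℤ) (k : ℕ)
    (z : ℕ → V) (A M B P : ι → ℤ) : Prop extends IsFramedRun S s k z A M B where
  left_pos : 0 < S.adjw (z 0)
  right_pos : 0 < S.adjw (z (k + 1))
  left_A : S.vec (z 0) ⬝ᵥ A = 0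
  eq_sub : P = S.vec (z 0) - M - B

namespace IsTwistedRun

variable {V ι : Type*} [Fintype ι] {S : AdmissibleSystem V ι} {s : ℤ} {k : ℕ} {z : ℕ → V}
  {A M B P : ι → ℤ}

theorem dotProduct_P (h : IsTwistedRun S s k z A M B P) (x : ι → ℤ) :
    x ⬝ᵥ P = x ⬝ᵥ S.vec (z 0) - x ⬝ᵥ M - x ⬝ᵥ B := by
  simp only [h.eq_sub, dotProduct_sub]

theorem left_eq (h : IsTwistedRun S s k z A M B P) :
    S.vec (z 0) ⬝ᵥ M = k - 1 ∧ S.vec (z 0) ⬝ᵥ B = 1 := by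
  have := h.left
  rwa [h.left_A, zero_add, mul_one] at this

theorem orthogonal (h : IsTwistedRun S s k z A M B P) :
    A ⬝ᵥ P = 0 ∧ M ⬝ᵥ P = 0 ∧ B ⬝ᵥ P = 0 := by
  simp only [h.dotProduct_P, dotProduct_comm _ (S.vec (z 0)), dotProduct_comm B M, h.left_A,
    h.left_eq, h.AM, h.AB, h.MM, h.MB, h.BB]
  exact ⟨by ring, by ring, by ring⟩

theorem dotProduct_P_self_eq (h : IsTwistedRun S s k z A M B P) :
    P ⬝ᵥ P = S.vec (z 0) ⬝ᵥ S.vec (z 0) - k := by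
  obtain ⟨-, hM, hB⟩ := h.orthogonal
  have hp := h.dotProduct_P (S.vec (z 0))
  rw [h.left_eq.1, h.left_eq.2] at hp
  rw [h.dotProduct_P P, dotProduct_comm P M, dotProduct_comm P B, hM, hB, dotProduct_comm, hp]
  ring

theorem right_P (h : IsTwistedRun S s k z A M B P) :
    S.vec (z (k + 1)) ⬝ᵥ P = -(S.vec (z (k + 1)) ⬝ᵥ M) - S.vec (z (k + 1)) ⬝ᵥ B := by
  rw [h.dotProduct_P, dotProduct_comm _ (S.vec (z 0)), h.dotProduct_ends, zero_sub]

theorem right_pos_eq (h : IsTwistedRun S s k z A M B P) :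
    S.pos (z (k + 1)) = S.pos (z 0) + s * (k + 1) := by
  exact_mod_cast h.pos_eq le_rfl

theorem left_ne_right (h : IsTwistedRun S s k z A M B P) : z 0 ≠ z (k + 1) :=
  LinearSystem.ne_of_offset (i := 0) h.sign (by ring) h.right_pos_eq (by positivity)

variable [Finite V] {x : V} {i : ℤ}

theorem offset_eq (h : IsTwistedRun S s k z A M B P) (hx : S.pos x = S.pos (z 0) + s * i)
    (hi : i < 0 ∨ k + 1 < i) : S.vec x ⬝ᵥ A = 0 ∧ S.vec x ⬝ᵥ M = 0 ∧ S.vec x ⬝ᵥ B = 0 := by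
  have hoff : OffRun k z x := fun j hj =>
    LinearSystem.ne_of_offset h.sign hx (h.pos_eq hj) (by omega)
  have hA := h.off_eq_zero hoff
  have := h.off x hoff
  rw [hA, mul_zero] at this
  exact ⟨hA, this⟩

theorem one_le_dotProduct_P_self (h : IsTwistedRun S s k z A M B P) : 1 ≤ P ⬝ᵥ P := by
  by_contra! hlt
  have := dotProduct_combination₃_eq_zero 1 0 0 P 0 0 (by simpa using Int.lt_add_one_iff.1 hlt)
    (S.vec (z (k + 1)))
  have := h.right_P
  have := h.two_le
  obtain ⟨hM, hB⟩ := h.right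
  rcases h.right_eq_zero_or with h0 | h0 <;> rw [h0] at hM hB <;> omega

theorem adjw_left_le_of_eq_two (h : IsTwistedRun S s k z A M B P) (hk : k = 2) :
    S.adjw (z 0) ≤ 1 := by
  by_contra! hp
  have hq := AdmissibleSystem.adjw_le_one_of_ne hp h.left_ne_right.symm
  have := h.reverse.adjw_right_le_one hk (le_antisymm hq h.right_pos)
  simp only [Nat.sub_self] at this
  omega

theorem adjw_left_ne_of_eq_three (h : IsTwistedRun S s k z A M B P) (hk : k = 3) :
    S.adjw (z 0) ≠ 3 := by
  intro hp
  have hq := AdmissibleSystem.adjw_le_one_of_ne (S := S) (y := z 0) (by omega) h.left_ne_right.symm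
  refine h.reverse.adjw_right_ne_three hk (le_antisymm hq h.right_pos) ?_
  simpa only [Nat.sub_self] using hp

theorem adjw_deg_left (h : IsTwistedRun S s k z A M B P) :
    S.adjw (z 0) = k - 1 ∧ S.deg (z 0) = 2 := by
  have := h.adjw_left_le_of_eq_two
  have := h.adjw_left_ne_of_eq_three
  have := h.one_le_dotProduct_P_self
  have := h.dotProduct_P_self_eq
  have := h.two_le
  have := S.adjw_le_three (z 0)
  have := S.adjw_add_deg (z 0)
  have := S.deg_le_two (z 0)
  omega

theorem dotProduct_P_self (h : IsTwistedRun S s k z A M B P) : P ⬝ᵥ P = 1 := by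
  have := h.adjw_deg_left
  have := h.dotProduct_P_self_eq
  have := S.adjw_add_deg (z 0)
  omega

theorem adjw_right (h : IsTwistedRun S s k z A M B P) : S.adjw (z (k + 1)) = 1 := by
  refine le_antisymm ?_ h.right_pos
  have hp := h.adjw_deg_left.1
  have := h.two_le
  by_cases hk : k = 2
  · exact h.adjw_right_le_one hk (by omega)
  · exact AdmissibleSystem.adjw_le_one_of_ne (by omega) h.left_ne_right.symm

theorem exists_left_step (h : IsTwistedRun S s k z A M B P) : ∃ x, S.Step (-s) (z 0) x :=
  LinearSystem.exists_step (by have := h.sign; omega) h.adjw_deg_left.2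

theorem left_neighbor_eq (h : IsTwistedRun S s k z A M B P) (hx : S.Step (-s) (z 0) x) :
    S.vec x ⬝ᵥ A = 0 ∧ S.vec x ⬝ᵥ M = 0 ∧ S.vec x ⬝ᵥ B = 0 ∧ S.vec x ⬝ᵥ P = -1 ∧
      S.vec x ⬝ᵥ S.vec (z (k + 1)) = 0 := by
  have hpos : S.pos x = S.pos (z 0) + s * (-1) := by rw [hx.2]; ring
  obtain ⟨hA, hM, hB⟩ := h.offset_eq hpos (by omega)
  refine ⟨hA, hM, hB, ?_, ?_⟩
  · rw [h.dotProduct_P, S.dotProduct_of_adj hx.1.symm, hM, hB]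
    norm_num
  · exact LinearSystem.dotProduct_eq_zero_of_offset h.sign hpos h.right_pos_eq (by omega)

theorem right_A (h : IsTwistedRun S s k z A M B P) : S.vec (z (k + 1)) ⬝ᵥ A = 0 := by
  refine h.right_eq_zero_or.resolve_right fun hqA => ?_
  obtain ⟨x, hx⟩ := h.exists_left_step
  have hxv := h.left_neighbor_eq hx
  obtain ⟨hqM, hqB⟩ := h.right
  rw [hqA] at hqM hqB
  have := h.adjw_right
  have := S.adjw_add_deg (z (k + 1))
  have := S.deg_le_two (z (k + 1))
  have := h.right_P
  have := h.orthogonal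
  have := h.dotProduct_P_self
  have := h.two_le
  have := combination₄_nonneg 1 1 1 (-1) (S.vec (z (k + 1))) A M P
  have := dotProduct_combination₄_eq_zero 1 1 1 (-1) (S.vec (z (k + 1))) A M P (by
    rw [h.AA, h.MM, h.AM] at *
    omega) (S.vec x)
  omega

theorem right_eq (h : IsTwistedRun S s k z A M B P) :
    S.vec (z (k + 1)) ⬝ᵥ B = 1 ∧ S.vec (z (k + 1)) ⬝ᵥ P = -1 := by
  obtain ⟨hqM, hqB⟩ := h.right
  have := h.right_P
  rw [h.right_A] at hqM hqB
  omega

theorem weight_deg_right (h : IsTwistedRun S s k z A M B P) :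
    S.vec (z (k + 1)) ⬝ᵥ S.vec (z (k + 1)) = 3 ∧ S.deg (z (k + 1)) = 2 := by
  have := h.adjw_right
  have := S.adjw_add_deg (z (k + 1))
  have := S.deg_le_two (z (k + 1))
  suffices ¬ S.vec (z (k + 1)) ⬝ᵥ S.vec (z (k + 1)) ≤ 2 by omega
  intro hle
  obtain ⟨x, hx⟩ := h.exists_left_step
  have := h.left_neighbor_eq hx
  have := dotProduct_combination₃_eq_zero 1 (-1) 1 (S.vec (z (k + 1))) B P (by
    rw [h.BB, h.right_eq.1, h.right_eq.2, h.orthogonal.2.2, h.dotProduct_P_self]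
    omega) (S.vec x)
  omega

end IsTwistedRun

/-- A twisted run together with the neighbours `x`, `r` of its ends outside it, where
`S.vec (z (k + 1)) = B - P - g`. -/
structure IsExtendedTwistedRun {V ι : Type*} [Fintype ι] (S : AdmissibleSystem V ι) (s : ℤ) (k : ℕ)
    (z : ℕ → V) (A M B P g : ι → ℤ) (x r : V) : Prop extends IsTwistedRun S s k z A M B P where
  step_left : S.Step (-s) (z 0) x
  step_right : S.Step s (z (k + 1)) r
  eq_sub_g : g = B - P - S.vec (z (k + 1))

namespace IsExtendedTwistedRun

variable {V ι : Type*} [Fintype ι] {S : AdmissibleSystem V ι} {s : ℤ} {k : ℕ} {z : ℕ → V}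
  {A M B P g : ι → ℤ} {x r v : V} {i : ℤ}

theorem dotProduct_g (h : IsExtendedTwistedRun S s k z A M B P g x r) (y : ι → ℤ) :
    y ⬝ᵥ g = y ⬝ᵥ B - y ⬝ᵥ P - y ⬝ᵥ S.vec (z (k + 1)) := by
  simp only [h.eq_sub_g, dotProduct_sub]

theorem pos_x (h : IsExtendedTwistedRun S s k z A M B P g x r) :
    S.pos x = S.pos (z 0) + s * (-1) := by
  rw [h.step_left.2]
  ring

theorem pos_r (h : IsExtendedTwistedRun S s k z A M B P g x r) :
    S.pos r = S.pos (z 0) + s * (k + 2) := by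
  rw [h.step_right.2, h.right_pos_eq]
  ring

theorem dotProduct_r_x (h : IsExtendedTwistedRun S s k z A M B P g x r) :
    S.vec r ⬝ᵥ S.vec x = 0 :=
  LinearSystem.dotProduct_eq_zero_of_offset h.sign h.pos_r h.pos_x (by omega)

theorem offRun_x (h : IsExtendedTwistedRun S s k z A M B P g x r) : OffRun k z x := fun _ hj =>
  LinearSystem.ne_of_offset h.sign h.pos_x (h.pos_eq hj) (by omega)

theorem offRun_r (h : IsExtendedTwistedRun S s k z A M B P g x r) : OffRun k z r := fun _ hj =>
  LinearSystem.ne_of_offset h.sign h.pos_r (h.pos_eq hj) (by omega)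

variable [Finite V]

theorem dotProduct_P_g (h : IsExtendedTwistedRun S s k z A M B P g x r) :
    P ⬝ᵥ g = 0 ∧ g ⬝ᵥ g = 1 := by
  have hP := h.dotProduct_g P
  have hB := h.dotProduct_g B
  have hq := h.dotProduct_g (S.vec (z (k + 1)))
  have hg := h.dotProduct_g g
  have := h.right_eq
  have := h.weight_deg_right
  have := h.orthogonal
  have := h.dotProduct_P_self
  have := h.BB
  rw [dotProduct_comm P B, dotProduct_comm P (S.vec _)] at hP
  rw [dotProduct_comm B (S.vec _)] at hB
  rw [dotProduct_comm g B, dotProduct_comm g P, dotProduct_comm g (S.vec _)] at hg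
  omega

theorem x_eq (h : IsExtendedTwistedRun S s k z A M B P g x r) :
    S.vec x ⬝ᵥ P = -1 ∧ S.vec x ⬝ᵥ g = 1 := by
  have := h.left_neighbor_eq h.step_left
  have := h.dotProduct_g (S.vec x)
  omega

theorem r_eq (h : IsExtendedTwistedRun S s k z A M B P g x r) :
    S.vec r ⬝ᵥ P = 0 ∧ S.vec r ⬝ᵥ g = 1 := by
  have := h.offset_eq h.pos_r (by omega)
  have := h.dotProduct_P (S.vec r)
  have := h.dotProduct_g (S.vec r)
  have := S.dotProduct_of_adj h.step_right.1.symm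
  have := LinearSystem.dotProduct_eq_zero_of_offset (j := 0) h.sign h.pos_r (v := z 0) (by ring)
    (by omega)
  omega

theorem far_eq (h : IsExtendedTwistedRun S s k z A M B P g x r)
    (hv : S.pos v = S.pos (z 0) + s * i) (hi : i < -1 ∨ k + 2 < i) :
    S.vec v ⬝ᵥ P = 0 ∧ S.vec v ⬝ᵥ g = 0 := by
  have := h.offset_eq hv (by omega)
  have := h.dotProduct_P (S.vec v)
  have := h.dotProduct_g (S.vec v)
  have := LinearSystem.dotProduct_eq_zero_of_offset (j := 0) h.sign hv (v := z 0) (by ring)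
    (by omega)
  have := LinearSystem.dotProduct_eq_zero_of_offset h.sign hv h.right_pos_eq (by omega)
  omega

theorem three_le_weight_x (h : IsExtendedTwistedRun S s k z A M B P g x r) :
    3 ≤ S.vec x ⬝ᵥ S.vec x := by
  by_contra! hlt
  have := h.x_eq
  have := h.r_eq
  have := h.dotProduct_r_x
  have := dotProduct_combination₃_eq_zero 1 1 (-1) (S.vec x) P g (by
    have := h.dotProduct_P_g
    have := h.dotProduct_P_self
    omega) (S.vec r)
  omega

theorem adjw_cases (h : IsExtendedTwistedRun S s k z A M B P g x r) :
    (S.adjw x = 1 ∨ k = 2 ∧ S.adjw x = 2) ∧ (S.adjw r = 0 ∨ S.adjw x = 1 ∧ S.adjw r = 1) := by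
  have hp := h.adjw_deg_left.1
  have hq := h.adjw_right
  have hx₃ : k = 2 → S.adjw x ≠ 3 := fun hk =>
    h.adjw_ne_three_of_adj_left hk h.left_pos h.right_pos h.offRun_x h.step_left.1
  have hr₃ : k = 2 → S.adjw r ≠ 3 := fun hk =>
    h.adjw_ne_three_of_adj_right hk h.left_pos h.right_pos h.offRun_r h.step_right.1
  have hr₂ : k = 2 → S.adjw x = 1 → S.adjw r ≠ 2 := fun hk hx =>
    h.adjw_ne_two_of_step hk h.step_left h.step_right hx (by omega) hq
  have hx₂ : k = 2 → S.adjw r = 1 → S.adjw x ≠ 2 := fun hk hr =>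
    h.toIsRun.reverse.adjw_ne_two_of_step hk (by simpa using h.step_right)
      (by simpa using h.step_left) hr hq (by simp only [Nat.sub_self]; omega)
  have hr₁ : k = 4 → S.adjw r ≠ 1 := fun hk =>
    S.not_adj_one_one (t := z 0) (by omega) h.step_right.1 hq
  have hpx : 1 < S.adjw (z 0) → S.adjw x ≤ 1 :=
    (AdmissibleSystem.adjw_le_one_of_ne · (h.offRun_x 0 (by omega)))
  have hpr : 1 < S.adjw (z 0) → S.adjw r ≤ 1 :=
    (AdmissibleSystem.adjw_le_one_of_ne · (h.offRun_r 0 (by omega)))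
  have hxr : 1 < S.adjw x → S.adjw r ≤ 1 := (AdmissibleSystem.adjw_le_one_of_ne ·
    (LinearSystem.ne_of_offset h.sign h.pos_r h.pos_x (by omega)))
  have := h.three_le_weight_x
  have := S.adjw_add_deg x
  have := S.deg_le_two x
  have := S.adjw_le_three x
  have := S.adjw_le_three r
  have := S.adjw_nonneg r
  have := S.adjw_le_three (z 0)
  have := h.two_le
  omega

theorem eq_of_step_x (h : IsExtendedTwistedRun S s k z A M B P g x r) (ht : S.Step (-s) x v) :
    S.vec v ⬝ᵥ S.vec x = -1 ∧ S.vec v ⬝ᵥ S.vec r = 0 ∧ S.vec v ⬝ᵥ P = 0 ∧ S.vec v ⬝ᵥ g = 0 := by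
  have hpos : S.pos v = S.pos (z 0) + s * (-2) := by rw [ht.2, h.pos_x]; ring
  exact ⟨S.dotProduct_of_adj ht.1.symm,
    LinearSystem.dotProduct_eq_zero_of_offset h.sign hpos h.pos_r (by omega),
    h.far_eq hpos (by omega)⟩

theorem eq_of_step_r (h : IsExtendedTwistedRun S s k z A M B P g x r) (hv : S.Step s r v) :
    S.vec v ⬝ᵥ S.vec x = 0 ∧ S.vec v ⬝ᵥ S.vec r = -1 ∧ S.vec v ⬝ᵥ P = 0 ∧ S.vec v ⬝ᵥ g = 0 := by
  have hpos : S.pos v = S.pos (z 0) + s * (k + 3) := by rw [hv.2, h.pos_r]; ring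
  exact ⟨LinearSystem.dotProduct_eq_zero_of_offset h.sign hpos h.pos_x (by omega),
    S.dotProduct_of_adj hv.1.symm, h.far_eq hpos (by omega)⟩

theorem exists_step_x (h : IsExtendedTwistedRun S s k z A M B P g x r) (hx : S.deg x = 2) :
    ∃ t, S.Step (-s) x t ∧ ¬ S.IsTerminal t := by
  obtain ⟨t, ht⟩ := LinearSystem.exists_step (s := -s) (by have := h.sign; omega) hx
  refine ⟨t, ht, AdmissibleSystem.not_terminal_of_adj h.step_left.1.symm ht.1 ?_ (.inl h.left_pos)⟩
  have hpos : S.pos t = S.pos (z 0) + s * (-2) := by rw [ht.2, h.pos_x]; ring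
  exact LinearSystem.ne_of_offset (i := 0) h.sign (by ring) hpos (by omega)

theorem not_adjw_one_one (h : IsExtendedTwistedRun S s k z A M B P g x r) (hx : S.adjw x = 1) :
    S.adjw r ≠ 1 := by
  intro hr
  have := S.adjw_add_deg x
  have := S.deg_le_two x
  have := S.adjw_add_deg r
  have := S.deg_le_two r
  have := h.three_le_weight_x
  obtain ⟨t, ht, hterm⟩ := h.exists_step_x (by omega)
  have ht₂ := (AdmissibleSystem.weight_and_deg_of_not_terminal hterm).1
  have htv := h.eq_of_step_x ht
  have hrx := h.dotProduct_r_x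
  have hxv := h.x_eq
  have hrv := h.r_eq
  have hPg := h.dotProduct_P_g
  have hPP := h.dotProduct_P_self
  have hrt : S.vec r ⬝ᵥ S.vec t = 0 := by rw [dotProduct_comm, htv.2.1]
  have hdeg : S.deg r = 2 := by
    by_contra hdeg
    have := dotProduct_combination₄_eq_zero 1 1 1 (-2) (S.vec r) (S.vec x) P g (by omega)
      (S.vec t)
    omega
  obtain ⟨r', hr'⟩ := LinearSystem.exists_step h.sign hdeg
  have hr'v := h.eq_of_step_r hr'
  have hr't : S.vec r' ⬝ᵥ S.vec t = 0 :=
    LinearSystem.dotProduct_eq_zero_of_offset (c := S.pos (z 0)) (i := k + 3) (j := -2) h.sign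
      (by rw [hr'.2, h.pos_r]; ring) (by rw [ht.2, h.pos_x]; ring) (by omega)
  have := dotProduct_combination₅_eq_zero 1 1 2 2 (-3) (S.vec r) (S.vec t) (S.vec x) P g
    (by omega) (S.vec r')
  omega

theorem adjw_x_of_not_terminal_r (h : IsExtendedTwistedRun S s k z A M B P g x r)
    (hr : ¬ S.IsTerminal r) : S.adjw x = 2 ∧ S.deg x = 2 := by
  obtain ⟨r', hr'⟩ := AdmissibleSystem.exists_step_of_not_terminal h.sign hr
  have := (AdmissibleSystem.weight_and_deg_of_not_terminal hr).1
  have := h.eq_of_step_r hr'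
  have := h.dotProduct_r_x
  have := h.x_eq
  have := h.r_eq
  have := h.dotProduct_P_g
  have := h.dotProduct_P_self
  have : 4 ≤ S.vec x ⬝ᵥ S.vec x := by
    by_contra! hlt
    have := dotProduct_combination₄_eq_zero 1 1 1 (-2) (S.vec r) (S.vec x) P g (by omega)
      (S.vec r')
    omega
  have := S.adjw_add_deg x
  have := S.deg_le_two x
  have := h.adjw_cases
  omega

theorem exists_unit_of_not_terminal_r (h : IsExtendedTwistedRun S s k z A M B P g x r)
    (hr : ¬ S.IsTerminal r) : ∃ y : ι → ℤ, y ⬝ᵥ y = 1 ∧ S.vec r ⬝ᵥ y = 0 ∧ g ⬝ᵥ y = 0 ∧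
      ∀ v : ι → ℤ, v ⬝ᵥ y = v ⬝ᵥ S.vec r + v ⬝ᵥ S.vec x + v ⬝ᵥ P - 2 * (v ⬝ᵥ g) := by
  have hy (v : ι → ℤ) : v ⬝ᵥ (S.vec r + S.vec x + P - (2 : ℤ) • g) =
      v ⬝ᵥ S.vec r + v ⬝ᵥ S.vec x + v ⬝ᵥ P - 2 * (v ⬝ᵥ g) := by
    simp only [dotProduct_add, dotProduct_sub, dotProduct_smul, smul_eq_mul]
  set y := S.vec r + S.vec x + P - (2 : ℤ) • g
  have := h.adjw_x_of_not_terminal_r hr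
  have := S.adjw_add_deg x
  have := (AdmissibleSystem.weight_and_deg_of_not_terminal hr).1
  have := h.x_eq
  have := h.r_eq
  have := h.dotProduct_P_g
  have := h.dotProduct_P_self
  have := h.dotProduct_r_x
  refine ⟨y, ?_, ?_, ?_, hy⟩
  all_goals
    simp only [hy, dotProduct_comm y, dotProduct_comm g (S.vec _), dotProduct_comm P (S.vec _),
      dotProduct_comm (S.vec x) (S.vec r), dotProduct_comm g P]
    omega

theorem terminal_r (h : IsExtendedTwistedRun S s k z A M B P g x r) : S.IsTerminal r := by
  by_contra hr
  obtain ⟨hx₂, hdeg⟩ := h.adjw_x_of_not_terminal_r hr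
  obtain ⟨y, hyy, hry, hgy, hy⟩ := h.exists_unit_of_not_terminal_r hr
  obtain ⟨r', hr'⟩ := AdmissibleSystem.exists_step_of_not_terminal h.sign hr
  obtain ⟨t, ht, hterm⟩ := h.exists_step_x hdeg
  obtain ⟨t', ht'⟩ := AdmissibleSystem.exists_step_of_not_terminal ht.sign hterm
  have hpos_r' : S.pos r' = S.pos (z 0) + s * (k + 3) := by rw [hr'.2, h.pos_r]; ring
  have hpos_t : S.pos t = S.pos (z 0) + s * (-2) := by rw [ht.2, h.pos_x]; ring
  have hpos_t' : S.pos t' = S.pos (z 0) + s * (-3) := by rw [ht'.2, hpos_t]; ring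
  have : S.adjw r' ≤ 1 := AdmissibleSystem.adjw_le_one_of_ne (y := x) (by omega)
    (LinearSystem.ne_of_offset h.sign hpos_r' h.pos_x (by omega))
  have := S.adjw_add_deg r'
  have := S.deg_le_two r'
  have := (AdmissibleSystem.weight_and_deg_of_not_terminal hr).1
  have := (AdmissibleSystem.weight_and_deg_of_not_terminal hterm).1
  have := h.eq_of_step_r hr'
  have := h.eq_of_step_x ht
  have := h.r_eq
  have := h.dotProduct_P_g
  have := LinearSystem.dotProduct_eq_zero_of_offset h.sign hpos_r' hpos_t (by omega)
  have hsum := dotProduct_combination₅_eq_zero 1 1 1 (-1) 2 (S.vec r') (S.vec t) (S.vec r) g y (by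
    rw [hyy, hry, hgy, hy, hy]
    omega) (S.vec t')
  have := LinearSystem.dotProduct_eq_zero_of_offset h.sign hpos_t' hpos_r' (by omega)
  have := LinearSystem.dotProduct_eq_zero_of_offset h.sign hpos_t' h.pos_x (by omega)
  have := LinearSystem.dotProduct_eq_zero_of_offset h.sign hpos_t' h.pos_r (by omega)
  have := S.dotProduct_of_adj ht'.1.symm
  have := h.far_eq hpos_t' (by omega)
  rw [hy] at hsum
  omega

end IsExtendedTwistedRun

namespace IsFramedRun

variable {V ι : Type*} [Fintype ι] [Finite V] {S : AdmissibleSystem V ι} {s : ℤ} {k : ℕ}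
  {z : ℕ → V} {A M B : ι → ℤ}

theorem left_A (h : IsFramedRun S s k z A M B) : S.vec (z 0) ⬝ᵥ A = -1 := by
  rcases h.terminal_left with hp | hcap
  swap
  · exact h.left_eq_of_cap_left hcap
  rcases h.terminal_right with hq | hcap
  swap
  · exact h.left_eq_of_cap_right hcap
  refine h.left_eq_zero_or.resolve_left fun hA => ?_
  have htwist : IsTwistedRun S s k z A M B _ := ⟨h, hp, hq, hA, rfl⟩
  obtain ⟨x, hx⟩ := htwist.exists_left_step
  obtain ⟨r, hr⟩ := LinearSystem.exists_step h.sign htwist.weight_deg_right.2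
  have hext : IsExtendedTwistedRun S s k z A M B _ _ x r := ⟨htwist, hx, hr, rfl⟩
  rcases hext.terminal_r with hpos | hcap
  · have := hext.adjw_cases
    have := hext.not_adjw_one_one
    omega
  · exact S.not_terminal_of_adj_cap hcap hr.1.symm (.inl hq)

theorem right_A (h : IsFramedRun S s k z A M B) : S.vec (z (k + 1)) ⬝ᵥ A = 0 := by
  have := h.reverse.left_A
  simp only [Nat.sub_zero, dotProduct_neg, h.right.2] at this
  linarith

end IsFramedRun

/-! ### Links and residuals -/

section FrameValues

variable {V ι : Type*} [Fintype ι] {S : AdmissibleSystem V ι} {s : ℤ} {k i j : ℕ} {z : ℕ → V}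
  {e x : ℕ → ι → ℤ} {v : V}

theorem IsRootFrame.dotProduct_eq (he : IsRootFrame k x e) (hi : i ≤ k) (hj : j ≤ k) :
    e i ⬝ᵥ e j = if i = j then 1 else 0 := by
  split_ifs with hij
  · rw [hij, he.dotProduct_self j hj]
  · rcases Nat.lt_or_gt_of_ne hij with hlt | hlt
    · exact he.dotProduct_of_lt i j hlt hj
    · rw [dotProduct_comm, he.dotProduct_of_lt j i hlt hi]

variable [Finite V]

theorem IsRun.dotProduct_frame_eq_zero_of_off (h : IsRun S s k z)
    (he : IsRootFrame k (fun i => S.vec (z (i + 1))) e) (hv : OffRun k z v) (hi : i ≤ k) :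
    S.vec v ⬝ᵥ e i = 0 := by
  rw [h.dotProduct_frame_off he hv i hi, (h.isFramedRun he).off_eq_zero hv]

theorem IsRun.dotProduct_frame (h : IsRun S s k z)
    (he : IsRootFrame k (fun i => S.vec (z (i + 1))) e) (hi : i ≤ k) (hj : j ≤ k + 1) :
    S.vec (z j) ⬝ᵥ e i = if i = j then -1 else if i + 1 = j then 1 else 0 := by
  have hframed := h.isFramedRun he
  rcases Nat.eq_zero_or_pos j with rfl | hj₀
  · rcases Nat.eq_zero_or_pos i with rfl | hi₀
    · simpa using hframed.left_A
    · rw [h.dotProduct_frame_left he i hi₀ hi, hframed.left_A, if_neg (by omega),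
        if_neg (by omega), neg_add_cancel]
  · rcases Nat.eq_or_lt_of_le hj with rfl | hjk
    · rcases Nat.eq_or_lt_of_le hi with rfl | hik
      · rw [h.dotProduct_frame_right_last he, hframed.right_A, if_neg (by omega), if_pos rfl,
          zero_add]
      · rw [h.dotProduct_frame_right he i hik, hframed.right_A, if_neg (by omega),
          if_neg (by omega)]
    · obtain ⟨j, rfl⟩ := Nat.exists_eq_add_of_le' hj₀
      rw [he.eq_sub j (by omega), sub_dotProduct, he.dotProduct_eq (by omega) hi,
        he.dotProduct_eq (by omega) hi]
      split_ifs <;> omega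

end FrameValues

section Links

variable {V ι : Type*} [Fintype ι] {S : AdmissibleSystem V ι} {l : ι} {u v w x y : V}

/-- `l` is a coordinate shared, with opposite signs, by exactly the two vectors at the ends of an
edge `u`–`v` lying on a run. -/
structure IsLink (S : AdmissibleSystem V ι) (u v : V) (l : ι) : Prop where
  not_terminal : ¬ (S.IsTerminal u ∧ S.IsTerminal v)
  mul_eq : S.vec u l * S.vec v l = -1
  apply_eq_zero : ∀ w, w ≠ u → w ≠ v → S.vec w l = 0

theorem IsLink.symm (h : IsLink S u v l) : IsLink S v u l :=
  ⟨fun h' => h.not_terminal h'.symm, by rw [mul_comm, h.mul_eq],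
    fun w hv hu => h.apply_eq_zero w hu hv⟩

theorem IsLink.apply_mul_apply_le_one (h : IsLink S u v l) (w : V) :
    S.vec w l * S.vec w l ≤ 1 := by
  by_cases hu : w = u
  · rcases Int.eq_one_or_neg_one_of_mul_eq_neg_one h.mul_eq with hl | hl <;> simp [hu, hl]
  · by_cases hv : w = v
    · rcases Int.eq_one_or_neg_one_of_mul_eq_neg_one h.symm.mul_eq with hl | hl <;> simp [hv, hl]
    · simp [h.apply_eq_zero w hu hv]

theorem IsLink.apply_mul_apply_nonpos (h : IsLink S u v l) (hxy : x ≠ y) :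
    S.vec x l * S.vec y l ≤ 0 := by
  have hvu := h.symm.mul_eq
  have := h.mul_eq
  have := h.apply_eq_zero
  by_cases hx : x = u ∨ x = v
  · by_cases hy : y = u ∨ y = v
    · rcases hx with rfl | rfl <;> rcases hy with rfl | rfl <;> first | exact absurd rfl hxy | omega
    · simp [h.apply_eq_zero y (by tauto) (by tauto)]
  · simp [h.apply_eq_zero x (by tauto) (by tauto)]

theorem IsLink.eq_of_isLink (h : IsLink S u v l) (h' : IsLink S u w l) : v = w := by
  by_contra hne
  have hwu : w ≠ u := by
    rintro rfl
    have := h'.mul_eq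
    nlinarith
  have := h'.mul_eq
  rw [h.apply_eq_zero w hwu (Ne.symm hne), mul_zero] at this
  omega

theorem IsRun.exists_isLink [Finite V] {s : ℤ} {k i : ℕ} {z : ℕ → V} (h : IsRun S s k z)
    (hi : i ≤ k) : ∃ l, IsLink S (z i) (z (i + 1)) l := by
  obtain ⟨e, he⟩ := h.exists_isRootFrame
  have hunit := he.dotProduct_self i hi
  obtain ⟨l, hl⟩ : ∃ l, e i l ≠ 0 := by
    by_contra! hzero
    simp [funext hzero] at hunit
  have hvals (w : V) : S.vec w ⬝ᵥ e i = S.vec w l * e i l := dotProduct_eq_mul_apply hunit hl _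
  have hleft := h.dotProduct_frame he hi (j := i) (by omega)
  have hright := h.dotProduct_frame he hi (j := i + 1) (by omega)
  rw [hvals, if_pos rfl] at hleft
  rw [hvals, if_neg (by omega), if_pos rfl] at hright
  refine ⟨l, ?_, ?_, fun w hu hv => ?_⟩
  · rintro ⟨hu, hv⟩
    rcases Nat.eq_zero_or_pos i with rfl | hi₀
    · exact h.not_terminal 1 le_rfl h.one_le hv
    · exact h.not_terminal i hi₀ hi hu
  · rcases Int.eq_one_or_neg_one_of_mul_eq_one hright with h₁ | h₁ <;> rw [h₁] at hright ⊢ <;>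
      nlinarith
  · refine (mul_eq_zero.1 (?_ : S.vec w l * e i l = 0)).resolve_right hl
    rw [← hvals]
    by_cases hoff : OffRun k z w
    · exact h.dotProduct_frame_eq_zero_of_off he hoff hi
    · obtain ⟨j, hj, rfl⟩ : ∃ j ≤ k + 1, w = z j := by simpa [OffRun] using hoff
      rw [h.dotProduct_frame he hi hj, if_neg (by rintro rfl; exact hu rfl),
        if_neg (by rintro rfl; exact hv rfl)]

theorem exists_isLink_of_not_terminal [Finite V] (hadj : S.graph.Adj u v) (hv : ¬ S.IsTerminal v) :
    ∃ l, IsLink S u v l := by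
  obtain ⟨k, z, hrun, i, hi₁, hik, rfl⟩ := exists_isRun hv
  obtain ⟨i, rfl⟩ := Nat.exists_eq_add_of_le' hi₁
  by_cases hu : u = z i
  · rw [hu]
    exact hrun.exists_isLink (by omega)
  · obtain rfl : u = z (i + 2) := (hrun.step i (by omega)).next hadj.symm hu |>.unique
      (hrun.step (i + 1) hik)
    obtain ⟨l, hl⟩ := hrun.exists_isLink hik
    exact ⟨l, hl.symm⟩

theorem exists_isLink_or_adjw_pos [Finite V] (hadj : S.graph.Adj u v) :
    (∃ l, IsLink S u v l) ∨ 0 < S.adjw u ∧ 0 < S.adjw v := by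
  by_cases hv : S.IsTerminal v
  · by_cases hu : S.IsTerminal u
    · exact .inr ⟨hu.resolve_right fun hcap => S.not_terminal_of_adj_cap hcap hadj hv,
        hv.resolve_right fun hcap => S.not_terminal_of_adj_cap hcap hadj.symm hu⟩
    · obtain ⟨l, hl⟩ := exists_isLink_of_not_terminal hadj.symm hu
      exact .inl ⟨l, hl.symm⟩
  · exact .inl (exists_isLink_of_not_terminal hadj hv)

end Links

section Residual

open Classical in
/-- The vector of `u` with its link coordinates removed: what is left of `u` once all runs have
been identified. -/
noncomputable def residual {V ι : Type*} [Fintype ι] (S : AdmissibleSystem V ι) (u : V) :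
    ι → ℤ :=
  fun l => if ∃ x y, IsLink S x y l then 0 else S.vec u l

variable {V ι : Type*} [Fintype ι] {S : AdmissibleSystem V ι} {u v w : V} {l : ι}

theorem residual_apply_of_isLink {x y : V} (h : IsLink S x y l) (u : V) : residual S u l = 0 :=
  if_pos ⟨x, y, h⟩

theorem residual_apply_of_not_isLink (h : ¬ ∃ x y, IsLink S x y l) (u : V) :
    residual S u l = S.vec u l :=
  if_neg h

theorem dotProduct_residual (huv : u ≠ v) (hu : S.IsTerminal u) (hv : S.IsTerminal v) :
    residual S u ⬝ᵥ residual S v = S.vec u ⬝ᵥ S.vec v := by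
  refine Finset.sum_congr rfl fun l _ => ?_
  by_cases hl : ∃ x y, IsLink S x y l
  · obtain ⟨x, y, hxy⟩ := hl
    rw [residual_apply_of_isLink hxy, zero_mul, eq_comm, mul_eq_zero]
    by_contra! hne
    have hux : u = x ∨ u = y := by
      by_contra! h
      exact hne.1 (hxy.apply_eq_zero u h.1 h.2)
    have hvx : v = x ∨ v = y := by
      by_contra! h
      exact hne.2 (hxy.apply_eq_zero v h.1 h.2)
    rcases hux with rfl | rfl <;> rcases hvx with rfl | rfl
    exacts [huv rfl, hxy.not_terminal ⟨hu, hv⟩, hxy.not_terminal ⟨hv, hu⟩, huv rfl]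
  · rw [residual_apply_of_not_isLink hl, residual_apply_of_not_isLink hl]

theorem dotProduct_residual_eq_zero_or (huv : u ≠ v) (hu : 0 < S.adjw u) (hv : 0 < S.adjw v) :
    residual S u ⬝ᵥ residual S v = 0 ∧ ¬ S.graph.Adj u v ∨
    residual S u ⬝ᵥ residual S v = -1 ∧ S.graph.Adj u v := by
  rw [dotProduct_residual huv (.inl hu) (.inl hv)]
  exact S.dotProduct_eq_zero_or huv

theorem dotProduct_residual_eq_zero_of_adj (hadj : S.graph.Adj u w) (hu : 0 < S.adjw u)
    (hw : 0 < S.adjw w) (hv : 0 < S.adjw v) (huv : u ≠ v) (hwv : w ≠ v) :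
    residual S w ⬝ᵥ residual S v = 0 :=
  ((dotProduct_residual_eq_zero_or hwv hw hv).resolve_right fun h =>
    huv (S.eq_of_adj_terminal hadj.symm h.2 (.inl hu) (.inl hv))).1

theorem dotProduct_residual_self_add_card_le (T : Finset V) (hT : ∀ y ∈ T, ∃ l, IsLink S u y l) :
    residual S u ⬝ᵥ residual S u + T.card ≤ S.vec u ⬝ᵥ S.vec u := by
  classical
  choose c hc using hT
  set K : Finset ι := T.attach.image fun y => c y.1 y.2 with hK
  have hcard : K.card = T.card := by
    rw [hK, Finset.card_image_of_injective, Finset.card_attach]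
    exact fun y y' hyy' => Subtype.ext ((hc y.1 y.2).eq_of_isLink (hyy' ▸ hc y'.1 y'.2))
  have hterm (l : ι) : residual S u l * residual S u l + (if l ∈ K then 1 else 0) ≤
      S.vec u l * S.vec u l := by
    by_cases hl : ∃ x y, IsLink S x y l
    · obtain ⟨x, y, hxy⟩ := hl
      rw [residual_apply_of_isLink hxy, zero_mul, zero_add]
      split_ifs with hmem
      · obtain ⟨⟨y, hy⟩, -, rfl⟩ := Finset.mem_image.1 hmem
        rcases Int.eq_one_or_neg_one_of_mul_eq_neg_one (hc y hy).mul_eq with h | h <;> simp [h]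
      · exact mul_self_nonneg _
    · rw [residual_apply_of_not_isLink hl, if_neg, add_zero]
      rintro hmem
      obtain ⟨⟨y, hy⟩, -, rfl⟩ := Finset.mem_image.1 hmem
      exact hl ⟨u, y, hc y hy⟩
  calc residual S u ⬝ᵥ residual S u + T.card
      = ∑ l, (residual S u l * residual S u l + if l ∈ K then 1 else 0) := by
        rw [Finset.sum_add_distrib, Finset.sum_boole, Finset.filter_mem_eq_inter,
          Finset.univ_inter, hcard]
        rfl
    _ ≤ S.vec u ⬝ᵥ S.vec u := Finset.sum_le_sum fun l _ => hterm l

variable [Finite V]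

theorem dotProduct_residual_self_le (S : AdmissibleSystem V ι) (u : V) :
    residual S u ⬝ᵥ residual S u ≤ S.adjw u ∨
    residual S u ⬝ᵥ residual S u ≤ S.adjw u + 1 ∧ 0 < S.adjw u ∧
      ∃ u', S.graph.Adj u u' ∧ 0 < S.adjw u' := by
  classical
  have hfin : (S.graph.neighborSet u).Finite := Set.toFinite _
  have hdeg : S.deg u = hfin.toFinset.card := Set.ncard_eq_toFinset_card _ hfin
  have hw := S.adjw_add_deg u
  by_cases hlink : ∀ y, S.graph.Adj u y → ∃ l, IsLink S u y l
  · have := dotProduct_residual_self_add_card_le hfin.toFinset fun y hy =>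
      hlink y (hfin.mem_toFinset.1 hy)
    left
    omega
  · push Not at hlink
    obtain ⟨u', hadj, hno⟩ := hlink
    have hpos := (exists_isLink_or_adjw_pos hadj).resolve_left fun ⟨l, hl⟩ => hno l hl
    have := dotProduct_residual_self_add_card_le (hfin.toFinset.erase u') fun y hy => by
      obtain ⟨hne, hy⟩ := Finset.mem_erase.1 hy
      have hy := hfin.mem_toFinset.1 hy
      exact (exists_isLink_or_adjw_pos hy).resolve_right fun h =>
        hne (S.eq_of_adj_terminal hy hadj (.inl h.2) (.inl hpos.2))
    rw [Finset.card_erase_of_mem (hfin.mem_toFinset.2 hadj), ← hdeg] at this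
    exact .inr ⟨by omega, hpos.1, u', hadj, hpos.2⟩

theorem residual_eq_zero_of_adjw_eq_zero (h : S.adjw u = 0) : residual S u = 0 := by
  refine dotProduct_self_eq_zero.1 (le_antisymm ?_ (dotProduct_self_nonneg_int _))
  have := dotProduct_residual_self_le S u
  omega

theorem residual_apply_mul_self_le_one (S : AdmissibleSystem V ι) (u : V) (l : ι) :
    residual S u l * residual S u l ≤ 1 := by
  classical
  by_contra! hlt
  have hsq := sq_apply_le_dotProduct_self (residual S u) l
  have hfour : 4 ≤ residual S u l ^ 2 := by
    by_contra! h
    rcases eq_zero_or_one_or_neg_one_of_sq_lt_four h with h | h | h <;> simp [h] at hlt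
  have := S.adjw_le_three u
  rcases dotProduct_residual_self_le S u with hle | ⟨hle, hu, u', hadj, hu'⟩
  · omega
  have hself : residual S u l ^ 2 = 4 := by omega
  have hzero := dotProduct_combination₃_eq_zero 1 (-(residual S u l)) 0 (residual S u)
    (Pi.single l 1) 0 (by simp; linarith) (residual S u')
  have hdot := dotProduct_residual hadj.ne' (.inl hu') (.inl hu)
  rw [S.dotProduct_of_adj hadj.symm] at hdot
  rw [hdot] at hzero
  simp only [dotProduct_single, mul_one, dotProduct_zero, mul_zero, add_zero, one_mul] at hzero
  rcases sq_eq_sq_iff_eq_or_eq_neg.1 (hself.trans (by norm_num : (4 : ℤ) = 2 ^ 2)) with h | h <;>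
    rw [h] at hzero <;> omega

theorem dotProduct_residual_self_le_adjw_add_one (S : AdmissibleSystem V ι) (u : V) :
    residual S u ⬝ᵥ residual S u ≤ S.adjw u + 1 := by
  have := dotProduct_residual_self_le S u
  omega

theorem dotProduct_residual_self_le_four (S : AdmissibleSystem V ι) (u : V) :
    residual S u ⬝ᵥ residual S u ≤ 4 := by
  have := dotProduct_residual_self_le_adjw_add_one S u
  have := S.adjw_le_three u
  omega

end Residual

section Overlap

/-- The configuration to be excluded: the residual of `u` is a sum `e + f` of orthogonal unit
vectors, `u` has a neighbour `u'` of positive adjusted weight, and the residual of another vertex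
`v` pairs positively with `e`. -/
structure IsOverlap {V ι : Type*} [Fintype ι] (S : AdmissibleSystem V ι) (u u' v : V)
    (e f : ι → ℤ) : Prop where
  adj : S.graph.Adj u u'
  ne : u ≠ v
  adjw_eq_one : S.adjw u = 1
  adjw_neighbor_pos : 0 < S.adjw u'
  adjw_pos : 0 < S.adjw v
  left_self : e ⬝ᵥ e = 1
  right_self : f ⬝ᵥ f = 1
  left_right : e ⬝ᵥ f = 0
  residual_eq : residual S u = e + f
  dotProduct_left_pos : 0 < residual S v ⬝ᵥ e

namespace IsOverlap

variable {V ι : Type*} [Fintype ι] {S : AdmissibleSystem V ι} {u u' v : V} {e f : ι → ℤ}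

theorem dotProduct_residual (h : IsOverlap S u u' v e f) (w : V) :
    residual S w ⬝ᵥ residual S u = residual S w ⬝ᵥ e + residual S w ⬝ᵥ f := by
  rw [h.residual_eq, dotProduct_add]

theorem dotProduct_neighbor (h : IsOverlap S u u' v e f) :
    residual S u' ⬝ᵥ e + residual S u' ⬝ᵥ f = -1 := by
  have hu : 0 < S.adjw u := by rw [h.adjw_eq_one]; exact one_pos
  rw [← h.dotProduct_residual, LensPaper.dotProduct_residual h.adj.ne' (.inl h.adjw_neighbor_pos)
    (.inl hu), S.dotProduct_of_adj h.adj.symm]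

variable [Finite V]

theorem dotProduct_pair (h : IsOverlap S u u' v e f) :
    residual S v ⬝ᵥ e = 1 ∧ residual S v ⬝ᵥ f = -1 ∧ ¬ S.graph.Adj u v := by
  have hsum := h.dotProduct_residual v
  have hsq := sq_dotProduct_add_sq_dotProduct_le h.left_self h.right_self h.left_right
    (residual S v)
  have hfour := dotProduct_residual_self_le_four S v
  have hpos := h.dotProduct_left_pos
  rcases dotProduct_residual_eq_zero_or h.ne (by rw [h.adjw_eq_one]; exact one_pos) h.adjw_pos with
    ⟨hzero, hadj⟩ | ⟨hneg, -⟩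
  · rw [dotProduct_comm, hzero] at hsum
    have hf : residual S v ⬝ᵥ f = -(residual S v ⬝ᵥ e) := by omega
    have he : residual S v ⬝ᵥ e = 1 := by
      rw [hf] at hsq
      nlinarith
    exact ⟨he, by omega, hadj⟩
  · rw [dotProduct_comm, hneg] at hsum
    have hf : residual S v ⬝ᵥ f = -1 - residual S v ⬝ᵥ e := by omega
    rw [hf] at hsq
    nlinarith

theorem neighbor_ne (h : IsOverlap S u u' v e f) : u' ≠ v := by
  rintro rfl
  exact h.dotProduct_pair.2.2 h.adj

theorem dotProduct_neighbor_residual (h : IsOverlap S u u' v e f) :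
    residual S u' ⬝ᵥ residual S v = 0 :=
  dotProduct_residual_eq_zero_of_adj h.adj (by rw [h.adjw_eq_one]; exact one_pos)
    h.adjw_neighbor_pos h.adjw_pos h.ne h.neighbor_ne

theorem three_le (h : IsOverlap S u u' v e f) : 3 ≤ residual S v ⬝ᵥ residual S v := by
  by_contra! hlt
  obtain ⟨he, hf, -⟩ := h.dotProduct_pair
  have hzero := dotProduct_combination₃_eq_zero 1 (-1) 1 (residual S v) e f
    (by rw [he, hf, h.left_self, h.right_self, h.left_right]; omega) (residual S u')
  rw [h.dotProduct_neighbor_residual] at hzero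
  have := h.dotProduct_neighbor
  omega

theorem adjw_neighbor_eq_one (h : IsOverlap S u u' v e f) : S.adjw u' = 1 := by
  have := h.three_le
  have := dotProduct_residual_self_le_adjw_add_one S v
  have := S.adjw_le_one_of_ne (y := v) (by omega) h.neighbor_ne
  have := h.adjw_neighbor_pos
  omega

theorem exists_adj_of_pair (h : IsOverlap S u u' v e f) :
    residual S v ⬝ᵥ residual S v = 3 ∧ ∃ v', S.graph.Adj v v' ∧ 0 < S.adjw v' := by
  have hthree := h.three_le
  have hle := S.adjw_le_three v
  have hne : S.adjw v ≠ 3 := fun h₃ =>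
    S.not_adj_one_one h₃ h.adj h.adjw_eq_one h.adjw_neighbor_eq_one
  rcases dotProduct_residual_self_le S v with hle' | ⟨hle', -, hv'⟩
  · omega
  · exact ⟨by omega, hv'⟩

theorem dotProduct_neighbor_eq (h : IsOverlap S u u' v e f) :
    residual S u' ⬝ᵥ e = -1 ∧ residual S u' ⬝ᵥ f = 0 ∨
    residual S u' ⬝ᵥ e = 0 ∧ residual S u' ⬝ᵥ f = -1 := by
  have htwo := dotProduct_residual_self_le_adjw_add_one S u'
  rw [h.adjw_neighbor_eq_one] at htwo
  have hsum := h.dotProduct_neighbor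
  have hf : residual S u' ⬝ᵥ f = -1 - residual S u' ⬝ᵥ e := by omega
  have hsq := sq_dotProduct_add_sq_dotProduct_le h.left_self h.right_self h.left_right
    (residual S u')
  rw [hf] at hsq
  have : -1 ≤ residual S u' ⬝ᵥ e := by nlinarith
  have : residual S u' ⬝ᵥ e ≤ 0 := by nlinarith
  omega

theorem dotProduct_of_adj (h : IsOverlap S u u' v e f) {v' : V} (hadj : S.graph.Adj v v')
    (hv' : 0 < S.adjw v') :
    residual S v' ⬝ᵥ residual S u' = 0 ∧ residual S v' ⬝ᵥ e + residual S v' ⬝ᵥ f = 0 ∧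
      residual S v' ⬝ᵥ residual S v = -1 := by
  have hu : 0 < S.adjw u := by rw [h.adjw_eq_one]; exact one_pos
  refine ⟨?_, ?_, ?_⟩
  · refine dotProduct_residual_eq_zero_of_adj hadj h.adjw_pos hv' h.adjw_neighbor_pos
      h.neighbor_ne.symm ?_
    rintro rfl
    exact h.ne (S.eq_of_adj_terminal h.adj.symm hadj.symm (.inl hu) (.inl h.adjw_pos))
  · rw [← h.dotProduct_residual]
    refine dotProduct_residual_eq_zero_of_adj hadj h.adjw_pos hv' hu h.ne.symm ?_
    rintro rfl
    exact h.dotProduct_pair.2.2 hadj.symm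
  · rw [LensPaper.dotProduct_residual hadj.ne' (.inl hv') (.inl h.adjw_pos),
      S.dotProduct_of_adj hadj.symm]

end IsOverlap

-- The residual of `v` is `e - f + h` for a unit vector `h`, and that of the neighbour of `u` is
-- `h - e` or `-h - f`; pairing this relation with a neighbour of `v` fails modulo three.
theorem not_isOverlap {V ι : Type*} [Fintype ι] [Finite V] {S : AdmissibleSystem V ι}
    {u u' v : V} {e f : ι → ℤ} : ¬ IsOverlap S u u' v e f := by
  intro h
  obtain ⟨hthree, v', hadj, hv'⟩ := h.exists_adj_of_pair
  obtain ⟨hve, hvf, -⟩ := h.dotProduct_pair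
  have hu'v := h.dotProduct_neighbor_residual
  have htwo := dotProduct_residual_self_le_adjw_add_one S u'
  rw [h.adjw_neighbor_eq_one] at htwo
  obtain ⟨hv'u', hv'u, hv'v⟩ := h.dotProduct_of_adj hadj hv'
  rcases h.dotProduct_neighbor_eq with ⟨he, hf⟩ | ⟨he, hf⟩
  · have := dotProduct_combination₄_eq_zero 1 2 (-1) (-1) (residual S u') e (residual S v) f
      (by
        rw [he, hf, hu'v, dotProduct_comm e (residual S v), hve, hvf, hthree, h.left_self,
          h.right_self, h.left_right]
        omega) (residual S v')
    omega
  · have := dotProduct_combination₄_eq_zero 1 (-1) 1 2 (residual S u') e (residual S v) f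
      (by
        rw [he, hf, hu'v, dotProduct_comm e (residual S v), hve, hvf, hthree, h.left_self,
          h.right_self, h.left_right]
        omega) (residual S v')
    omega

end Overlap

section Standard

variable {V ι : Type*} [Fintype ι] [Finite V] {S : AdmissibleSystem V ι} {u v : V}

theorem residual_mul_residual_nonpos_of_adjw_eq_one (hu : S.adjw u = 1) (hv : 0 < S.adjw v)
    (hne : u ≠ v) (l : ι) : residual S u l * residual S v l ≤ 0 := by
  by_contra! hpos
  have hul : residual S u l ≠ 0 := by
    intro h
    simp [h] at hpos
  have hge := sq_apply_le_dotProduct_self (residual S u) l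
  have : 0 < residual S u l ^ 2 := by positivity
  by_cases hself : residual S u ⬝ᵥ residual S u = 1
  · have hdot := dotProduct_residual_eq_zero_or hne (by omega) hv
    have := dotProduct_eq_mul_apply hself hul (residual S v)
    rw [dotProduct_comm, mul_comm] at this
    omega
  · obtain ⟨hle, -, u', hadj, hu'⟩ := (dotProduct_residual_self_le S u).resolve_left (by omega)
    obtain ⟨e, f, hee, hff, hef, heq, hel⟩ := exists_eq_add_of_apply_ne_zero (by omega) hul
    refine not_isOverlap ⟨hadj, hne, hu, hu', hv, hee, hff, hef, heq, ?_⟩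
    rwa [dotProduct_eq_mul_apply hee (hel ▸ hul), hel, mul_comm]

theorem residual_mul_residual_nonpos (S : AdmissibleSystem V ι) (hne : u ≠ v) (l : ι) :
    residual S u l * residual S v l ≤ 0 := by
  have := S.adjw_nonneg u
  have := S.adjw_nonneg v
  by_cases hu₀ : S.adjw u = 0
  · simp [residual_eq_zero_of_adjw_eq_zero hu₀]
  by_cases hv₀ : S.adjw v = 0
  · simp [residual_eq_zero_of_adjw_eq_zero hv₀]
  by_cases hu : S.adjw u = 1
  · exact residual_mul_residual_nonpos_of_adjw_eq_one hu (by omega) hne l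
  · have := S.adjw_le_one_of_ne (y := u) (by omega) hne.symm
    rw [mul_comm]
    exact residual_mul_residual_nonpos_of_adjw_eq_one (by omega) (by omega) hne.symm l

theorem AdmissibleSystem.vec_mul_vec_nonpos (S : AdmissibleSystem V ι) (hne : u ≠ v) (l : ι) :
    S.vec u l * S.vec v l ≤ 0 := by
  by_cases hl : ∃ x y, IsLink S x y l
  · obtain ⟨x, y, hxy⟩ := hl
    exact hxy.apply_mul_apply_nonpos hne
  · rw [← residual_apply_of_not_isLink hl, ← residual_apply_of_not_isLink hl]
    exact residual_mul_residual_nonpos S hne l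

theorem AdmissibleSystem.vec_mul_self_le_one (S : AdmissibleSystem V ι) (u : V) (l : ι) :
    S.vec u l * S.vec u l ≤ 1 := by
  by_cases hl : ∃ x y, IsLink S x y l
  · obtain ⟨x, y, hxy⟩ := hl
    exact hxy.apply_mul_apply_le_one u
  · rw [← residual_apply_of_not_isLink hl]
    exact residual_apply_mul_self_le_one S u l

end Standard

/-! ### Coordinates on paths -/

section PathCoordinate

variable {V : Type*} {G : SimpleGraph V} {a b r u v : V}

theorem eq_of_dist_eq_dist_add_one (hG : G.IsAcyclic) (ha : G.Adj a v) (hb : G.Adj b v)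
    (hr : G.Reachable r v) (hda : G.dist r v = G.dist r a + 1)
    (hdb : G.dist r v = G.dist r b + 1) : a = b := by
  obtain ⟨p, hp⟩ := (hr.trans ha.symm.reachable).exists_walk_length_eq_dist
  obtain ⟨q, hq⟩ := (hr.trans hb.symm.reachable).exists_walk_length_eq_dist
  have hpath : (p.concat ha).IsPath :=
    SimpleGraph.Walk.isPath_of_length_eq_dist _ (by simp [hp, hda])
  have hpath' : (q.concat hb).IsPath :=
    SimpleGraph.Walk.isPath_of_length_eq_dist _ (by simp [hq, hdb])
  have hpq : p.concat ha = q.concat hb :=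
    congrArg Subtype.val ((hG.subsingleton_path r v).elim ⟨_, hpath⟩ ⟨_, hpath'⟩)
  simpa using congrArg SimpleGraph.Walk.penultimate hpq

theorem exists_adj_dist_eq_dist_add_one (hr : G.Reachable r v) (hne : r ≠ v) :
    ∃ a, G.Adj a v ∧ G.dist r v = G.dist r a + 1 := by
  obtain ⟨p, hp⟩ := hr.exists_walk_length_eq_dist
  have hnil : ¬ p.Nil := fun h => hne h.eq
  have hadj := p.adj_penultimate hnil
  refine ⟨p.penultimate, hadj, ?_⟩
  have hle := SimpleGraph.dist_le p.dropLast
  have hlen : p.dropLast.length + 1 = p.length := by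
    rw [SimpleGraph.Walk.length_dropLast]
    have := SimpleGraph.Walk.not_nil_iff_lt_length.1 hnil
    omega
  have := hadj.diff_dist_adj (u := r)
  omega

theorem exists_reachable_forall_dist_le [Finite V] (G : SimpleGraph V) (b : V) :
    ∃ r, G.Reachable b r ∧ ∀ v, G.Reachable b v → G.dist b v ≤ G.dist b r :=
  Set.exists_max_image {v | G.Reachable b v} (G.dist b) (Set.toFinite _) ⟨b, .refl _⟩

theorem eq_of_adj_farthest (hG : G.IsAcyclic) (hr : G.Reachable b r)
    (hmax : ∀ v, G.Reachable b v → G.dist b v ≤ G.dist b r) (hu : G.Adj u r) (hv : G.Adj v r) :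
    u = v := by
  have hdist (w : V) (hw : G.Adj w r) : G.dist b r = G.dist b w + 1 := by
    have := hmax w (hr.trans hw.symm.reachable)
    have := hG.dist_eq_dist_add_one_of_adj_of_reachable b hw.symm hr
    omega
  exact eq_of_dist_eq_dist_add_one hG hu hv hr (hdist u hu) (hdist v hv)

theorem eq_of_adj_of_neighborSet_ncard_le_two [Finite V] (hdeg : (G.neighborSet u).ncard ≤ 2)
    {v' : V} (ha : G.Adj u a) (hv : G.Adj u v) (hv' : G.Adj u v') (hva : v ≠ a) (hva' : v' ≠ a) :
    v = v' := by
  by_contra hne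
  have : ({a, v, v'} : Set V).ncard = 3 :=
    Set.ncard_eq_three.2 ⟨a, v, v', hva.symm, hva'.symm, hne, rfl⟩
  have := Set.ncard_le_ncard (s := {a, v, v'}) (t := G.neighborSet u)
    (by rintro x (rfl | rfl | rfl) <;> assumption)
  omega

-- The coordinate of a vertex is its distance from an end of its component.
theorem exists_isPathCoordinate [Finite V] (hG : G.IsAcyclic)
    (hdeg : ∀ v, (G.neighborSet v).ncard ≤ 2) : ∃ pos, IsPathCoordinate G pos := by
  choose root hreach hmax using fun c : G.ConnectedComponent =>
    exists_reachable_forall_dist_le G c.out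
  have hroot (v : V) : G.Reachable (root (G.connectedComponentMk v)) v :=
    (hreach _).symm.trans (SimpleGraph.ConnectedComponent.exact (Quot.out_eq _))
  refine ⟨fun v => G.dist (root (G.connectedComponentMk v)) v, fun u v hadj => ?_,
    fun u v v' hv hv' heq => ?_⟩
  · rw [← SimpleGraph.ConnectedComponent.connectedComponentMk_eq_of_adj hadj]
    have := hG.dist_eq_dist_add_one_of_adj_of_reachable _ hadj (hroot u)
    omega
  · simp only [← SimpleGraph.ConnectedComponent.connectedComponentMk_eq_of_adj hv,
      ← SimpleGraph.ConnectedComponent.connectedComponentMk_eq_of_adj hv', Nat.cast_inj] at heq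
    by_cases hru : root (G.connectedComponentMk u) = u
    · have hend := eq_of_adj_farthest hG (hreach (G.connectedComponentMk u)) (hmax _)
        (u := v) (v := v')
      rw [hru] at hend
      exact hend hv.symm hv'.symm
    obtain ⟨a, ha, hdist⟩ := exists_adj_dist_eq_dist_add_one (hroot u) hru
    rcases hG.dist_eq_dist_add_one_of_adj_of_reachable _ hv (hroot u) with h | h
    · exact eq_of_dist_eq_dist_add_one hG hv.symm hv'.symm (hroot u) h (heq ▸ h)
    · refine eq_of_adj_of_neighborSet_ncard_le_two (hdeg u) ha.symm hv hv' ?_ ?_ <;>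
      · rintro rfl
        omega

end PathCoordinate

/-! ### Cutting along clean screws -/

namespace Config

section CleanCut

/-- A set `O` of vertices that can be cut off from the rest of the configuration: `O` contains no
bad vertex, each edge leaving `O` starts at the end of two consecutive vertices of `O` of adjusted
weight zero, and the vector at that end has a coordinate `±1` seen by no other vertex of `O`. -/
structure IsCleanCut (C : Config) {N : ℕ} (φ : C.V → Fin N → ℤ) (O : Set C.V) : Prop where
  not_bad : ∀ x ∈ O, ¬ C.IsBad x
  adjw_eq_zero : ∀ ⦃x y⦄, x ∈ O → y ∉ O → C.graph.Adj x y → C.adjw x = 0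
  adjw_neighbor : ∀ ⦃x y x'⦄, x ∈ O → y ∉ O → C.graph.Adj x y → C.graph.Adj x x' → x' ≠ y →
    x' ∈ O ∧ C.adjw x' = 0
  eq_of_adj : ∀ ⦃x x' y⦄, x ∈ O → x' ∈ O → y ∉ O → C.graph.Adj x y → C.graph.Adj x' y → x = x'
  exists_screw : ∀ ⦃x y⦄, x ∈ O → y ∉ O → C.graph.Adj x y →
    ∃ e, φ x e * φ x e = 1 ∧ ∀ u ∈ O, u ≠ x → φ u e = 0

/-- The set `O` together with the vertices adjacent to it. -/
abbrev Collar (C : Config) (O : Set C.V) : Type := {y // y ∈ O ∨ ∃ x ∈ O, C.graph.Adj x y}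

/-- The graph on the collar of `O` whose edges are those with an end in `O`, so that vertices
outside `O` keep no other neighbours. -/
def collarGraph (C : Config) (O : Set C.V) : SimpleGraph (C.Collar O) where
  Adj u v := C.graph.Adj u v ∧ (u.1 ∈ O ∨ v.1 ∈ O)
  symm := ⟨fun _ _ h => ⟨h.1.symm, h.2.symm⟩⟩
  loopless := ⟨fun _ h => h.1.ne rfl⟩

variable {C : Config} {N : ℕ} {φ : C.V → Fin N → ℤ} {O : Set C.V}

theorem IsEmbedding.dotProduct_self (hφ : C.IsEmbedding N φ) (u : C.V) : φ u ⬝ᵥ φ u = C.w u :=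
  (hφ u u).trans (if_pos rfl)

theorem IsEmbedding.dotProduct_of_adj (hφ : C.IsEmbedding N φ) {u v : C.V}
    (h : C.graph.Adj u v) : φ u ⬝ᵥ φ v = -1 :=
  (hφ u v).trans (by rw [if_neg h.ne, if_pos h])

theorem IsEmbedding.dotProduct_of_not_adj (hφ : C.IsEmbedding N φ) {u v : C.V} (hne : u ≠ v)
    (h : ¬ C.graph.Adj u v) : φ u ⬝ᵥ φ v = 0 :=
  (hφ u v).trans (by rw [if_neg hne, if_neg h])

/-- The edge from `x ∈ O` to `y ∉ O` is recorded by the coordinate `e`, which vanishes on `O`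
except at `x`. -/
structure IsCapAt (φ : C.V → Fin N → ℤ) (O : Set C.V) (y x : C.V) (e : Fin N) : Prop where
  mem : x ∈ O
  notMem : y ∉ O
  adj : C.graph.Adj x y
  mul_self : φ x e * φ x e = 1
  apply_eq_zero : ∀ u ∈ O, u ≠ x → φ u e = 0

theorem IsCleanCut.exists_isCapAt (h : C.IsCleanCut φ O) (y : C.Collar O) (hy : y.1 ∉ O) :
    ∃ x e, IsCapAt φ O y.1 x e := by
  obtain ⟨x, hx, hadj⟩ := y.2.resolve_left hy
  obtain ⟨e, hsq, hclean⟩ := h.exists_screw hx hy hadj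
  exact ⟨x, e, hx, hy, hadj, hsq, hclean⟩

theorem IsCapAt.dotProduct_single {x y u : C.V} {e : Fin N} (hcap : IsCapAt φ O y x e)
    (h : C.IsCleanCut φ O) (hu : u ∈ O) :
    φ u ⬝ᵥ Pi.single e (-φ x e) = if C.graph.Adj u y then -1 else 0 := by
  rw [_root_.dotProduct_single, mul_neg]
  split_ifs with huy
  · rw [h.eq_of_adj hu hcap.mem hcap.notMem huy hcap.adj, hcap.mul_self]
  · rw [hcap.apply_eq_zero u hu fun heq => huy (heq ▸ hcap.adj), zero_mul, neg_zero]

theorem IsCapAt.coordinate_ne {x x' y y' : C.V} {e e' : Fin N} (hcap : IsCapAt φ O y x e)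
    (hcap' : IsCapAt φ O y' x' e') (h : C.IsCleanCut φ O) (hne : y ≠ y') : e ≠ e' := by
  rintro rfl
  obtain rfl : x' = x := by
    by_contra hxx'
    have := hcap'.mul_self
    rw [hcap.apply_eq_zero x' hcap'.mem hxx'] at this
    omega
  exact hcap'.notMem (h.adjw_neighbor hcap.mem hcap.notMem hcap.adj hcap'.adj hne.symm).1

/-- A linear system on the collar of `O` that restricts to `φ` on `O` and has caps elsewhere. -/
structure IsCollarSystem (φ : C.V → Fin N → ℤ) (O : Set C.V)
    (S : LinearSystem (C.Collar O) (Fin N)) : Prop where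
  graph_eq : S.graph = C.collarGraph O
  vec_of_mem : ∀ u, u.1 ∈ O → S.vec u = φ u
  isCap_of_notMem : ∀ u, u.1 ∉ O → S.IsCap u

theorem isPathCoordinate_collarGraph {pos : C.V → ℤ} (hpos : IsPathCoordinate C.graph pos)
    (O : Set C.V) : IsPathCoordinate (C.collarGraph O) fun u => pos u :=
  ⟨fun _ _ h => hpos.pos_of_adj h.1,
    fun _ _ _ h h' heq => Subtype.ext (hpos.eq_of_pos_eq h.1 h'.1 heq)⟩

theorem IsCleanCut.exists_isCollarSystem (h : C.IsCleanCut φ O) (hlin : C.IsLinear)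
    (hφ : C.IsEmbedding N φ) : ∃ S : LinearSystem (C.Collar O) (Fin N), IsCollarSystem φ O S := by
  classical
  obtain ⟨pos, hpos⟩ := exists_isPathCoordinate hlin.2 hlin.1
  choose x e hcap using h.exists_isCapAt
  let vec : C.Collar O → Fin N → ℤ := fun y =>
    if hy : y.1 ∈ O then φ y else Pi.single (e y hy) (-φ (x y hy) (e y hy))
  have hin (u : C.Collar O) (hu : u.1 ∈ O) : vec u = φ u := dif_pos hu
  have hout (u : C.Collar O) (hu : u.1 ∉ O) :
      vec u = Pi.single (e u hu) (-φ (x u hu) (e u hu)) := dif_neg hu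
  have hmixed {u v : C.Collar O} (hu : u.1 ∈ O) (hv : v.1 ∉ O) :
      vec u ⬝ᵥ vec v = if C.graph.Adj u v then -1 else 0 := by
    rw [hin u hu, hout v hv, (hcap v hv).dotProduct_single h hu]
  have hcaps {u v : C.Collar O} (hu : u.1 ∉ O) (hv : v.1 ∉ O) (hne : u ≠ v) :
      vec u ⬝ᵥ vec v = 0 := by
    rw [hout u hu, hout v hv, dotProduct_single, Pi.single_eq_of_ne, zero_mul]
    exact (hcap v hv).coordinate_ne (hcap u hu) h fun heq => hne (Subtype.ext heq.symm)
  refine ⟨⟨C.collarGraph O, fun u => pos u, vec, isPathCoordinate_collarGraph hpos O,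
    fun u v hadj => ?_, fun u v hne hadj => ?_⟩, rfl, hin, fun u hu => ?_⟩
  · by_cases hu : u.1 ∈ O <;> by_cases hv : v.1 ∈ O
    · rw [hin u hu, hin v hv, hφ.dotProduct_of_adj hadj.1]
    · rw [hmixed hu hv, if_pos hadj.1]
    · rw [dotProduct_comm, hmixed hv hu, if_pos hadj.1.symm]
    · exact absurd hadj.2 (by tauto)
  · by_cases hu : u.1 ∈ O <;> by_cases hv : v.1 ∈ O
    · rw [hin u hu, hin v hv, hφ.dotProduct_of_not_adj (fun heq => hne (Subtype.ext heq))
        fun h' => hadj ⟨h', .inl hu⟩]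
    · rw [hmixed hu hv, if_neg fun h' => hadj ⟨h', .inl hu⟩]
    · rw [dotProduct_comm, hmixed hv hu, if_neg fun h' => hadj ⟨h'.symm, .inr hv⟩]
    · exact hcaps hu hv hne
  · change vec u ⬝ᵥ vec u = 1
    rw [hout u hu, dotProduct_single, Pi.single_eq_same, neg_mul_neg, (hcap u hu).mul_self]

section CollarSystem

variable {S : LinearSystem (C.Collar O) (Fin N)} {u v : C.Collar O}

theorem IsCollarSystem.adj_iff (hS : IsCollarSystem φ O S) :
    S.graph.Adj u v ↔ C.graph.Adj u v ∧ (u.1 ∈ O ∨ v.1 ∈ O) := by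
  rw [hS.graph_eq]
  rfl

theorem IsCollarSystem.adjw_of_mem (hS : IsCollarSystem φ O S) (hφ : C.IsEmbedding N φ)
    (hu : u.1 ∈ O) : S.adjw u = C.adjw u := by
  have himage : Subtype.val '' S.graph.neighborSet u = C.graph.neighborSet u := by
    ext y
    constructor
    · rintro ⟨v, hv, rfl⟩
      exact (hS.adj_iff.1 hv).1
    · exact fun hy => ⟨⟨y, .inr ⟨u, hu, hy⟩⟩, hS.adj_iff.2 ⟨hy, .inl hu⟩, rfl⟩
  rw [LinearSystem.adjw, adjw, LinearSystem.weight, LinearSystem.deg, deg, ← himage,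
    Set.ncard_image_of_injective _ Subtype.val_injective, hS.vec_of_mem u hu, hφ.dotProduct_self]

theorem IsCollarSystem.deg_of_notMem (hS : IsCollarSystem φ O S) (h : C.IsCleanCut φ O)
    (hu : u.1 ∉ O) : S.deg u = 1 := by
  obtain ⟨x, hx, hadj⟩ := u.2.resolve_left hu
  rw [LinearSystem.deg, Set.ncard_eq_one]
  refine ⟨⟨x, .inl hx⟩, Set.eq_singleton_iff_unique_mem.2
    ⟨hS.adj_iff.2 ⟨hadj.symm, .inr hx⟩, fun y hy => Subtype.ext ?_⟩⟩
  have hy := hS.adj_iff.1 hy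
  exact h.eq_of_adj (hy.2.resolve_left hu) hx hu hy.1.symm hadj

theorem IsCollarSystem.adjw_of_notMem (hS : IsCollarSystem φ O S) (h : C.IsCleanCut φ O)
    (hu : u.1 ∉ O) : S.adjw u = 0 := by
  rw [LinearSystem.adjw, hS.isCap_of_notMem u hu, hS.deg_of_notMem h hu]
  norm_num

theorem IsCollarSystem.mem_of_adjw_ne_zero (hS : IsCollarSystem φ O S) (h : C.IsCleanCut φ O)
    (hu : S.adjw u ≠ 0) : u.1 ∈ O := by
  by_contra hmem
  exact hu (hS.adjw_of_notMem h hmem)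

theorem IsCollarSystem.isCap_iff (hS : IsCollarSystem φ O S) (hφ : C.IsEmbedding N φ)
    (hwc : C.WorkingConditions) : S.IsCap u ↔ u.1 ∉ O := by
  refine ⟨fun hcap hu => ?_, hS.isCap_of_notMem u⟩
  have := hwc.1 u
  rw [LinearSystem.IsCap, LinearSystem.weight, hS.vec_of_mem u hu, hφ.dotProduct_self] at hcap
  omega

theorem IsCollarSystem.isTerminal_iff_of_mem (hS : IsCollarSystem φ O S)
    (hφ : C.IsEmbedding N φ) (hwc : C.WorkingConditions) (hu : u.1 ∈ O) :
    S.IsTerminal u ↔ 0 < C.adjw u := by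
  rw [LinearSystem.IsTerminal, hS.isCap_iff hφ hwc, hS.adjw_of_mem hφ hu]
  tauto

theorem IsCollarSystem.eq_of_adj_isTerminal (hS : IsCollarSystem φ O S) (h : C.IsCleanCut φ O)
    (hφ : C.IsEmbedding N φ) (hwc : C.WorkingConditions) {b : C.Collar O}
    (hbu : S.graph.Adj b u) (hbv : S.graph.Adj b v) (hu : S.IsTerminal u)
    (hv : S.IsTerminal v) : u = v := by
  rw [hS.adj_iff] at hbu hbv
  by_cases hb : b.1 ∈ O
  · by_contra hne
    have hval : u.1 ≠ v.1 := fun heq => hne (Subtype.ext heq)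
    by_cases hu' : u.1 ∈ O
    · by_cases hv' : v.1 ∈ O
      · exact h.not_bad b hb ⟨u, v, hval, hbu.1, hbv.1,
          (hS.isTerminal_iff_of_mem hφ hwc hu').1 hu, (hS.isTerminal_iff_of_mem hφ hwc hv').1 hv⟩
      · have := (h.adjw_neighbor hb hv' hbv.1 hbu.1 hval).2
        have := (hS.isTerminal_iff_of_mem hφ hwc hu').1 hu
        omega
    · obtain ⟨hv', hzero⟩ := h.adjw_neighbor hb hu' hbu.1 hbv.1 hval.symm
      have := (hS.isTerminal_iff_of_mem hφ hwc hv').1 hv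
      omega
  · exact Subtype.ext (h.eq_of_adj (hbu.2.resolve_left hb) (hbv.2.resolve_left hb) hb
      hbu.1.symm hbv.1.symm)

theorem hasPattern_map_adjw {l : List C.V} (hne : l ≠ []) (hchain : l.IsChain C.graph.Adj)
    (hnodup : l.Nodup) : C.HasPattern (l.map C.adjw) := by
  have hlen : 0 < l.length := List.length_pos_of_ne_nil hne
  refine ⟨l.length - 1, fun i => l.getD i (l.head hne), ⟨fun i hi j hj hij => ?_, fun i hi => ?_⟩,
    by rw [List.length_map]; omega, fun i => ?_⟩
  · dsimp only at hij
    rw [List.getD_eq_getElem _ _ (by omega), List.getD_eq_getElem _ _ (by omega)] at hij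
    exact (hnodup.getElem_inj_iff).1 hij
  · dsimp only
    rw [List.getD_eq_getElem _ _ (by omega), List.getD_eq_getElem _ _ (by omega)]
    exact List.isChain_iff_getElem.1 hchain i (by omega)
  · have hi : (i : ℕ) < l.length := i.2.trans_eq (List.length_map _)
    dsimp only
    rw [List.getD_eq_getElem _ _ hi, List.get_eq_getElem, List.getElem_map]

theorem IsCollarSystem.not_forbidden (hS : IsCollarSystem φ O S) (hφ : C.IsEmbedding N φ)
    (hwc : C.WorkingConditions) {s : ℤ} {l : List (C.Collar O)} (hl : l.IsChain (S.Step s))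
    (hcap : ∀ v ∈ l, ¬ S.IsCap v) : l.map S.adjw ∉ forbiddenPatterns := by
  intro hmem
  have hne : l ≠ [] := by
    rintro rfl
    simp [forbiddenPatterns] at hmem
  have hlt : l.IsChain fun u v => s * S.pos u < s * S.pos v := hl.imp fun u v h => by
    rcases h.sign with rfl | rfl <;> linarith [h.2]
  have : IsTrans (C.Collar O) fun u v => s * S.pos u < s * S.pos v := ⟨fun _ _ _ => lt_trans⟩
  have hnodup : l.Nodup := hlt.pairwise.imp fun h heq => (heq ▸ h).ne rfl
  have hadjw : l.map S.adjw = (l.map Subtype.val).map C.adjw := by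
    rw [List.map_map]
    exact List.map_congr_left fun v hv =>
      hS.adjw_of_mem hφ (not_not.1 (mt (hS.isCap_iff hφ hwc).2 (hcap v hv)))
  rw [hadjw] at hmem
  refine hwc.2.2.2.2.2.2.1 _ hmem (hasPattern_map_adjw (mt List.map_eq_nil_iff.1 hne) ?_ ?_)
  · exact List.isChain_map_of_isChain _ (fun u v h => (hS.adj_iff.1 h.1).1) hl
  · exact hnodup.map Subtype.val_injective

theorem IsCollarSystem.exists_admissibleSystem (hS : IsCollarSystem φ O S)
    (h : C.IsCleanCut φ O) (hφ : C.IsEmbedding N φ) (hwc : C.WorkingConditions) :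
    ∃ S' : AdmissibleSystem (C.Collar O) (Fin N), S'.toLinearSystem = S := by
  have hadjw {u : C.Collar O} (hu : S.adjw u ≠ 0) : S.adjw u = C.adjw u :=
    hS.adjw_of_mem hφ (hS.mem_of_adjw_ne_zero h hu)
  have hcap {u : C.Collar O} : S.IsCap u ↔ u.1 ∉ O := hS.isCap_iff hφ hwc
  refine ⟨⟨S, fun u => ?_, fun u => ?_, fun u v hu hv => ?_,
    fun b u v => hS.eq_of_adj_isTerminal h hφ hwc, fun c u hc hcu => ?_,
    fun t u v ht huv hu hv => ?_, fun s l => hS.not_forbidden hφ hwc⟩, rfl⟩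
  · by_cases hu : u.1 ∈ O
    · left
      rw [LinearSystem.weight, hS.vec_of_mem u hu, hφ.dotProduct_self]
      exact hwc.1 u
    · exact .inr ⟨hcap.2 hu, hS.deg_of_notMem h hu⟩
  · by_cases hu : S.adjw u = 0
    · omega
    · rw [hadjw hu]
      exact hwc.2.1 u
  · rw [hadjw (by omega)] at hu hv
    exact Subtype.ext (hwc.2.2.1 _ _ hu hv)
  · rw [hcap] at hc
    rw [hS.adj_iff] at hcu
    have hu := hcu.2.resolve_left hc
    rw [hS.isTerminal_iff_of_mem hφ hwc hu, h.adjw_eq_zero hu hc hcu.1.symm]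
    exact lt_irrefl 0
  · rw [hadjw (by omega)] at ht hu hv
    exact hwc.2.2.2.2.1 ⟨t, ht⟩ u v (hS.adj_iff.1 huv).1 hu hv

end CollarSystem

theorem IsEmbedding.isStandardOn_of_mul_nonpos (hφ : C.IsEmbedding N φ)
    (hself : ∀ u ∈ O, ∀ i, φ u i * φ u i ≤ 1)
    (hmul : ∀ u ∈ O, ∀ v ∈ O, u ≠ v → ∀ i, φ u i * φ v i ≤ 0) : C.IsStandardOn N φ O := by
  have hval (u : C.V) (hu : u ∈ O) (i : Fin N) : φ u i = 0 ∨ φ u i = 1 ∨ φ u i = -1 :=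
    eq_zero_or_one_or_neg_one_of_sq_lt_four (by linarith [hself u hu i, sq (φ u i)])
  intro u hu v hv
  have hcard : ((supp (φ u) ∩ supp (φ v)).card : ℤ) =
      ∑ i, if φ u i ≠ 0 ∧ φ v i ≠ 0 then 1 else 0 := by
    rw [supp, supp, ← Finset.filter_and, Finset.card_filter]
    push_cast
    rfl
  rw [hcard]
  split_ifs with huv hadj
  · subst huv
    rw [← hφ.dotProduct_self]
    refine Finset.sum_congr rfl fun i _ => ?_
    rcases hval u hu i with h | h | h <;> simp [h]
  all_goals
    have hneg : (∑ i, if φ u i ≠ 0 ∧ φ v i ≠ 0 then (1 : ℤ) else 0) = -(φ u ⬝ᵥ φ v) := by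
      rw [dotProduct, ← Finset.sum_neg_distrib]
      refine Finset.sum_congr rfl fun i _ => ?_
      have := hmul u hu v hv huv i
      rcases hval u hu i with h | h | h <;> rcases hval v hv i with h' | h' | h' <;>
        simp [h, h'] at this ⊢
  · rw [hneg, hφ.dotProduct_of_adj hadj, neg_neg]
  · rw [hneg, hφ.dotProduct_of_not_adj huv hadj, neg_zero]

theorem IsCleanCut.isStandardOn (h : C.IsCleanCut φ O) (hlin : C.IsLinear)
    (hwc : C.WorkingConditions) (hφ : C.IsEmbedding N φ) : C.IsStandardOn N φ O := by
  obtain ⟨S, hS⟩ := h.exists_isCollarSystem hlin hφ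
  obtain ⟨S, rfl⟩ := hS.exists_admissibleSystem h hφ hwc
  have hvec (u : C.V) (hu : u ∈ O) : φ u = S.vec ⟨u, .inl hu⟩ := (hS.vec_of_mem ⟨u, _⟩ hu).symm
  refine hφ.isStandardOn_of_mul_nonpos (fun u hu i => ?_) fun u hu v hv hne i => ?_
  · rw [hvec u hu]
    exact S.vec_mul_self_le_one _ i
  · rw [hvec u hu, hvec v hv]
    exact S.vec_mul_vec_nonpos (fun heq => hne (congrArg Subtype.val heq)) i

end CleanCut

end Config

/-! ### The outside part -/

namespace Config

section OutsidePart

variable {C : Config} {m : ℕ} {v : ℕ → C.V}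

theorem IsChain.exists_pos_eq {pos : C.V → ℤ} (h : C.IsChain m v)
    (hpos : IsPathCoordinate C.graph pos) :
    ∃ s : ℤ, (s = 1 ∨ s = -1) ∧ ∀ i ≤ m, pos (v i) = pos (v 0) + s * i := by
  rcases Nat.eq_zero_or_pos m with rfl | hm
  · exact ⟨1, .inl rfl, fun i hi => by simp [Nat.le_zero.1 hi]⟩
  have hfirst := hpos.pos_of_adj (h.2 0 hm)
  rw [zero_add] at hfirst
  have hstep (i : ℕ) (hi : i < m) : pos (v (i + 1)) - pos (v i) = pos (v 1) - pos (v 0) := by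
    induction i with
    | zero => rfl
    | succ i ih =>
      have := ih (by omega)
      have := hpos.pos_of_adj (h.2 (i + 1) hi)
      have hne : pos (v (i + 1 + 1)) ≠ pos (v i) := fun heq => by
        have := h.1 _ (by omega) _ (by omega)
          (hpos.eq_of_pos_eq (h.2 (i + 1) hi) (h.2 i (by omega)).symm heq)
        omega
      omega
  refine ⟨pos (v 1) - pos (v 0), by omega, fun i hi => ?_⟩
  induction i with
  | zero => simp
  | succ i ih =>
    push_cast
    linarith [hstep i hi, ih (by omega)]

theorem IsChain.eq_succ_or_of_adj (h : C.IsChain m v) (hlin : C.IsLinear) {i j : ℕ}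
    (hi : i ≤ m) (hj : j ≤ m) (hadj : C.graph.Adj (v i) (v j)) : j = i + 1 ∨ i = j + 1 := by
  obtain ⟨pos, hpos⟩ := exists_isPathCoordinate hlin.2 hlin.1
  obtain ⟨s, hs, hv⟩ := h.exists_pos_eq hpos
  have := hpos.pos_of_adj hadj
  rw [hv i hi, hv j hj] at this
  rcases hs with rfl | rfl <;> omega

theorem IsChain.adj_pred (h : C.IsChain m v) {i : ℕ} (h0 : 0 < i) (hi : i ≤ m) :
    C.graph.Adj (v i) (v (i - 1)) := by
  have := (h.2 (i - 1) (by omega)).symm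
  rwa [Nat.sub_add_cancel h0] at this

theorem IsChain.eq_pred_or_eq_succ_of_adj (h : C.IsChain m v) (hlin : C.IsLinear) {i : ℕ}
    {y : C.V} (h0 : 0 < i) (hi : i < m) (hy : C.graph.Adj (v i) y) :
    y = v (i - 1) ∨ y = v (i + 1) := by
  refine or_iff_not_imp_left.2 fun hne => ?_
  refine eq_of_adj_of_neighborSet_ncard_le_two (hlin.1 _) (h.adj_pred h0 hi.le) hy (h.2 i hi) hne
    fun heq => ?_
  have := h.1 _ (by omega) _ (by omega) heq
  omega

theorem IsLeaf.eq_of_adj {x y z : C.V} (h : C.IsLeaf x) (hy : C.graph.Adj x y)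
    (hz : C.graph.Adj x z) : y = z :=
  (Set.ncard_le_one (Set.toFinite _)).1 h _ hy _ hz

theorem interior_of_flagged_of_mem_badPatterns :
    ∀ p ∈ badPatterns, ∀ i : Fin p.length, (p.get i).2 = true →
      0 < i.val ∧ i.val + 1 < p.length := by
  decide

theorem IsEBPCand.exists_interior_index_of_isBad (h : C.IsEBPCand m v) (hlin : C.IsLinear)
    (hwc : C.WorkingConditions) {x : C.V} (hx : C.IsBad x) : ∃ j, 0 < j ∧ j < m ∧ v j = x := by
  obtain ⟨p, hp, mb, vb, hvb⟩ := hwc.2.2.2.2.2.2.2 ⟨x, hx⟩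
  obtain ⟨i, hflag, rfl⟩ := (hvb.2.2.2 x).1 hx
  have hi := interior_of_flagged_of_mem_badPatterns p hp i hflag
  have hlen := hvb.2.1
  obtain ⟨j, hj, hvj⟩ := h.2.1 p hp mb vb hvb i (by omega)
  obtain ⟨k, hk, hvk⟩ := h.2.1 p hp mb vb hvb (i - 1) (by omega)
  obtain ⟨l, hl, hvl⟩ := h.2.1 p hp mb vb hvb (i + 1) (by omega)
  have hjk := h.1.eq_succ_or_of_adj hlin hj hk (by
    rw [hvj, hvk]; exact hvb.1.adj_pred hi.1 (by omega))
  have hjl := h.1.eq_succ_or_of_adj hlin hj hl (by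
    rw [hvj, hvl]; exact hvb.1.2 i (by omega))
  have hkl : k ≠ l := by
    rintro rfl
    have := hvb.1.1 _ (by omega) _ (by omega) (hvk.symm.trans hvl)
    omega
  exact ⟨j, by omega, by omega, hvj⟩

theorem IsChain.adjw_pos_of_isBad (h : C.IsChain m v) (hlin : C.IsLinear) {j : ℕ} (h0 : 0 < j)
    (hj : j < m) (hbad : C.IsBad (v j)) : 0 < C.adjw (v (j - 1)) ∧ 0 < C.adjw (v (j + 1)) := by
  obtain ⟨x, y, hne, hx, hy, hxpos, hypos⟩ := hbad
  rcases h.eq_pred_or_eq_succ_of_adj hlin h0 hj hx with rfl | rfl <;>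
    rcases h.eq_pred_or_eq_succ_of_adj hlin h0 hj hy with rfl | rfl
  · exact absurd rfl hne
  · exact ⟨hxpos, hypos⟩
  · exact ⟨hypos, hxpos⟩
  · exact absurd rfl hne

/-- The position `j` is an index of the chain `v 0, …, v m` at least four steps away from each end
that is not a leaf; bad vertices of the extended bad part are at such positions. -/
structure IsDeep (C : Config) (m : ℕ) (v : ℕ → C.V) (j : ℕ) : Prop where
  lt : j < m
  front : ¬ C.IsLeaf (v 0) → 4 ≤ j
  back : ¬ C.IsLeaf (v m) → j + 4 ≤ m

theorem IsEBPCand.exists_isDeep_of_isBad (h : C.IsEBPCand m v) (hlin : C.IsLinear)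
    (hwc : C.WorkingConditions) {x : C.V} (hx : C.IsBad x) : ∃ j, C.IsDeep m v j ∧ v j = x := by
  obtain ⟨j, h0, hj, rfl⟩ := h.exists_interior_index_of_isBad hlin hwc hx
  obtain ⟨hpred, hsucc⟩ := h.1.adjw_pos_of_isBad hlin h0 hj hx
  refine ⟨j, ⟨hj, fun hleaf => ?_, fun hleaf => ?_⟩, rfl⟩
  · obtain ⟨-, hone, htwo⟩ := h.2.2.1.resolve_left hleaf
    have : j + 1 ≠ 2 := fun heq => by rw [heq] at hsucc; omega
    have : j - 1 ≠ 1 := fun heq => by rw [heq] at hpred; omega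
    have : j - 1 ≠ 2 := fun heq => by rw [heq] at hpred; omega
    omega
  · obtain ⟨-, hone, htwo⟩ := h.2.2.2.resolve_left hleaf
    have : j - 1 ≠ m - 2 := fun heq => by rw [heq] at hpred; omega
    have : j + 1 ≠ m - 1 := fun heq => by rw [heq] at hsucc; omega
    have : j + 1 ≠ m - 2 := fun heq => by rw [heq] at hsucc; omega
    omega

theorem IsChain.mem_outsidePart_iff (h : C.IsChain m v) {i j : ℕ} (hdeep : C.IsDeep m v j)
    (hi : i ≤ m) : v i ∈ C.OutsidePart m v ↔
      (¬ C.IsLeaf (v 0) ∧ i ≤ 2) ∨ (¬ C.IsLeaf (v m) ∧ m ≤ i + 2) := by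
  have hjm := hdeep.lt
  constructor
  · rintro ((hx | ⟨hleaf, hx⟩) | ⟨hleaf, hx⟩)
    · exact absurd rfl (hx i hi)
    · have := hdeep.front hleaf
      refine .inl ⟨hleaf, ?_⟩
      rcases hx with hx | hx | hx <;> have := h.1 _ hi _ (by omega) hx <;> omega
    · have := hdeep.back hleaf
      refine .inr ⟨hleaf, ?_⟩
      rcases hx with hx | hx | hx <;> have := h.1 _ hi _ (by omega) hx <;> omega
  · rintro (⟨hleaf, hle⟩ | ⟨hleaf, hle⟩)
    · refine .inl (.inr ⟨hleaf, ?_⟩)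
      interval_cases i <;> simp
    · refine .inr ⟨hleaf, ?_⟩
      obtain rfl | rfl | rfl : i = m ∨ i = m - 1 ∨ i = m - 2 := by omega
      all_goals simp

theorem IsEBPCand.not_isBad_of_mem_outsidePart (h : C.IsEBPCand m v) (hlin : C.IsLinear)
    (hwc : C.WorkingConditions) {x : C.V} (hx : x ∈ C.OutsidePart m v) : ¬ C.IsBad x := by
  intro hbad
  obtain ⟨j, hdeep, rfl⟩ := h.exists_isDeep_of_isBad hlin hwc hbad
  rcases (h.1.mem_outsidePart_iff hdeep hdeep.lt.le).1 hx with ⟨hleaf, hle⟩ | ⟨hleaf, hle⟩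
  · have := hdeep.front hleaf
    omega
  · have := hdeep.back hleaf
    omega

theorem exists_index_of_notMem_outsidePart {y : C.V} (hy : y ∉ C.OutsidePart m v) :
    ∃ k ≤ m, v k = y := by
  by_contra! hne
  exact hy (.inl (.inl hne))

theorem IsChain.exists_index_of_adj_of_notMem_outsidePart (h : C.IsChain m v)
    (hlin : C.IsLinear) {j k : ℕ} (hdeep : C.IsDeep m v j) (hk : k ≤ m)
    (hout : v k ∉ C.OutsidePart m v) {x : C.V} (hx : C.graph.Adj (v k) x) :
    ∃ i ≤ m, v i = x := by
  have hjm := hdeep.lt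
  rw [h.mem_outsidePart_iff hdeep hk] at hout
  rcases Nat.eq_zero_or_pos k with rfl | h0
  · have hleaf : C.IsLeaf (v 0) := by
      by_contra hleaf
      exact hout (.inl ⟨hleaf, by omega⟩)
    exact ⟨1, by omega, hleaf.eq_of_adj (h.2 0 (by omega)) hx⟩
  rcases hk.eq_or_lt with rfl | hkm
  · have hleaf : C.IsLeaf (v k) := by
      by_contra hleaf
      exact hout (.inr ⟨hleaf, by omega⟩)
    exact ⟨k - 1, by omega, hleaf.eq_of_adj (h.adj_pred h0 le_rfl) hx⟩
  rcases h.eq_pred_or_eq_succ_of_adj hlin h0 hkm hx with rfl | rfl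
  · exact ⟨k - 1, by omega, rfl⟩
  · exact ⟨k + 1, hkm, rfl⟩

theorem IsChain.eq_of_adj_of_mem_outsidePart (h : C.IsChain m v) (hlin : C.IsLinear) {j : ℕ}
    (hdeep : C.IsDeep m v j) {x y : C.V} (hx : x ∈ C.OutsidePart m v)
    (hy : y ∉ C.OutsidePart m v) (hxy : C.graph.Adj x y) :
    (¬ C.IsLeaf (v 0) ∧ x = v 2 ∧ y = v 3) ∨
      (¬ C.IsLeaf (v m) ∧ x = v (m - 2) ∧ y = v (m - 3)) := by
  have := hdeep.lt
  obtain ⟨k, hk, rfl⟩ := exists_index_of_notMem_outsidePart hy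
  obtain ⟨i, hi, rfl⟩ := h.exists_index_of_adj_of_notMem_outsidePart hlin hdeep hk hy hxy.symm
  rw [h.mem_outsidePart_iff hdeep hi] at hx
  rw [h.mem_outsidePart_iff hdeep hk] at hy
  have hik := h.eq_succ_or_of_adj hlin hi hk hxy
  rcases hx with ⟨hleaf, hle⟩ | ⟨hleaf, hle⟩
  · have hk2 : ¬ k ≤ 2 := fun hk2 => hy (.inl ⟨hleaf, hk2⟩)
    obtain ⟨rfl, rfl⟩ : i = 2 ∧ k = 3 := by omega
    exact .inl ⟨hleaf, rfl, rfl⟩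
  · have hk2 : ¬ m ≤ k + 2 := fun hk2 => hy (.inr ⟨hleaf, hk2⟩)
    obtain ⟨rfl, rfl⟩ : i = m - 2 ∧ k = m - 3 := by omega
    exact .inr ⟨hleaf, rfl, rfl⟩

theorem IsEmbedding.exists_common_coordinate {N : ℕ} {φ : C.V → Fin N → ℤ}
    (hφ : C.IsEmbedding N φ) (hlin : C.IsLinear) {x y : C.V} (hxy : C.graph.Adj x y)
    (hx : C.adjw x = 0) : ∃ e, φ x e ≠ 0 ∧ φ y e ≠ 0 ∧ φ x e * φ x e = 1 := by
  obtain ⟨e, -, he⟩ : ∃ e ∈ Finset.univ, φ x e * φ y e ≠ 0 := by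
    apply Finset.exists_ne_zero_of_sum_ne_zero
    have := hφ.dotProduct_of_adj hxy
    rw [dotProduct] at this
    omega
  have hxe := left_ne_zero_of_mul he
  have hnorm : φ x e ^ 2 ≤ 2 := by
    have := sq_apply_le_dotProduct_self (φ x) e
    rw [hφ.dotProduct_self] at this
    have := hlin.1 x
    rw [adjw] at hx
    omega
  refine ⟨e, hxe, right_ne_zero_of_mul he, ?_⟩
  rcases eq_zero_or_one_or_neg_one_of_sq_lt_four (by linarith) with h | h | h
  · exact absurd h hxe
  all_goals simp [h]

section CutEdge

variable {j : ℕ} {x x' y : C.V}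

theorem IsEBPCand.adjw_eq_zero_of_cut_edge (h : C.IsEBPCand m v) (hlin : C.IsLinear)
    (hdeep : C.IsDeep m v j) (hx : x ∈ C.OutsidePart m v) (hy : y ∉ C.OutsidePart m v)
    (hxy : C.graph.Adj x y) : C.adjw x = 0 := by
  rcases h.1.eq_of_adj_of_mem_outsidePart hlin hdeep hx hy hxy with
    ⟨hleaf, rfl, -⟩ | ⟨hleaf, rfl, -⟩
  · exact (h.2.2.1.resolve_left hleaf).2.2
  · exact (h.2.2.2.resolve_left hleaf).2.2

theorem IsEBPCand.neighbor_of_cut_edge (h : C.IsEBPCand m v) (hlin : C.IsLinear)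
    (hdeep : C.IsDeep m v j) (hx : x ∈ C.OutsidePart m v) (hy : y ∉ C.OutsidePart m v)
    (hxy : C.graph.Adj x y) (hxx' : C.graph.Adj x x') (hne : x' ≠ y) :
    x' ∈ C.OutsidePart m v ∧ C.adjw x' = 0 := by
  have hjm := hdeep.lt
  rcases h.1.eq_of_adj_of_mem_outsidePart hlin hdeep hx hy hxy with
    ⟨hleaf, rfl, rfl⟩ | ⟨hleaf, rfl, rfl⟩
  · have := hdeep.front hleaf
    obtain rfl := (h.1.eq_pred_or_eq_succ_of_adj hlin two_pos (by omega) hxx').resolve_right hne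
    exact ⟨.inl (.inr ⟨hleaf, .inr (.inl rfl)⟩), (h.2.2.1.resolve_left hleaf).2.1⟩
  · have := hdeep.back hleaf
    have hx' := h.1.eq_pred_or_eq_succ_of_adj hlin (by omega) (by omega) hxx'
    rw [show m - 2 - 1 = m - 3 by omega, show m - 2 + 1 = m - 1 by omega] at hx'
    obtain rfl := hx'.resolve_left hne
    exact ⟨.inr ⟨hleaf, .inr (.inl rfl)⟩, (h.2.2.2.resolve_left hleaf).2.1⟩

theorem IsChain.eq_of_cut_edges (h : C.IsChain m v) (hlin : C.IsLinear)
    (hdeep : C.IsDeep m v j) (hx : x ∈ C.OutsidePart m v) (hy : y ∉ C.OutsidePart m v)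
    (hxy : C.graph.Adj x y) (hx' : x' ∈ C.OutsidePart m v)
    (hxy' : C.graph.Adj x' y) : x = x' := by
  have hdisjoint (hfront : ¬ C.IsLeaf (v 0)) (hback : ¬ C.IsLeaf (v m)) : v 3 ≠ v (m - 3) := by
    intro heq
    have := hdeep.front hfront
    have := hdeep.back hback
    have := h.1 _ (by omega) _ (by omega) heq
    omega
  rcases h.eq_of_adj_of_mem_outsidePart hlin hdeep hx hy hxy with
      ⟨hleaf, rfl, rfl⟩ | ⟨hleaf, rfl, rfl⟩ <;>
    rcases h.eq_of_adj_of_mem_outsidePart hlin hdeep hx' hy hxy' with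
      ⟨hleaf', rfl, heq⟩ | ⟨hleaf', rfl, heq⟩
  · rfl
  · exact absurd heq (hdisjoint hleaf hleaf')
  · exact absurd heq.symm (hdisjoint hleaf' hleaf)
  · rfl

end CutEdge

variable {N : ℕ} {φ : C.V → Fin N → ℤ}

theorem IsEBPCand.isCleanCut_outsidePart (h : C.IsEBPCand m v) (hlin : C.IsLinear)
    (hwc : C.WorkingConditions) (hφ : C.IsEmbedding N φ)
    (hclean : C.AllScrewsClean N φ m v) {j : ℕ} (hdeep : C.IsDeep m v j) :
    C.IsCleanCut φ (C.OutsidePart m v) where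
  not_bad _ := h.not_isBad_of_mem_outsidePart hlin hwc
  adjw_eq_zero _ _ := h.adjw_eq_zero_of_cut_edge hlin hdeep
  adjw_neighbor _ _ _ := h.neighbor_of_cut_edge hlin hdeep
  eq_of_adj _ _ _ hx hx' hy hxy hxy' := h.1.eq_of_cut_edges hlin hdeep hx hy hxy hx' hxy'
  exists_screw x y hx hy hxy := by
    obtain ⟨e, hxe, hye, hsq⟩ :=
      hφ.exists_common_coordinate hlin hxy (h.adjw_eq_zero_of_cut_edge hlin hdeep hx hy hxy)
    refine ⟨e, hsq, fun u hu hux => ?_⟩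
    have huy : u ≠ y := fun heq => hy (heq ▸ hu)
    have hjm := hdeep.lt
    rcases h.1.eq_of_adj_of_mem_outsidePart hlin hdeep hx hy hxy with
      ⟨hleaf, rfl, rfl⟩ | ⟨hleaf, rfl, rfl⟩
    · have := hdeep.front hleaf
      exact hclean.1 e ⟨hleaf, by omega, hxe, hye⟩ u hux huy
    · have := hdeep.back hleaf
      exact hclean.2 e ⟨hleaf, by omega, hxe, hye⟩ u hux huy

theorem isCleanCut_univ (hbad : ∀ x, ¬ C.IsBad x) (φ : C.V → Fin N → ℤ) :
    C.IsCleanCut φ Set.univ where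
  not_bad x _ := hbad x
  adjw_eq_zero _ _ _ hy := absurd trivial hy
  adjw_neighbor _ _ _ _ hy := absurd trivial hy
  eq_of_adj _ _ _ _ _ hy := absurd trivial hy
  exists_screw _ _ _ hy := absurd trivial hy

end OutsidePart

end Config

theorem statement2_general {C : Config} (hlin : C.IsLinear) (hwc : C.WorkingConditions) {N : ℕ}
    {φ : C.V → Fin N → ℤ} (hφ : C.IsEmbedding N φ) {m : ℕ} {vc : ℕ → C.V}
    (hcand : C.IsEBPCand m vc) (hclean : C.AllScrewsClean N φ m vc) :
    C.IsStandardOn N φ (C.OutsidePart m vc) := by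
  by_cases hbad : ∃ x, C.IsBad x
  · obtain ⟨x, hx⟩ := hbad
    obtain ⟨j, hdeep, -⟩ := hcand.exists_isDeep_of_isBad hlin hwc hx
    exact (hcand.isCleanCut_outsidePart hlin hwc hφ hclean hdeep).isStandardOn hlin hwc hφ
  · have hstd := (Config.isCleanCut_univ (not_exists.1 hbad) φ).isStandardOn hlin hwc hφ
    exact fun u _ v _ => hstd u trivial v trivial

/-- Lemma 4.8: if all screws are clean, then the outside part is embedded standardly. -/
theorem statement2 (C : Config) (hlin : C.IsLinear) (hwc : C.WorkingConditions)
    (hbad : ∃ x : C.V, C.IsBad x) (N : ℕ) (φ : C.V → Fin N → ℤ)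
    (hφ : C.IsEmbedding N φ) (m : ℕ) (vc : ℕ → C.V)
    (hebp : C.IsExtBadPart m vc) (hclean : C.AllScrewsClean N φ m vc) :
    C.IsStandardOn N φ (C.OutsidePart m vc) :=
  statement2_general hlin hwc hφ hebp.1 hclean

end LensPaper
end
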